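/- Let M be a compact connected boundaryless topological manifold of dimension n with a compatible metric and let f : M → M be an expansive homeomorphism such that the closure of Per_H equals M. Then either Per_H^{n−1} = Per_H or Per_H^{n−1} = ∅. Analogously, either Per_H^1 = Per_H or Per_H^1 = ∅. -/

import Mathlib

open Metric Set

variable {M : Type*} [MetricSpace M]

/-- Iterates of a homeomorphism, indexed by `ℤ`. -/
def iterZ (f : M ≃ₜ M) (k : ℤ) (x : M) : M := (f.toEquiv ^ k) x

/-- `f` is expansive with expansivity constant `α`. -/
def IsExpansive (f : M ≃ₜ M) (α : ℝ) : Prop :=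
  ∀ x y : M, x ≠ y → ∃ k : ℤ, α < dist (iterZ f k x) (iterZ f k y)

/-- Stable set of `x`. -/
def Ws (f : M ≃ₜ M) (x : M) : Set M :=
  {y | Filter.Tendsto (fun k : ℤ => dist (iterZ f k x) (iterZ f k y)) Filter.atTop (nhds 0)}

/-- Unstable set of `x`. -/
def Wu (f : M ≃ₜ M) (x : M) : Set M :=
  {y | Filter.Tendsto (fun k : ℤ => dist (iterZ f k x) (iterZ f k y)) Filter.atBot (nhds 0)}

/-- Local (`ε`-local) stable set of `x`. -/
def WsLoc (f : M ≃ₜ M) (ε : ℝ) (x : M) : Set M :=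
  {y | ∀ k : ℤ, 0 ≤ k → dist (iterZ f k x) (iterZ f k y) ≤ ε}

/-- Local (`ε`-local) unstable set of `x`. -/
def WuLoc (f : M ≃ₜ M) (ε : ℝ) (x : M) : Set M :=
  {y | ∀ k : ℤ, k ≤ 0 → dist (iterZ f k x) (iterZ f k y) ≤ ε}

/-- The model space `ℝ^r × ℝ^{n-r}`. -/
abbrev ModelSp (n r : ℕ) := (Fin r → ℝ) × (Fin (n - r) → ℝ)

/-- The model hyperbolic linear map `L(a,b) = (a/2, 2b)`. -/
noncomputable def modelL (n r : ℕ) : ModelSp n r → ModelSp n r :=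
  fun q => (fun i => q.1 i / 2, fun i => 2 * q.2 i)

/-- Topologically hyperbolic periodic points of index `r` (`Per_H^r`). -/
def PerHr (f : M ≃ₜ M) (n r : ℕ) : Set M :=
  {p | ∃ l : ℕ, 1 ≤ l ∧ (f.toEquiv ^ l) p = p ∧
    ∃ (U : Set M) (V : Set (ModelSp n r)) (h : U ≃ₜ V),
      IsOpen U ∧ IsOpen V ∧ (0 : ModelSp n r) ∈ V ∧
      ∃ hp : p ∈ U, ((h ⟨p, hp⟩ : V) : ModelSp n r) = 0 ∧
        ∀ z : M, ∀ hz : z ∈ U, ∀ hz' : (f.toEquiv ^ l) z ∈ U,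
          ((h ⟨(f.toEquiv ^ l) z, hz'⟩ : V) : ModelSp n r) = modelL n r (h ⟨z, hz⟩)}

/-- All topologically hyperbolic periodic points (`Per_H`). -/
def PerH (f : M ≃ₜ M) (n : ℕ) : Set M := ⋃ r ∈ Finset.range (n + 1), PerHr f n r

/-- `p` admits a local product structure. -/
def AdmitsLPS (f : M ≃ₜ M) (n : ℕ) (p : M) : Prop :=
  ∃ (k : ℕ) (h : (Fin k → ℝ) × (Fin (n - k) → ℝ) → M) (ε : ℝ),
    0 < ε ∧ Topology.IsEmbedding h ∧ p ∈ Set.range h ∧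
    ∀ x : Fin k → ℝ, ∀ y : Fin (n - k) → ℝ,
      h '' ({x} ×ˢ univ) = WsLoc f ε (h (x, y)) ∩ Set.range h ∧
      h '' (univ ×ˢ {y}) = WuLoc f ε (h (x, y)) ∩ Set.range h

namespace HypAux
open MeasureTheory Set Metric Topology Filter

theorem det_id_add_pos {d : ℕ} (A : (Fin d → ℝ) →L[ℝ] (Fin d → ℝ)) (hA : ‖A‖ < 1) :
    0 < (ContinuousLinearMap.id ℝ (Fin d → ℝ) + A).det := by
  have hne : ∀ t ∈ Icc (0:ℝ) 1, (ContinuousLinearMap.id ℝ (Fin d → ℝ) + t • A).det ≠ 0 := by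
    intro t ht h0
    have h1 : LinearMap.det ((ContinuousLinearMap.id ℝ (Fin d → ℝ) + t • A : (Fin d → ℝ) →L[ℝ] (Fin d → ℝ)) : (Fin d → ℝ) →ₗ[ℝ] (Fin d → ℝ)) = 0 := h0
    have h2 := LinearMap.bot_lt_ker_of_det_eq_zero h1
    obtain ⟨v, hv, hv0⟩ := SetLike.exists_of_lt h2
    simp only [Submodule.mem_bot] at hv0
    have hv1 : v + t • A v = 0 := by simpa using hv
    have h3 : ‖v‖ = ‖t • A v‖ := by
      conv_lhs => rw [eq_neg_of_add_eq_zero_left hv1, norm_neg]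
    have h4 : ‖t • A v‖ ≤ 1 * (‖A‖ * ‖v‖) := by
      rw [norm_smul, Real.norm_eq_abs, abs_of_nonneg ht.1]
      exact mul_le_mul ht.2 (A.le_opNorm v) (norm_nonneg _) zero_le_one
    have h5 : 0 < ‖v‖ := norm_pos_iff.2 hv0
    nlinarith
  have hc : Continuous fun t : ℝ => (ContinuousLinearMap.id ℝ (Fin d → ℝ) + t • A).det :=
    ContinuousLinearMap.continuous_det.comp (by fun_prop)
  by_contra hcon
  have hI : (0:ℝ) ∈ (fun t : ℝ => (ContinuousLinearMap.id ℝ (Fin d → ℝ) + t • A).det) '' Icc 0 1 := by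
    apply intermediate_value_Icc' zero_le_one hc.continuousOn
    constructor
    · simpa using hcon
    · simp [ContinuousLinearMap.det]
  obtain ⟨t, ht, h⟩ := hI
  exact hne t ht h

theorem integral_det_small {d : ℕ} {Ψ : (Fin d → ℝ) → (Fin d → ℝ)} (hΨ : ContDiff ℝ 1 Ψ)
    {c : NNReal} (hc : c < 1) (hL : LipschitzWith c Ψ) {R : ℝ} 
    (h0 : ∀ x, x ∉ closedBall (0 : Fin d → ℝ) R → Ψ x = 0) :
    ∫ x in closedBall (0 : Fin d → ℝ) R, (ContinuousLinearMap.id ℝ (Fin d → ℝ) + fderiv ℝ Ψ x).det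
      = (volume (closedBall (0 : Fin d → ℝ) R)).toReal := by
  set K := closedBall (0 : Fin d → ℝ) R
  set T : (Fin d → ℝ) → (Fin d → ℝ) := fun x => x + Ψ x with hT
  have happ : ApproximatesLinearOn T ((ContinuousLinearEquiv.refl ℝ (Fin d → ℝ) : (Fin d → ℝ) →L[ℝ] (Fin d → ℝ))) univ c := by
    rw [ApproximatesLinearOn.approximatesLinearOn_iff_lipschitzOnWith, lipschitzOnWith_univ]
    have h1 : T - ⇑((ContinuousLinearEquiv.refl ℝ (Fin d → ℝ) : (Fin d → ℝ) →L[ℝ] (Fin d → ℝ))) = Ψ := by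
      funext x
      simp [hT]
    rw [h1]
    exact hL
  have hcN : Subsingleton (Fin d → ℝ) ∨ c < (‖((ContinuousLinearEquiv.refl ℝ (Fin d → ℝ)).symm : (Fin d → ℝ) →L[ℝ] (Fin d → ℝ))‖₊)⁻¹ := by
    rcases subsingleton_or_nontrivial (Fin d → ℝ) with h | h
    · exact Or.inl h
    · right
      simpa using hc
  have hinj : Function.Injective T := by
    have := happ.injOn hcN
    exact injOn_univ.1 this
  have hsurj : Function.Surjective T := happ.surjective hcN
  have himg : T '' K = K := by
    apply Subset.antisymm
    · rintro _ ⟨x, hx, rfl⟩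
      by_contra hy
      have h1 : T (T x) = T x := by
        show T x + Ψ (T x) = T x
        rw [h0 _ hy, add_zero]
      rw [hinj h1] at hy
      exact hy hx
    · intro y hy
      obtain ⟨x, rfl⟩ := hsurj y
      refine ⟨x, ?_, rfl⟩
      by_contra hx
      apply hx
      have : T x = x := by 
        show x + Ψ x = x
        rw [h0 _ hx, add_zero]
      rwa [this] at hy
  have hderiv : ∀ x ∈ K, HasFDerivWithinAt T (ContinuousLinearMap.id ℝ (Fin d → ℝ) + fderiv ℝ Ψ x) K x := by
    intro x _
    exact ((hasFDerivAt_id x).add ((hΨ.differentiable one_ne_zero).differentiableAt.hasFDerivAt)).hasFDerivWithinAt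
  have key := integral_image_eq_integral_abs_det_fderiv_smul volume (measurableSet_closedBall : MeasurableSet K) hderiv hinj.injOn (fun _ => (1:ℝ))
  rw [himg] at key
  simp only [integral_const, smul_eq_mul, mul_one] at key
  rw [Measure.real_def, Measure.restrict_apply_univ] at key
  rw [key]
  apply integral_congr_ae
  filter_upwards with x
  rw [abs_of_pos]
  apply det_id_add_pos
  refine lt_of_le_of_lt (norm_fderiv_le_of_lipschitz ℝ hL) ?_
  exact_mod_cast hc

/-- A linear functional computing the value at zero of a polynomial of degree at most `d`. -/
theorem exists_weights (d : ℕ) (s : Fin (d+1) → ℝ) (hs : Function.Injective s) :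
    ∃ w : Fin (d+1) → ℝ, ∀ p : Polynomial ℝ, p.degree < (d + 1 : ℕ) → p.eval 0 = ∑ i, w i * p.eval (s i) := by
  refine ⟨fun i => (Lagrange.basis Finset.univ s i).eval 0, fun p hp => ?_⟩
  have h := Lagrange.eq_interpolate (s := Finset.univ) (v := s) (f := p) hs.injOn (by simpa using hp)
  conv_lhs => rw [h]
  simp [Lagrange.interpolate_apply, Polynomial.eval_finsetSum, mul_comm]

theorem integral_det_eq_zero {d : ℕ} (hd : 0 < d) {Ψ : (Fin d → ℝ) → (Fin d → ℝ)}
    (hΨ : ContDiff ℝ 1 Ψ) (hsupp : HasCompactSupport Ψ) :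
    ∫ x, (fderiv ℝ Ψ x).det = 0 := by
  obtain ⟨C, hC⟩ := hΨ.lipschitzWith_of_hasCompactSupport hsupp one_ne_zero
  obtain ⟨R, hR⟩ := hsupp.isCompact.isBounded.subset_closedBall (0 : Fin d → ℝ)
  have h0 : ∀ x, x ∉ closedBall (0 : Fin d → ℝ) R → Ψ x = 0 := fun x hx =>
    image_eq_zero_of_notMem_tsupport fun h => hx (hR h)
  set K := closedBall (0 : Fin d → ℝ) R
  set s : Fin (d+1) → ℝ := fun i => C + 1 + i with hs
  have hspos : ∀ i, 0 < s i := fun i => by positivity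
  have hsinj : Function.Injective s := by
    intro i j h
    have : (i:ℝ) = j := by simpa [hs] using h
    exact Fin.ext (by exact_mod_cast this)
  have hscale : ∀ i, ∫ x in K, (s i • ContinuousLinearMap.id ℝ (Fin d → ℝ) + fderiv ℝ Ψ x).det = (s i)^d * (volume K).toReal := by
    intro i
    have hi := hspos i
    have hL : LipschitzWith (Real.toNNReal ((s i)⁻¹) * C) (fun x => (s i)⁻¹ • Ψ x) := by
      have h1 : LipschitzWith (‖(s i)⁻¹‖₊) (fun x : Fin d → ℝ => (s i)⁻¹ • x) := lipschitzWith_smul _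
      have h2 := h1.comp hC
      have h3 : ‖(s i)⁻¹‖₊ = Real.toNNReal ((s i)⁻¹) := by
        ext; simp [abs_of_pos hi, hi.le]
      rw [h3] at h2
      exact h2
    have hlt : Real.toNNReal ((s i)⁻¹) * C < 1 := by
      rw [← NNReal.coe_lt_coe]
      push_cast
      rw [Real.coe_toNNReal _ (by positivity), inv_mul_lt_iff₀ hi, mul_one]
      have : (0:ℝ) ≤ i := by positivity
      simp only [hs]; linarith
    have h := integral_det_small (Ψ := fun x => (s i)⁻¹ • Ψ x) (hΨ.const_smul _) hlt hL (R := R)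
      (fun x hx => by simp [h0 x hx])
    rw [← h, ← integral_const_mul]
    apply integral_congr_ae
    filter_upwards with x
    have h4 : fderiv ℝ (fun x => (s i)⁻¹ • Ψ x) x = (s i)⁻¹ • fderiv ℝ Ψ x :=
      fderiv_fun_const_smul ((hΨ.differentiable one_ne_zero).differentiableAt) _
    rw [h4]
    have h5 : s i • ContinuousLinearMap.id ℝ (Fin d → ℝ) + fderiv ℝ Ψ x
        = s i • (ContinuousLinearMap.id ℝ (Fin d → ℝ) + (s i)⁻¹ • fderiv ℝ Ψ x) := by
      rw [smul_add, smul_smul, mul_inv_cancel₀ hi.ne', one_smul]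
    rw [h5]
    have h6 : ∀ B : (Fin d → ℝ) →L[ℝ] (Fin d → ℝ), (s i • B).det = s i ^ d * B.det := by
      intro B
      have := LinearMap.det_smul (s i) (B : (Fin d → ℝ) →ₗ[ℝ] (Fin d → ℝ))
      simpa [ContinuousLinearMap.det] using this
    exact h6 _
  obtain ⟨w, hw⟩ := exists_weights d s hsinj
  have hdet : ∀ A : (Fin d → ℝ) →L[ℝ] (Fin d → ℝ), A.det = ∑ i, w i * (s i • ContinuousLinearMap.id ℝ (Fin d → ℝ) + A).det := by
    intro A
    have h1 : ∀ t : ℝ, (t • ContinuousLinearMap.id ℝ (Fin d → ℝ) + A).det = (LinearMap.charpoly (-(A : (Fin d → ℝ) →ₗ[ℝ] (Fin d → ℝ)))).eval t := by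
      intro t
      rw [LinearMap.eval_charpoly, ContinuousLinearMap.det]
      congr 1
      ext x
      simp [Algebra.algebraMap_eq_smul_one]
    have h2 := hw (LinearMap.charpoly (-(A : (Fin d → ℝ) →ₗ[ℝ] (Fin d → ℝ)))) (by
      rw [Polynomial.degree_eq_natDegree (LinearMap.charpoly_monic _).ne_zero, LinearMap.charpoly_natDegree]
      simpa using (by exact_mod_cast Nat.lt_succ_self d : ((d:ℕ) : WithBot ℕ) < ((d+1:ℕ) : WithBot ℕ)))
    rw [← h1 0] at h2
    simp only [← h1] at h2
    simpa using h2
  have hzero : ∑ i, w i * (s i)^d = 0 := by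
    have h2 := hw (Polynomial.X ^ d) (by
      rw [Polynomial.degree_X_pow]; exact_mod_cast Nat.lt_succ_self d)
    simp only [Polynomial.eval_pow, Polynomial.eval_X] at h2
    rw [← h2, zero_pow hd.ne']
  have hcont : Continuous (fun x => fderiv ℝ Ψ x) := hΨ.continuous_fderiv one_ne_zero
  have hres : ∫ x, (fderiv ℝ Ψ x).det = ∫ x in K, (fderiv ℝ Ψ x).det := by
    symm
    apply setIntegral_eq_integral_of_forall_compl_eq_zero
    intro x hx
    have : fderiv ℝ Ψ x = 0 := by
      apply image_eq_zero_of_notMem_tsupport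
      intro h
      exact hx (hR (tsupport_fderiv_subset ℝ h))
    rw [this]
    have : Nonempty (Fin d) := ⟨⟨0, hd⟩⟩
    simp [ContinuousLinearMap.det]
  rw [hres]
  simp_rw [hdet (fderiv ℝ Ψ _)]
  rw [integral_finsetSum]
  · simp_rw [integral_const_mul, hscale, ← mul_assoc]
    rw [← Finset.sum_mul, hzero, zero_mul]
  · intro i _
    refine ContinuousOn.integrableOn_compact (isCompact_closedBall _ _) (Continuous.continuousOn ?_)
    exact continuous_const.mul (ContinuousLinearMap.continuous_det.comp (by fun_prop))

end HypAux

namespace HypAux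
open MeasureTheory Set Metric Topology Filter

theorem integral_det_sub {d : ℕ} (hd : 0 < d) {Φ Ψ : (Fin d → ℝ) → (Fin d → ℝ)}
    (hΦ : ContDiff ℝ 1 Φ) (hΨ : ContDiff ℝ 1 Ψ) {K : Set (Fin d → ℝ)} (hK : IsCompact K)
    (h : ∀ x, x ∉ K → Φ x = Ψ x) :
    ∫ x, ((fderiv ℝ Φ x).det - (fderiv ℝ Ψ x).det) = 0 := by
  obtain ⟨R, hR⟩ := hK.isBounded.subset_closedBall (0 : Fin d → ℝ)
  let χ : ContDiffBump (0 : Fin d → ℝ) := ⟨|R| + 1, |R| + 2, by positivity, by linarith⟩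
  have hχ1 : ∀ x ∈ K, (χ : (Fin d → ℝ) → ℝ) =ᶠ[𝓝 x] fun _ => 1 := by
    intro x hx
    apply χ.eventuallyEq_one_of_mem_ball
    have h1 := hR hx
    rw [mem_closedBall] at h1
    rw [mem_ball]
    have := le_abs_self R
    show _ < |R| + 1
    linarith
  have hd1 : ∀ Φ : (Fin d → ℝ) → (Fin d → ℝ), ContDiff ℝ 1 Φ → 
      ∫ x, (fderiv ℝ (fun x => χ x • Φ x) x).det = 0 := by
    intro Φ hΦ
    exact integral_det_eq_zero hd (χ.contDiff.smul hΦ) (χ.hasCompactSupport.smul_right)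
  have hInterior : ∀ Φ : (Fin d → ℝ) → (Fin d → ℝ), ContDiff ℝ 1 Φ → 
      Integrable (fun x => (fderiv ℝ (fun x => χ x • Φ x) x).det) := by
    intro Φ hΦ
    have hs : ContDiff ℝ 1 (fun x => χ x • Φ x) := χ.contDiff.smul hΦ
    have hcs : HasCompactSupport (fun x => χ x • Φ x) := χ.hasCompactSupport.smul_right
    apply Continuous.integrable_of_hasCompactSupport
    · exact ContinuousLinearMap.continuous_det.comp (hs.continuous_fderiv one_ne_zero)
    · refine (hcs.fderiv ℝ).comp_left (g := fun A : (Fin d → ℝ) →L[ℝ] (Fin d → ℝ) => A.det) ?_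
      have : Nonempty (Fin d) := ⟨⟨0, hd⟩⟩
      simp [ContinuousLinearMap.det]
  have h2 : ∫ x, ((fderiv ℝ (fun x => χ x • Φ x) x).det - (fderiv ℝ (fun x => χ x • Ψ x) x).det) = 0 := by
    rw [integral_sub (hInterior Φ hΦ) (hInterior Ψ hΨ), hd1 Φ hΦ, hd1 Ψ hΨ, sub_zero]
  rw [← h2]
  congr 1
  funext x
  by_cases hx : x ∈ K
  · have h3 : ∀ Φ : (Fin d → ℝ) → (Fin d → ℝ), fderiv ℝ (fun x => χ x • Φ x) x = fderiv ℝ Φ x := by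
      intro Φ
      apply Filter.EventuallyEq.fderiv_eq
      filter_upwards [hχ1 x hx] with y hy
      simp [hy]
    rw [h3, h3]
  · have h4 : Φ =ᶠ[𝓝 x] Ψ := by
      filter_upwards [hK.isClosed.isOpen_compl.mem_nhds hx] with y hy
      exact h y hy
    have h5 : (fun x => χ x • Φ x) =ᶠ[𝓝 x] (fun x => χ x • Ψ x) := by
      filter_upwards [h4] with y hy
      simp [hy]
    rw [h4.fderiv_eq, h5.fderiv_eq, sub_self, sub_self]

/-- A smooth squashing map. -/
theorem exists_theta (d : ℕ) {ε : ℝ} (hε : 0 < ε) :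
    ∃ Θ : (Fin d → ℝ) → (Fin d → ℝ), ContDiff ℝ 1 Θ ∧ 
      (∀ y, ε ≤ ‖y‖ → (fderiv ℝ Θ y).det = 0) ∧ ∫ y, (fderiv ℝ Θ y).det = 1 := by
  let g : ℝ → ℝ := fun t => Real.smoothTransition (t / ε + 1 / 2)
  have hg : ContDiff ℝ 1 g := Real.smoothTransition.contDiff.comp (by fun_prop)
  have hg0 : ∀ t, t ≤ -(ε/2) → g t = 0 := by
    intro t ht
    apply Real.smoothTransition.zero_of_nonpos
    have : t / ε ≤ -(1/2) := by rw [div_le_iff₀ hε]; linarith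
    linarith
  have hg1 : ∀ t, ε/2 ≤ t → g t = 1 := by
    intro t ht
    apply Real.smoothTransition.one_of_one_le
    have : (1/2) ≤ t / ε := by rw [le_div_iff₀ hε]; linarith
    linarith
  have hgd : ∀ t, ε ≤ |t| → deriv g t = 0 := by
    intro t ht
    rcases le_abs.1 ht with h | h
    · have : g =ᶠ[𝓝 t] fun _ => 1 := by
        filter_upwards [lt_mem_nhds (show ε/2 < t by linarith)] with y hy
        exact hg1 y hy.le
      rw [this.deriv_eq]; simp
    · have : g =ᶠ[𝓝 t] fun _ => 0 := by
        filter_upwards [gt_mem_nhds (show t < -(ε/2) by linarith)] with y hy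
        exact hg0 y hy.le
      rw [this.deriv_eq]; simp
  have hdc : Continuous (deriv g) := hg.continuous_deriv le_rfl
  have hcs : HasCompactSupport (deriv g) := by
    apply HasCompactSupport.intro (isCompact_Icc (a := -ε) (b := ε))
    intro t ht
    apply hgd
    by_contra hcon
    exact ht (abs_le.1 (not_le.1 hcon).le)
  have hInterior : Integrable (deriv g) := hdc.integrable_of_hasCompactSupport hcs
  have hI : ∫ t, deriv g t = 1 := by
    have h1 := integral_of_hasDerivAt_of_tendsto (f := g) (f' := deriv g) (m := 0) (n := 1)
      (fun t => (hg.differentiable one_ne_zero).differentiableAt.hasDerivAt) hInterior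
      (by
        apply tendsto_const_nhds.congr'
        filter_upwards [eventually_le_atBot (-(ε/2))] with t ht
        exact (hg0 t ht).symm)
      (by
        apply tendsto_const_nhds.congr'
        filter_upwards [eventually_ge_atTop (ε/2)] with t ht
        exact (hg1 t ht).symm)
    simpa using h1
  have hΘd : ∀ y : Fin d → ℝ, HasFDerivAt (fun y : Fin d → ℝ => fun i => g (y i))
      (ContinuousLinearMap.pi fun i => (deriv g (y i)) • ContinuousLinearMap.proj (R := ℝ) (φ := fun _ : Fin d => ℝ) i) y := by
    intro y
    rw [hasFDerivAt_pi]
    intro i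
    have h1 : HasDerivAt g (deriv g (y i)) (y i) := (hg.differentiable one_ne_zero).differentiableAt.hasDerivAt
    exact h1.comp_hasFDerivAt (f := fun f : Fin d → ℝ => f i) y (hasFDerivAt_apply i y)
  have hdet : ∀ y : Fin d → ℝ, (fderiv ℝ (fun y : Fin d → ℝ => fun i => g (y i)) y).det = ∏ i, deriv g (y i) := by
    intro y
    rw [(hΘd y).fderiv, ContinuousLinearMap.det]
    have : ((ContinuousLinearMap.pi fun i => (deriv g (y i)) • ContinuousLinearMap.proj (R := ℝ) (φ := fun _ : Fin d => ℝ) i : (Fin d → ℝ) →L[ℝ] (Fin d → ℝ)) : (Fin d → ℝ) →ₗ[ℝ] (Fin d → ℝ)) = Matrix.toLin' (Matrix.diagonal fun i => deriv g (y i)) := by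
      apply LinearMap.ext
      intro x
      funext i
      simp [Matrix.mulVec_diagonal]
    rw [this, LinearMap.det_toLin', Matrix.det_diagonal]
  refine ⟨fun y => fun i => g (y i), ?_, ?_, ?_⟩
  · rw [contDiff_pi]
    intro i
    exact hg.comp (contDiff_apply ℝ ℝ i)
  · intro y hy
    rw [hdet]
    have : ∃ i, ε ≤ |y i| := by
      by_contra hcon
      push Not at hcon
      exact absurd ((pi_norm_lt_iff hε).2 hcon) (not_lt.2 hy)
    obtain ⟨i, hi⟩ := this
    exact Finset.prod_eq_zero (Finset.mem_univ i) (hgd _ hi)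
  · simp_rw [hdet]
    rw [integral_fintype_prod_volume_eq_prod (fun (_ : Fin d) t => deriv g t)]
    simp [hI]

/-- Core degree statement. -/
theorem deg_core {d : ℕ} (hd : 0 < d) {F G : (Fin d → ℝ) → (Fin d → ℝ)}
    (hF : Continuous F) (hG : Continuous G) {Ω : Set (Fin d → ℝ)} (hΩ : IsOpen Ω)
    (hb : Bornology.IsBounded Ω) (h0 : (0 : Fin d → ℝ) ∈ Ω)
    (hFG : ∀ x, x ∉ Ω → F x = G x) (hG0 : ∀ x ∈ closure Ω, G x ≠ 0)
    (hF0 : ∀ x ∈ closure Ω, x ≠ 0 → F x ≠ 0) (hid : ∀ᶠ x in 𝓝 0, F x = x) : False := by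
  have hKc : IsCompact (closure Ω) := hb.isCompact_closure
  -- radius on which F is the identity
  obtain ⟨ρ, hρ, hρid⟩ : ∃ ρ > 0, ∀ x, ‖x‖ ≤ 2 * ρ → F x = x ∧ x ∈ Ω := by
    obtain ⟨r, hr, h⟩ := Metric.eventually_nhds_iff.1 (hid.and (hΩ.mem_nhds h0))
    refine ⟨r/3, by positivity, fun x hx => h ?_⟩
    rw [dist_zero_right]; linarith
  -- lower bound for both
  obtain ⟨c, hc, hcG, hcF⟩ : ∃ c > 0, (∀ x ∈ closure Ω, 4 * c ≤ ‖G x‖) ∧ 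
      (∀ x ∈ closure Ω, ρ ≤ ‖x‖ → 4 * c ≤ ‖F x‖) := by
    obtain ⟨c1, hc1, h1⟩ : ∃ c1 > 0, ∀ x ∈ closure Ω, c1 ≤ ‖G x‖ := by
      obtain ⟨x, hx, hmin⟩ := hKc.exists_isMinOn ⟨0, subset_closure h0⟩ (hG.norm.continuousOn)
      exact ⟨‖G x‖, norm_pos_iff.2 (hG0 x hx), fun y hy => hmin hy⟩
    obtain ⟨c2, hc2, h2⟩ : ∃ c2 > 0, ∀ x ∈ closure Ω, ρ ≤ ‖x‖ → c2 ≤ ‖F x‖ := by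
      have hc' : IsCompact (closure Ω ∩ {x | ρ ≤ ‖x‖}) := 
        hKc.inter_right (isClosed_le continuous_const continuous_norm)
      rcases (closure Ω ∩ {x | ρ ≤ ‖x‖}).eq_empty_or_nonempty with he | hne
      · refine ⟨1, one_pos, fun x hx hx' => ?_⟩
        have : x ∈ closure Ω ∩ {x | ρ ≤ ‖x‖} := ⟨hx, hx'⟩
        rw [he] at this
        exact this.elim
      · obtain ⟨x, hx, hmin⟩ := hc'.exists_isMinOn hne (hF.norm.continuousOn)
        refine ⟨‖F x‖, norm_pos_iff.2 (hF0 x hx.1 ?_), fun y hy hy' => hmin ⟨hy, hy'⟩⟩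
        intro h
        have := hx.2
        simp [h] at this
        linarith
    refine ⟨min c1 c2 / 4, by positivity, fun x hx => ?_, fun x hx hx' => ?_⟩
    · linarith [h1 x hx, min_le_left c1 c2]
    · linarith [h2 x hx hx', min_le_right c1 c2]
  -- neighbourhood
  obtain ⟨C, hC⟩ := hKc.isBounded.subset_ball (0 : Fin d → ℝ)
  let N : Set (Fin d → ℝ) := {x | 3 * c < ‖G x‖ ∧ (3 * c < ‖F x‖ ∨ ‖x‖ < 2 * ρ)} ∩ ball 0 C
  have hNo : IsOpen N := by
    refine IsOpen.inter (IsOpen.inter ?_ ?_) isOpen_ball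
    · exact isOpen_lt continuous_const hG.norm
    · exact (isOpen_lt continuous_const hF.norm).union (isOpen_lt continuous_norm continuous_const)
  have hΩN : closure Ω ⊆ N := by
    intro x hx
    refine ⟨⟨by linarith [hcG x hx], ?_⟩, hC hx⟩
    rcases le_or_gt ρ ‖x‖ with h | h
    · left; linarith [hcF x hx h]
    · right; linarith
  -- smooth approximation of F
  obtain ⟨Fs, hFs, hFsd, hFseq, -⟩ := hF.exists_contDiff_approx_and_eqOn 1 (ε := fun _ => c)
    continuous_const (fun _ => hc) (S := closedBall 0 ρ) (U := ball 0 (2 * ρ)) isClosed_closedBall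
    (isOpen_ball.mem_nhdsSet.2 (closedBall_subset_ball (by linarith)))
    (contDiffOn_id.congr (fun x hx => (hρid x (by simpa using (mem_ball_zero_iff.1 hx).le)).1))
  have hG' : Continuous (fun x => Fs x + (G x - F x)) := hFs.continuous.add (hG.sub hF)
  obtain ⟨Gs, hGs, hGsd, hGseq, -⟩ := hG'.exists_contDiff_approx_and_eqOn 1 (ε := fun _ => c)
    continuous_const (fun _ => hc) (S := Nᶜ) (U := (closure Ω)ᶜ) hNo.isClosed_compl
    (isClosed_closure.isOpen_compl.mem_nhdsSet.2 (compl_subset_compl.2 hΩN))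
    (hFs.contDiffOn.congr (fun x hx => by
      rw [hFG x (fun h => hx (subset_closure h))]; simp))
  have hNcl : closure N ⊆ {x | 3 * c ≤ ‖G x‖ ∧ (3 * c ≤ ‖F x‖ ∨ ‖x‖ ≤ 2 * ρ)} := by
    apply closure_minimal
    · exact fun x hx => ⟨hx.1.1.le, hx.1.2.imp le_of_lt le_of_lt⟩
    · apply IsClosed.inter
      · exact isClosed_le continuous_const hG.norm
      · exact (isClosed_le continuous_const hF.norm).union (isClosed_le continuous_norm continuous_const)
  have hNb : IsCompact (closure N) := (isBounded_ball.subset inter_subset_right).isCompact_closure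
  obtain ⟨Θ, hΘ, hΘ0, hΘI⟩ := exists_theta d (lt_min hc hρ)
  have hFsne : ∀ x ∈ closure N, ρ ≤ ‖x‖ → c ≤ ‖Fs x‖ := by
    intro x hx hxρ
    have h1 : 3 * c ≤ ‖F x‖ := by
      rcases (hNcl hx).2 with h | h
      · exact h
      · linarith [hcF x (subset_closure (hρid x h).2) hxρ]
    have h2 := hFsd x
    rw [dist_eq_norm] at h2
    have h3 := norm_sub_norm_le (F x) (F x - Fs x)
    rw [sub_sub_cancel, norm_sub_rev (F x)] at h3
    linarith
  have hGsne : ∀ x ∈ closure N, c ≤ ‖Gs x‖ := by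
    intro x hx
    have h1 := (hNcl hx).1
    have h2 := hFsd x
    have h2' := hGsd x
    rw [dist_eq_norm] at h2 h2'
    have h3 : G x = Gs x - ((Gs x - (Fs x + (G x - F x))) + (Fs x - F x)) := by abel
    have h4 : ‖G x‖ ≤ ‖Gs x‖ + (‖Gs x - (Fs x + (G x - F x))‖ + ‖Fs x - F x‖) := by
      conv_lhs => rw [h3]
      exact (norm_sub_le _ _).trans (add_le_add_right (norm_add_le _ _) _)
    linarith
  have hchain : ∀ H : (Fin d → ℝ) → (Fin d → ℝ), ContDiff ℝ 1 H → ∀ x, c ≤ ‖H x‖ → 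
      (fderiv ℝ (Θ ∘ H) x).det = 0 := by
    intro H hH x hx
    rw [fderiv_comp x (hΘ.differentiable one_ne_zero).differentiableAt (hH.differentiable one_ne_zero).differentiableAt]
    have h1 := hΘ0 (H x) ((min_le_left _ _).trans hx)
    have h2 : ((fderiv ℝ Θ (H x)).comp (fderiv ℝ H x)).det = (fderiv ℝ Θ (H x)).det * (fderiv ℝ H x).det := by
      have := LinearMap.det_comp ((fderiv ℝ Θ (H x)) : (Fin d → ℝ) →ₗ[ℝ] (Fin d → ℝ)) ((fderiv ℝ H x) : (Fin d → ℝ) →ₗ[ℝ] (Fin d → ℝ))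
      exact this
    rw [h2, h1, zero_mul]
  have key := integral_det_sub hd (hΘ.comp hFs) (hΘ.comp hGs) hNb (fun x hx => by
    have h1 : x ∉ N := fun h => hx (subset_closure h)
    have h2 : Gs x = Fs x + (G x - F x) := hGseq h1
    simp only [Function.comp]
    rw [h2, hFG x (fun h => h1 (hΩN (subset_closure h)))]
    simp)
  have hpt : ∀ x, (fderiv ℝ (Θ ∘ Fs) x).det - (fderiv ℝ (Θ ∘ Gs) x).det = (fderiv ℝ Θ x).det := by
    intro x
    rcases lt_or_ge ‖x‖ ρ with h | h
    · have hxN : x ∈ closure N := subset_closure (hΩN (subset_closure (hρid x (by linarith)).2))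
      rw [hchain Gs hGs x (hGsne x hxN), sub_zero]
      have : (Θ ∘ Fs) =ᶠ[𝓝 x] Θ := by
        filter_upwards [isOpen_ball.mem_nhds (mem_ball_zero_iff.2 h)] with y hy
        have h1 := hFseq (ball_subset_closedBall hy)
        have hy' := (mem_ball_zero_iff.1 hy)
        simp only [Function.comp]
        rw [h1, (hρid y (by linarith)).1]
      rw [this.fderiv_eq]
    · rw [hΘ0 x ((min_le_right _ _).trans h)]
      by_cases hxN : x ∈ closure N
      · rw [hchain Gs hGs x (hGsne x hxN), hchain Fs hFs x (hFsne x hxN h), sub_zero]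
      · have : (Θ ∘ Fs) =ᶠ[𝓝 x] (Θ ∘ Gs) := by
          filter_upwards [isClosed_closure.isOpen_compl.mem_nhds hxN] with y hy
          have h1 : y ∉ N := fun h => hy (subset_closure h)
          have h2 : Gs y = Fs y + (G y - F y) := hGseq h1
          simp only [Function.comp]
          rw [h2, hFG y (fun h => h1 (hΩN (subset_closure h)))]
          simp
        rw [this.fderiv_eq, sub_self]
  simp_rw [hpt] at key
  rw [hΘI] at key
  exact one_ne_zero key
end HypAux

namespace HypAux
open MeasureTheory Set Metric Topology Filter

theorem tietze {X Y : Type*} [MetricSpace X] [NormedAddCommGroup Y] [NormedSpace ℝ Y] [FiniteDimensional ℝ Y]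
    {f : X → Y} {s : Set X} (hs : IsClosed s) (hf : ContinuousOn f s) :
    ∃ g : X → Y, Continuous g ∧ EqOn g f s := by
  let A := (ContinuousLinearEquiv.ofFinrankEq (by simp : Module.finrank ℝ Y = Module.finrank ℝ (Fin (Module.finrank ℝ Y) → ℝ)))
  obtain ⟨g, hg⟩ := ContinuousMap.exists_restrict_eq (Y := Fin (Module.finrank ℝ Y) → ℝ) hs
    ⟨s.domRestrict (fun x => A (f x)), (A.continuous.comp_continuousOn hf).domRestrict⟩
  refine ⟨fun x => A.symm (g x), A.symm.continuous.comp g.continuous, fun x hx => ?_⟩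
  have h1 : g x = A (f x) := congrArg (fun k => k ⟨x, hx⟩) hg
  simp [h1]

theorem deg_homotopy {d : ℕ} (hd : 0 < d) {F G : (Fin d → ℝ) → (Fin d → ℝ)} {H : (Fin d → ℝ) × ℝ → (Fin d → ℝ)}
    {Ω : Set (Fin d → ℝ)} (hΩ : IsOpen Ω) (hb : Bornology.IsBounded Ω) (h0 : (0 : Fin d → ℝ) ∈ Ω)
    (hF : ContinuousOn F (closure Ω)) (hG : ContinuousOn G (closure Ω))
    (hH : ContinuousOn H (frontier Ω ×ˢ Icc 0 1))
    (hHF : ∀ x ∈ frontier Ω, H (x, 0) = F x) (hHG : ∀ x ∈ frontier Ω, H (x, 1) = G x)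
    (hH0 : ∀ x ∈ frontier Ω, ∀ t ∈ Icc (0:ℝ) 1, H (x, t) ≠ 0)
    (hG0 : ∀ x ∈ closure Ω, G x ≠ 0)
    (hF0 : ∀ x ∈ closure Ω, x ≠ 0 → F x ≠ 0) (hid : ∀ᶠ x in 𝓝 0, F x = x) : False := by
  obtain ⟨F', hF', hFe⟩ := tietze isClosed_closure hF
  obtain ⟨G', hG', hGe⟩ := tietze isClosed_closure hG
  obtain ⟨H', hH', hHe⟩ := tietze (isClosed_frontier.prod isClosed_Icc) hH
  let K : (Fin d → ℝ) × ℝ → (Fin d → ℝ) := fun z => 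
    H' z + (1 - z.2) • (F' z.1 - H' (z.1, 0)) + z.2 • (G' z.1 - H' (z.1, 1))
  have hK : Continuous K := by fun_prop
  have hK0 : ∀ x, K (x, 0) = F' x := by intro x; simp [K]
  have hK1 : ∀ x, K (x, 1) = G' x := by intro x; simp [K]
  have hfc : frontier Ω ⊆ closure Ω := frontier_subset_closure
  have hKf : ∀ x ∈ frontier Ω, ∀ t ∈ Icc (0:ℝ) 1, K (x, t) = H (x, t) := by
    intro x hx t ht
    have e0 : H' (x, 0) = F' x := by
      rw [hHe ⟨hx, by simp⟩, hHF x hx, hFe (hfc hx)]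
    have e1 : H' (x, 1) = G' x := by
      rw [hHe ⟨hx, by simp⟩, hHG x hx, hGe (hfc hx)]
    have e2 : H' (x, t) = H (x, t) := hHe ⟨hx, ht⟩
    simp [K, e0, e1, e2]
  -- bad set
  let Z : Set (Fin d → ℝ) := Prod.fst '' ((closure Ω ×ˢ Icc (0:ℝ) 1) ∩ {z | K z = 0})
  have hZc : IsCompact Z := by
    apply IsCompact.image _ continuous_fst
    exact (hb.isCompact_closure.prod isCompact_Icc).inter_right (isClosed_eq hK continuous_const)
  have hZΩ : Z ⊆ Ω := by
    rintro _ ⟨⟨x, t⟩, ⟨⟨hx, ht⟩, hz⟩, rfl⟩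
    by_contra hcon
    have hxf : x ∈ frontier Ω := by
      rw [hΩ.frontier_eq]; exact ⟨hx, hcon⟩
    apply hH0 x hxf t ht
    rw [← hKf x hxf t ht]
    exact hz
  obtain ⟨lam, hl0, hl1, hl⟩ := exists_continuous_zero_one_of_isClosed hΩ.isClosed_compl hZc.isClosed
    (by rw [Set.disjoint_left]; exact fun x hx hx' => hx (hZΩ hx'))
  refine deg_core hd (F := F') (G := fun x => K (x, lam x)) hF' (by fun_prop) hΩ hb h0 ?_ ?_ ?_ ?_
  · intro x hx
    rw [hl0 hx]; exact (hK0 x).symm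
  · intro x hx hz
    have hxZ : x ∈ Z := ⟨(x, lam x), ⟨⟨hx, hl x⟩, hz⟩, rfl⟩
    have : lam x = 1 := hl1 hxZ
    rw [this, hK1, hGe hx] at hz
    exact hG0 x hx hz
  · intro x hx hx0
    rw [hFe hx]; exact hF0 x hx hx0
  · filter_upwards [hid, hΩ.mem_nhds h0] with x hx hx'
    rw [hFe (subset_closure hx'), hx]

/-- Radial projection onto the closed ball. -/
theorem exists_radial {Y : Type*} [NormedAddCommGroup Y] [NormedSpace ℝ Y] {ε : ℝ} (hε : 0 < ε) :
    ∃ ρ : Y → Y, Continuous ρ ∧ (∀ y, ‖ρ y‖ ≤ ε) ∧ (∀ y, ‖y‖ ≤ ε → ρ y = y) ∧ (∀ y, ρ y = 0 → y = 0) := by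
  have hp : ∀ y : Y, 0 < max ε ‖y‖ := fun y => lt_max_of_lt_left hε
  refine ⟨fun y => (ε / max ε ‖y‖) • y, ?_, ?_, ?_, ?_⟩
  · refine Continuous.smul (Continuous.div continuous_const (by fun_prop) (fun y => (hp y).ne')) continuous_id
  · intro y
    rw [norm_smul, Real.norm_eq_abs, abs_of_pos (div_pos hε (hp y)), div_mul_eq_mul_div, div_le_iff₀ (hp y)]
    exact mul_le_mul_of_nonneg_left (le_max_right _ _) hε.le
  · intro y hy
    show (ε / max ε ‖y‖) • y = y
    rw [max_eq_left hy, div_self hε.ne', one_smul]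
  · intro y hy
    rcases smul_eq_zero.1 hy with h | h
    · exact absurd h (div_pos hε (hp y)).ne'
    · exact h

theorem deg_open {X Y : Type*} [NormedAddCommGroup X] [NormedSpace ℝ X] [FiniteDimensional ℝ X]
    [NormedAddCommGroup Y] [NormedSpace ℝ Y] 
    (hd : 0 < Module.finrank ℝ X) {F G : X → Y} {H : X × ℝ → Y}
    {Ω : Set X} (hΩ : IsOpen Ω) (hb : Bornology.IsBounded Ω) (h0 : (0 : X) ∈ Ω)
    (hF : ContinuousOn F (closure Ω)) (hG : ContinuousOn G (closure Ω))
    (hH : ContinuousOn H (frontier Ω ×ˢ Icc 0 1))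
    (hHF : ∀ x ∈ frontier Ω, H (x, 0) = F x) (hHG : ∀ x ∈ frontier Ω, H (x, 1) = G x)
    (hH0 : ∀ x ∈ frontier Ω, ∀ t ∈ Icc (0:ℝ) 1, H (x, t) ≠ 0)
    (hG0 : ∀ x ∈ closure Ω, G x ≠ 0)
    (hF0 : ∀ x ∈ closure Ω, x ≠ 0 → F x ≠ 0) 
    (e : OpenPartialHomeomorph X Y) (he0 : (0:X) ∈ e.source) (he : e 0 = 0)
    (hid : ∀ᶠ x in 𝓝 0, F x = e x) : False := by
  let A := (ContinuousLinearEquiv.ofFinrankEq (by simp : Module.finrank ℝ X = Module.finrank ℝ (Fin (Module.finrank ℝ X) → ℝ)))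
  have ht0 : (0:Y) ∈ e.target := he ▸ e.map_source he0
  obtain ⟨ε, hε, hεt⟩ : ∃ ε > 0, closedBall (0:Y) ε ⊆ e.target := 
    Metric.nhds_basis_closedBall.mem_iff.1 (e.open_target.mem_nhds ht0)
  obtain ⟨ρ, hρ, hρε, hρid, hρ0⟩ := exists_radial (Y := Y) hε
  have hσ : Continuous (fun y => e.symm (ρ y)) := 
    e.continuousOn_symm.comp_continuous hρ (fun y => hεt (mem_closedBall_zero_iff.2 (hρε y)))
  have hσ0 : ∀ y, e.symm (ρ y) = 0 → y = 0 := by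
    intro y hy
    apply hρ0
    have := e.right_inv (hεt (mem_closedBall_zero_iff.2 (hρε y)))
    rw [hy, he] at this
    exact this.symm
  let τ : Y → (Fin (Module.finrank ℝ X) → ℝ) := fun y => A (e.symm (ρ y))
  have hτ : Continuous τ := A.continuous.comp hσ
  have hτ0 : ∀ y, y ≠ 0 → τ y ≠ 0 := by
    intro y hy h
    exact hy (hσ0 y (by simpa [τ] using h))
  let B := A.symm.toHomeomorph
  have hBc : B ⁻¹' closure Ω = closure (B ⁻¹' Ω) := B.preimage_closure Ω
  have hBf : B ⁻¹' frontier Ω = frontier (B ⁻¹' Ω) := B.preimage_frontier Ω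
  have hBz : ∀ x, B x = 0 ↔ x = 0 := fun x => by simp [B]
  refine deg_homotopy hd (F := fun x => τ (F (B x))) (G := fun x => τ (G (B x)))
    (H := fun z => τ (H (B z.1, z.2))) (Ω := B ⁻¹' Ω) (hΩ.preimage B.continuous) ?_ ?_ ?_ ?_ ?_ ?_ ?_ ?_ ?_ ?_ ?_
  · have : B ⁻¹' Ω = A '' Ω := by
      ext x; constructor
      · intro hx; exact ⟨B x, hx, by simp [B]⟩
      · rintro ⟨y, hy, rfl⟩; simpa [B] using hy
    rw [this]
    exact A.lipschitz.isBounded_image hb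
  · simpa [B] using h0
  · rw [← hBc]
    exact hτ.comp_continuousOn (hF.comp B.continuous.continuousOn (fun x hx => hx))
  · rw [← hBc]
    exact hτ.comp_continuousOn (hG.comp B.continuous.continuousOn (fun x hx => hx))
  · rw [← hBf]
    refine hτ.comp_continuousOn (hH.comp (f := fun z : (Fin (Module.finrank ℝ X) → ℝ) × ℝ => (B z.1, z.2)) (by fun_prop) (fun x hx => hx))
  · rw [← hBf]; intro x hx; simp only; rw [hHF _ hx]
  · rw [← hBf]; intro x hx; simp only; rw [hHG _ hx]
  · rw [← hBf]; intro x hx t ht; exact hτ0 _ (hH0 _ hx t ht)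
  · rw [← hBc]; intro x hx; exact hτ0 _ (hG0 _ hx)
  · rw [← hBc]; intro x hx hx0; exact hτ0 _ (hF0 _ hx (fun h => hx0 ((hBz x).1 h)))
  · have hB0 : Tendsto B (𝓝 0) (𝓝 0) := by
      have := B.continuous.tendsto 0
      rwa [(hBz 0).2 rfl] at this
    have h1 : ∀ᶠ x in 𝓝 (0:X), x ∈ e.source ∧ ‖e x‖ ≤ ε := by
      refine Filter.Eventually.and (e.open_source.mem_nhds he0) ?_
      have h2 : Tendsto e (𝓝 0) (𝓝 (e 0)) := e.continuousAt he0
      rw [he] at h2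
      have h3 := h2 (closedBall_mem_nhds (0:Y) hε)
      filter_upwards [h3] with x hx
      exact mem_closedBall_zero_iff.1 hx
    filter_upwards [hB0.eventually h1, hB0.eventually hid] with x hx hx'
    simp only [τ]
    rw [hx', hρid _ hx.2, e.left_inv hx.1]
    simp [B]

theorem deg_split {S U Y : Type*} [NormedAddCommGroup S] [NormedSpace ℝ S] [FiniteDimensional ℝ S]
    [NormedAddCommGroup U] [NormedSpace ℝ U] [FiniteDimensional ℝ U]
    [NormedAddCommGroup Y] [NormedSpace ℝ Y]
    (hd : 0 < Module.finrank ℝ (S × U)) {F G : S × U → Y} {H : (S × U) × ℝ → Y}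
    {Ω : Set (S × U)} (hΩ : IsOpen Ω) (hb : Bornology.IsBounded Ω) (h0 : (0 : S × U) ∈ Ω)
    (hF : ContinuousOn F (closure Ω)) (hG : ContinuousOn G (closure Ω))
    (hH : ContinuousOn H (frontier Ω ×ˢ Icc 0 1))
    (hHF : ∀ x ∈ frontier Ω, H (x, 0) = F x) (hHG : ∀ x ∈ frontier Ω, H (x, 1) = G x)
    (hH0 : ∀ x ∈ frontier Ω, ∀ t ∈ Icc (0:ℝ) 1, H (x, t) ≠ 0)
    (hG0 : ∀ x ∈ closure Ω, G x ≠ 0)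
    (hF0 : ∀ x ∈ closure Ω, x ≠ 0 → F x ≠ 0) 
    (ψ : OpenPartialHomeomorph (S × U) Y) (hψ0 : (0 : S × U) ∈ ψ.source) 
    (hid : ∀ᶠ x in 𝓝 (0 : S × U), F x = ψ (0, x.2) - ψ (x.1, 0)) : False := by
  -- small ball
  obtain ⟨ρ, hρ, hρF⟩ : ∃ ρ > 0, ∀ x : S × U, ‖x‖ ≤ ρ → F x = ψ (0, x.2) - ψ (x.1, 0) ∧ x ∈ ψ.source ∧ x ∈ Ω := by
    obtain ⟨r, hr, h⟩ := Metric.eventually_nhds_iff.1 (hid.and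
      (Filter.Eventually.and (ψ.open_source.mem_nhds hψ0) (hΩ.mem_nhds h0)))
    refine ⟨r/2, by positivity, fun x hx => h ?_⟩
    rw [dist_zero_right]; linarith
  let lam : S × U → ℝ := fun x => max 0 (min 1 (2 - 3 * ‖x‖ / ρ))
  have hlam : Continuous lam := by fun_prop
  have hl01 : ∀ x, lam x ∈ Icc (0:ℝ) 1 := fun x => ⟨le_max_left _ _, max_le zero_le_one (min_le_left _ _)⟩
  have hl1 : ∀ x, ‖x‖ ≤ ρ/3 → lam x = 1 := by
    intro x hx
    have : 3 * ‖x‖ / ρ ≤ 1 := by rw [div_le_one hρ]; linarith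
    simp only [lam]
    rw [min_eq_left (by linarith), max_eq_right zero_le_one]
  have hl0 : ∀ x, 2*ρ/3 ≤ ‖x‖ → lam x = 0 := by
    intro x hx
    have : 2 ≤ 3 * ‖x‖ / ρ := by rw [le_div_iff₀ hρ]; linarith
    simp only [lam]
    rw [max_eq_left]
    exact (min_le_right _ _).trans (by linarith)
  let P : S × U → S × U := fun x => (-(lam x • x.1), x.2)
  let Q : S × U → S × U := fun x => ((1 - lam x) • x.1, 0)
  have hP : Continuous P := by fun_prop
  have hQ : Continuous Q := by fun_prop
  have hPn : ∀ x, ‖P x‖ ≤ ‖x‖ := by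
    intro x
    refine max_le_max ?_ le_rfl
    simp only [P]
    rw [norm_neg, norm_smul, Real.norm_eq_abs, abs_of_nonneg (hl01 x).1]
    exact mul_le_of_le_one_left (norm_nonneg _) (hl01 x).2
  have hQn : ∀ x, ‖Q x‖ ≤ ‖x‖ := by
    intro x
    simp only [Q]
    rw [Prod.norm_mk, norm_zero, max_eq_left (norm_nonneg _), norm_smul, Real.norm_eq_abs, abs_of_nonneg (by linarith [(hl01 x).2])]
    exact (mul_le_of_le_one_left (norm_nonneg _) (by linarith [(hl01 x).1])).trans (norm_fst_le x)
  classical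
  let F' : S × U → Y := fun x => if ‖x‖ < ρ then ψ (P x) - ψ (Q x) else F x
  have hF'1 : ∀ x, ‖x‖ < ρ → F' x = ψ (P x) - ψ (Q x) := fun x hx => if_pos hx
  have hF'2 : ∀ x, 2*ρ/3 ≤ ‖x‖ → F' x = F x := by
    intro x hx
    by_cases h : ‖x‖ < ρ
    · rw [hF'1 x h, (hρF x h.le).1]
      simp [P, Q, hl0 x hx]
    · exact if_neg h
  have hbd : ∀ x ∈ frontier Ω, ρ ≤ ‖x‖ := by
    intro x hx
    by_contra hcon
    rw [hΩ.frontier_eq] at hx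
    exact hx.2 (hρF x (by linarith)).2.2
  let e : OpenPartialHomeomorph (S × U) Y := 
    (((Homeomorph.neg S).prodCongr (Homeomorph.refl U)).toOpenPartialHomeomorph.trans ψ).trans
      (Homeomorph.addRight (-ψ 0)).toOpenPartialHomeomorph
  have heq : ∀ x, e x = ψ (-x.1, x.2) - ψ 0 := by
    intro x; simp [e, sub_eq_add_neg]; rfl
  refine deg_open hd (F := F') (G := G) (H := H) hΩ hb h0 ?_ hG hH ?_ hHG hH0 hG0 ?_ e ?_ ?_ ?_
  · intro x hx
    rcases lt_or_ge ‖x‖ ρ with h | h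
    · have h1 : ContinuousAt (fun x => ψ (P x) - ψ (Q x)) x := by
        apply ContinuousAt.sub
        · exact ContinuousAt.comp (ψ.continuousAt (hρF _ ((hPn x).trans h.le)).2.1) hP.continuousAt
        · exact ContinuousAt.comp (ψ.continuousAt (hρF _ ((hQn x).trans h.le)).2.1) hQ.continuousAt
      refine (h1.congr ?_).continuousWithinAt
      filter_upwards [(isOpen_lt continuous_norm continuous_const).mem_nhds h] with y hy
      exact (hF'1 y hy).symm
    · refine (hF x hx).congr_of_eventuallyEq ?_ (hF'2 x (by linarith))
      have h2 : {y : S × U | 2*ρ/3 < ‖y‖} ∈ 𝓝 x := (isOpen_lt continuous_const continuous_norm).mem_nhds 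
        (show 2*ρ/3 < ‖x‖ by linarith)
      filter_upwards [mem_nhdsWithin_of_mem_nhds h2] with y hy
      exact hF'2 y (le_of_lt hy)
  · intro x hx
    rw [hHF x hx, hF'2 x (by linarith [hbd x hx])]
  · intro x hx hx0
    rcases lt_or_ge ‖x‖ ρ with h | h
    · rw [hF'1 x h]
      intro h1
      have h2 := ψ.injOn (hρF _ ((hPn x).trans h.le)).2.1 (hρF _ ((hQn x).trans h.le)).2.1 (sub_eq_zero.1 h1)
      apply hx0
      have h3 := congrArg Prod.fst h2
      have h4 := congrArg Prod.snd h2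
      simp only [P, Q] at h3 h4
      refine Prod.ext ?_ h4
      rw [sub_smul, one_smul, eq_sub_iff_add_eq] at h3
      simpa using h3.symm
    · rw [hF'2 x (by linarith)]; exact hF0 x hx hx0
  · have h1 : (Prod.map Neg.neg id (0 : S × U) : S × U) = 0 := by ext <;> simp
    simp [e, h1, hψ0]
  · rw [heq]; simp [← Prod.zero_eq_mk]
  · filter_upwards [closedBall_mem_nhds (0 : S × U) (show 0 < ρ/3 by positivity)] with x hx
    rw [mem_closedBall_zero_iff] at hx
    rw [hF'1 x (by linarith), heq]
    simp [P, Q, hl1 x hx, ← Prod.zero_eq_mk]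

end HypAux

namespace HypAux
open MeasureTheory Set Metric Topology Filter

theorem isMeagre_of_closed_interior {Y : Type*} [TopologicalSpace Y] {s : Set Y} (h : IsClosed s) (hi : interior s = ∅) : IsMeagre s :=
  (h.isNowhereDense_iff.2 hi).isMeagre

/-- General position: a map can be perturbed to avoid zero on a compact set with empty interior. -/
theorem gen_pos {E : Type*} [NormedAddCommGroup E] [NormedSpace ℝ E] [FiniteDimensional ℝ E]
    {Z : Set E} (hZ : IsCompact Z) (hZi : interior Z = ∅) {g : E → E} (hg : Continuous g) {c : ℝ} (hc : 0 < c) :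
    ∃ g' : E → E, Continuous g' ∧ (∀ x, ‖g' x - g x‖ < c) ∧ ∀ x ∈ Z, g' x ≠ 0 := by
  borelize E
  obtain ⟨g1, hg1, hg1d, -⟩ := hg.exists_contDiff_approx 1 (ε := fun _ => c/2) continuous_const (fun _ => by positivity)
  replace hg1 : ContDiff ℝ 1 g1 := hg1
  have hder : ∀ x, HasFDerivAt g1 (fderiv ℝ g1 x) x := fun x => 
    (hg1.differentiable one_ne_zero).differentiableAt.hasFDerivAt
  have hcont : Continuous fun x => (fderiv ℝ g1 x).det :=
    ContinuousLinearMap.continuous_det.comp (hg1.continuous_fderiv one_ne_zero)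
  let Cr : Set E := Z ∩ {x | (fderiv ℝ g1 x).det = 0}
  have hCr : IsCompact Cr := hZ.inter_right (isClosed_eq hcont continuous_const)
  have hm1 : IsMeagre (g1 '' Cr) := by
    apply isMeagre_of_closed_interior (hCr.image hg1.continuous).isClosed
    have h0 : Measure.addHaar (g1 '' Cr) = 0 :=
      addHaar_image_eq_zero_of_det_fderivWithin_eq_zero Measure.addHaar (f' := fun x => fderiv ℝ g1 x)
        (fun x _ => (hder x).hasFDerivWithinAt) (fun x hx => hx.2)
    exact interior_eq_empty_iff_dense_compl.2 (by
      by_contra hcon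
      rw [← interior_eq_empty_iff_dense_compl] at hcon
      have := (isOpen_interior (s := g1 '' Cr)).measure_pos Measure.addHaar (nonempty_iff_ne_empty.2 hcon)
      exact absurd (measure_mono_null interior_subset h0) this.ne')
  have hloc : ∀ x : E, ∃ V ∈ 𝓝 x, x ∈ Z \ Cr → IsMeagre (g1 '' (Z ∩ V)) := by
    intro x
    by_cases hx : x ∈ Z \ Cr
    · have hdet : (fderiv ℝ g1 x).det ≠ 0 := fun h => hx.2 ⟨hx.1, h⟩
      have hs : HasStrictFDerivAt g1 (((fderiv ℝ g1 x).toContinuousLinearEquivOfDetNeZero hdet : E ≃L[ℝ] E) : E →L[ℝ] E) x := by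
        have := hg1.contDiffAt.hasStrictFDerivAt (x := x) one_ne_zero
        simpa using this
      let e := hs.toOpenPartialHomeomorph g1
      have hxs : x ∈ e.source := hs.mem_toOpenPartialHomeomorph_source
      obtain ⟨r, hr, hrs⟩ := Metric.nhds_basis_closedBall.mem_iff.1 (e.open_source.mem_nhds hxs)
      refine ⟨closedBall x r, closedBall_mem_nhds x hr, fun _ => ?_⟩
      have hcomp : IsCompact (Z ∩ closedBall x r) := hZ.inter_right isClosed_closedBall
      apply isMeagre_of_closed_interior (hcomp.image hg1.continuous).isClosed
      have heq : g1 '' (Z ∩ closedBall x r) = e '' (Z ∩ closedBall x r) := rfl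
      rw [heq]
      by_contra hne
      obtain ⟨y, hy⟩ := nonempty_iff_ne_empty.2 hne
      have hsub : Z ∩ closedBall x r ⊆ e.source := fun z hz => hrs hz.2
      have hO : IsOpen (e.source ∩ e ⁻¹' (interior (e '' (Z ∩ closedBall x r)))) := 
        e.isOpen_inter_preimage isOpen_interior
      have hOZ : e.source ∩ e ⁻¹' (interior (e '' (Z ∩ closedBall x r))) ⊆ Z := by
        rintro z ⟨hz, hz'⟩
        obtain ⟨w, hw, hwz⟩ := interior_subset hz'
        rw [← e.injOn (hsub hw) hz hwz]
        exact hw.1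
      obtain ⟨w, hw, hwy⟩ := interior_subset hy
      have : w ∈ interior Z := mem_interior.2 ⟨_, hOZ, hO, hsub hw, by simpa [hwy] using hy⟩
      rw [hZi] at this
      exact this
    · exact ⟨univ, univ_mem, fun h => absurd h hx⟩
  choose V hV hVm using hloc
  obtain ⟨t, htZ, htc, hts⟩ := TopologicalSpace.countable_cover_nhdsWithin (s := Z \ Cr) (f := V)
    (fun x _ => mem_nhdsWithin_of_mem_nhds (hV x))
  have hm2 : IsMeagre (⋃ x ∈ t, g1 '' (Z ∩ V x)) := by
    have : Countable t := htc
    rw [biUnion_eq_iUnion]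
    exact isMeagre_iUnion fun x => hVm x (htZ x.2)
  have hm : IsMeagre (g1 '' Z) := by
    refine (hm1.union hm2).mono ?_
    rintro _ ⟨x, hx, rfl⟩
    by_cases hxC : x ∈ Cr
    · exact Or.inl ⟨x, hxC, rfl⟩
    · right
      obtain ⟨y, hy, hxy⟩ := mem_iUnion₂.1 (hts ⟨hx, hxC⟩)
      exact mem_iUnion₂.2 ⟨y, hy, x, ⟨hx, hxy⟩, rfl⟩
  have hdense : Dense (g1 '' Z)ᶜ := dense_of_mem_residual hm
  obtain ⟨y, hy, hyb⟩ := hdense.exists_mem_open (isOpen_ball (x := (0:E)) (ε := c/2)) ⟨0, mem_ball_self (by positivity)⟩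
  refine ⟨fun x => g1 x - y, hg1.continuous.sub continuous_const, fun x => ?_, fun x hx h => hy ⟨x, hx, sub_eq_zero.1 h⟩⟩
  have h1 := hg1d x
  rw [dist_eq_norm] at h1
  have h2 := mem_ball_zero_iff.1 hyb
  have h3 : g1 x - y - g x = (g1 x - g x) - y := by abel
  rw [h3]
  linarith [norm_sub_le (g1 x - g x) y]

theorem inv_contOn {X Y : Type*} [TopologicalSpace X] [TopologicalSpace Y] [T2Space Y] {K : Set X} (hK : IsCompact K)
    {f : X → Y} (hf : ContinuousOn f K) {σ : Y → X} (hσ : ∀ x ∈ K, σ (f x) = x) : ContinuousOn σ (f '' K) := by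
  rw [continuousOn_iff_isClosed]
  intro t ht
  refine ⟨f '' (K ∩ t), ((hK.inter_right ht).image_of_continuousOn (hf.mono inter_subset_left)).isClosed, ?_⟩
  ext y
  constructor
  · rintro ⟨h1, x, hx, rfl⟩
    refine ⟨⟨x, ⟨hx, ?_⟩, rfl⟩, x, hx, rfl⟩
    have : σ (f x) ∈ t := h1
    rwa [hσ x hx] at this
  · rintro ⟨⟨x, hx, rfl⟩, h⟩
    refine ⟨?_, h⟩
    show σ (f x) ∈ t
    rw [hσ x hx.1]; exact hx.2

/-- A compact set injecting onto a set with empty interior of codimension one does not separate a ball. -/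
theorem non_sep {Y P : Type*} [NormedAddCommGroup Y] [NormedSpace ℝ Y] [FiniteDimensional ℝ Y]
    [NormedAddCommGroup P] [NormedSpace ℝ P] [FiniteDimensional ℝ P] 
    (hdim : Module.finrank ℝ Y = Module.finrank ℝ P + 1) {y0 : Y} {r : ℝ} {X : Set Y} (hX : IsCompact X)
    {π : Y → P} (hπ : ContinuousOn π X) (hinj : InjOn π X) (hInterior : interior (π '' X) = ∅) :
    IsPreconnected (ball y0 r \ X) := by
  rw [isPreconnected_iff_subset_of_disjoint]
  by_contra hcon
  push Not at hcon
  obtain ⟨u, v, hu, hv, huv, hdis, hnu, hnv⟩ := hcon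
  set b := ball y0 r
  have hbX : IsOpen (b \ X) := isOpen_ball.sdiff hX.isClosed
  set U := (b \ X) ∩ u with hU
  set U' := (b \ X) ∩ v with hU'
  have hUo : IsOpen U := hbX.inter hu
  have hUo' : IsOpen U' := hbX.inter hv
  have hUU : Disjoint U U' := by
    rw [Set.disjoint_left]
    intro x hx hx'
    have : x ∈ b \ X ∩ (u ∩ v) := ⟨hx.1, hx.2, hx'.2⟩
    rw [hdis] at this
    exact this
  obtain ⟨q, hq⟩ : U.Nonempty := by
    obtain ⟨x, hx, hxv⟩ := not_subset.1 hnv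
    exact ⟨x, hx, (huv hx).resolve_right hxv⟩
  obtain ⟨q', hq'⟩ : U'.Nonempty := by
    obtain ⟨x, hx, hxv⟩ := not_subset.1 hnu
    exact ⟨x, hx, (huv hx).resolve_left hxv⟩
  have hclU : Disjoint (closure U) U' := hUU.closure_left hUo'
  have hclb : closure U ⊆ closedBall y0 r := by
    refine (closure_mono (fun x hx => hx.1.1)).trans closure_ball_subset_closedBall
  have hfr : ∀ x ∈ frontier U, x ∉ X → dist x y0 = r := by
    intro x hx hxX
    rw [hUo.frontier_eq] at hx
    refine le_antisymm (hclb hx.1) ?_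
    by_contra hlt
    have hxb : x ∈ b \ X := ⟨not_le.1 hlt, hxX⟩
    rcases huv hxb with h | h
    · exact hx.2 ⟨hxb, h⟩
    · exact Set.disjoint_left.1 hclU hx.1 ⟨hxb, h⟩
  obtain ⟨δ1, hδ1, hball1⟩ := Metric.isOpen_iff.1 hUo q hq
  obtain ⟨δ2, hδ2, hball2⟩ := Metric.isOpen_iff.1 hUo' q' hq'
  set r' := max (dist q y0) (dist q' y0) with hr'
  have hr'r : r' < r := max_lt hq.1.1 hq'.1.1
  obtain ⟨c, hc, hc1, hc2, hc3⟩ : ∃ c > 0, 2 * c ≤ δ1 ∧ 2 * c ≤ δ2 ∧ 2 * c ≤ r - r' := by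
    refine ⟨min (min δ1 δ2) (r - r') / 2, ?_, ?_, ?_, ?_⟩
    · have : 0 < r - r' := by linarith
      positivity
    · linarith [min_le_left (min δ1 δ2) (r - r'), min_le_left δ1 δ2]
    · linarith [min_le_left (min δ1 δ2) (r - r'), min_le_right δ1 δ2]
    · linarith [min_le_right (min δ1 δ2) (r - r')]
  let qt : ℝ → Y := fun t => q + t • (q' - q)
  have hqt : Continuous qt := by fun_prop
  have hqtb : ∀ t ∈ Icc (0:ℝ) 1, dist (qt t) y0 ≤ r' := by
    intro t ht
    have h1 : Convex ℝ (closedBall y0 r') := convex_closedBall _ _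
    exact h1.add_smul_sub_mem (x := q) (y := q') (mem_closedBall.2 (le_max_left _ _)) (mem_closedBall.2 (le_max_right _ _)) ht
  -- data on frontier
  have hd1 : ∀ x ∈ frontier U, 2 * c ≤ ‖x - q‖ := by
    intro x hx
    by_contra hlt
    rw [hUo.frontier_eq] at hx
    apply hx.2
    apply hball1
    rw [mem_ball, dist_eq_norm]; linarith
  have hd2 : ∀ x ∈ closure U, 2 * c ≤ ‖x - q'‖ := by
    intro x hx
    by_contra hlt
    apply Set.disjoint_left.1 hclU hx
    apply hball2
    rw [mem_ball, dist_eq_norm]; linarith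
  have hd3 : ∀ x ∈ frontier U, x ∉ X → ∀ t ∈ Icc (0:ℝ) 1, 2 * c ≤ ‖x - qt t‖ := by
    intro x hx hxX t ht
    have h1 := hfr x hx hxX
    have h2 := hqtb t ht
    have h3 := dist_triangle x (qt t) y0
    rw [← dist_eq_norm]; linarith
  -- inverse of π
  obtain ⟨σ0, hσ0⟩ : ∃ σ : P → Y, ∀ x ∈ X, σ (π x) = x := ⟨Function.invFunOn π X, fun x hx => hinj.leftInvOn_invFunOn hx⟩
  obtain ⟨σ, hσc, hσe⟩ := tietze (hX.image_of_continuousOn hπ).isClosed (inv_contOn hX hπ hσ0)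
  have hσ : ∀ x ∈ X, σ (π x) = x := fun x hx => by rw [hσe ⟨x, hx, rfl⟩, hσ0 x hx]
  obtain ⟨π', hπ'c, hπ'e⟩ := tietze hX.isClosed hπ
  let A : Y ≃L[ℝ] P × ℝ := ContinuousLinearEquiv.ofFinrankEq (by simp [hdim])
  let Z : Set Y := A ⁻¹' ((π '' X) ×ˢ Icc (0:ℝ) 1)
  have hZc : IsCompact Z := by
    have h1 : IsCompact ((π '' X) ×ˢ Icc (0:ℝ) 1) := (hX.image_of_continuousOn hπ).prod isCompact_Icc
    exact A.toHomeomorph.isCompact_preimage.2 h1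
  have hZi : interior Z = ∅ := by
    have h1 : A.toHomeomorph ⁻¹' interior ((π '' X) ×ˢ Icc (0:ℝ) 1) = interior Z := A.toHomeomorph.preimage_interior _
    rw [← h1, interior_prod_eq, hInterior, empty_prod, preimage_empty]
  obtain ⟨g, hgc, hgd, hg0⟩ := gen_pos hZc hZi (g := fun y => σ (A y).1 - qt (A y).2) (by fun_prop) hc
  let μ : Y → ℝ := fun v => max 0 (min 1 (2 - ‖v‖ / c))
  have hμ : Continuous μ := by fun_prop
  have hμ01 : ∀ x, μ x ∈ Icc (0:ℝ) 1 := fun x => ⟨le_max_left _ _, max_le zero_le_one (min_le_left _ _)⟩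
  have hμ0 : ∀ v, 2 * c ≤ ‖v‖ → μ v = 0 := by
    intro v hv
    have : 2 ≤ ‖v‖ / c := by rw [le_div_iff₀ hc]; exact hv
    exact max_eq_left ((min_le_right _ _).trans (by linarith))
  have hμ1 : ∀ v, ‖v‖ ≤ c → μ v = 1 := by
    intro v hv
    have : ‖v‖ / c ≤ 1 := by rw [div_le_one hc]; exact hv
    simp only [μ]
    rw [min_eq_left (by linarith), max_eq_right zero_le_one]
  let H0 : Y × ℝ → Y := fun z => (z.1 - qt z.2) + μ (z.1 - qt z.2) • (g (A.symm (π' z.1, z.2)) - (z.1 - qt z.2))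
  have hH0 : Continuous H0 := by fun_prop
  let B := Homeomorph.addRight q
  have hBc : B ⁻¹' closure U = closure (B ⁻¹' U) := B.preimage_closure U
  have hBf : B ⁻¹' frontier U = frontier (B ⁻¹' U) := B.preimage_frontier U
  have hBx : ∀ x, B x = x + q := fun x => rfl
  refine deg_open (X := Y) (Y := Y) (by omega) (F := fun x => x) (G := fun x => B x - q')
    (H := fun z => H0 (B z.1, z.2)) (Ω := B ⁻¹' U) (hUo.preimage B.continuous) ?_ ?_ 
    continuousOn_id (by fun_prop) (by fun_prop) ?_ ?_ ?_ ?_ ?_ (OpenPartialHomeomorph.refl Y) (by simp) (by simp) (by simp)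
  · have hUb : Bornology.IsBounded U := isBounded_ball.subset (fun x hx => hx.1.1 : U ⊆ ball y0 r)
    have : B ⁻¹' U = (fun x => x - q) '' U := by
      ext x; constructor
      · intro hx; exact ⟨B x, hx, by simp [hBx]⟩
      · rintro ⟨y, hy, rfl⟩; simpa [hBx] using hy
    rw [this]
    exact (LipschitzWith.of_dist_le_mul (K := 1) (fun x y => by simp)).isBounded_image hUb
  · simpa [hBx] using hq
  · rw [← hBf]
    intro x hx
    have := hμ0 _ (hd1 _ hx)
    simp only [hBx] at this
    simp at this
    simp [H0, hBx, qt, this]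
  · rw [← hBf]
    intro x hx
    have := hμ0 _ (hd2 _ (frontier_subset_closure hx))
    simp only [hBx] at this
    simp [H0, hBx, qt, this]
  · rw [← hBf]
    intro x hx t ht h
    set z := B x with hz
    have hzf : z ∈ frontier U := hx
    by_cases hzX : z ∈ X
    · have hmemZ : A.symm (π' z, t) ∈ Z := by
        simp only [Z, mem_preimage, ContinuousLinearEquiv.apply_symm_apply]
        rw [hπ'e hzX]
        exact ⟨⟨z, hzX, rfl⟩, ht⟩
      have h1 := hgd (A.symm (π' z, t))
      simp only [ContinuousLinearEquiv.apply_symm_apply] at h1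
      rw [hπ'e hzX, hσ z hzX] at h1
      have h2 := hg0 _ hmemZ
      rw [hπ'e hzX] at h2
      simp only [H0, hπ'e hzX] at h
      rcases le_or_gt ‖z - qt t‖ c with hle | hgt
      · rw [hμ1 _ hle] at h
        simp at h
        exact h2 h
      · have h3 : ‖z - qt t‖ = ‖μ (z - qt t) • (g (A.symm (π z, t)) - (z - qt t))‖ := by
          conv_lhs => rw [eq_neg_of_add_eq_zero_left h, norm_neg]
        have h4 : ‖μ (z - qt t) • (g (A.symm (π z, t)) - (z - qt t))‖ ≤ 1 * ‖g (A.symm (π z, t)) - (z - qt t)‖ := by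
          rw [norm_smul, Real.norm_eq_abs, abs_of_nonneg (hμ01 _).1]
          exact mul_le_mul_of_nonneg_right (hμ01 _).2 (norm_nonneg _)
        linarith
    · have h1 := hd3 z hzf hzX t ht
      have h2 := hμ0 _ h1
      simp only [H0, h2, zero_smul, add_zero] at h
      rw [h, norm_zero] at h1
      linarith
  · rw [← hBc]
    intro x hx h
    have h1 := hd2 _ hx
    replace h : B x - q' = 0 := h
    rw [h, norm_zero] at h1
    linarith
  · intro x _ hx
    exact hx

end HypAux

namespace HypAux
open Set Metric Topology Filter

section dyn
variable {M : Type*} [MetricSpace M]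

/-- Local stable set. -/
def WS (f : M ≃ₜ M) (ε : ℝ) (x : M) : Set M := {y | ∀ k : ℕ, dist (f^[k] x) (f^[k] y) ≤ ε}

/-- Expansivity, in terms of iterates. -/
def Expv (f : M ≃ₜ M) (α : ℝ) : Prop := ∀ x y : M, (∀ k : ℕ, dist (f^[k] x) (f^[k] y) ≤ α) →
  (∀ k : ℕ, dist (f.symm^[k] x) (f.symm^[k] y) ≤ α) → x = y

theorem Expv.symm {f : M ≃ₜ M} {α : ℝ} (h : Expv f α) : Expv f.symm α := 
  fun x y h1 h2 => h x y h2 h1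

theorem iter_symm_iter (f : M ≃ₜ M) (k : ℕ) (x : M) : f.symm^[k] (f^[k] x) = x :=
  Function.LeftInverse.iterate (fun y => f.symm_apply_apply y) k x

theorem iter_iter_symm (f : M ≃ₜ M) (k : ℕ) (x : M) : f^[k] (f.symm^[k] x) = x :=
  Function.LeftInverse.iterate (fun y => f.apply_symm_apply y) k x

theorem mem_WS_self (f : M ≃ₜ M) {ε : ℝ} (hε : 0 ≤ ε) (x : M) : x ∈ WS f ε x := fun k => by simpa using hε

theorem mem_WS_comm {f : M ≃ₜ M} {ε : ℝ} {x y : M} : y ∈ WS f ε x ↔ x ∈ WS f ε y := by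
  constructor <;> intro h k <;> rw [dist_comm] <;> exact h k

theorem WS_mono {f : M ≃ₜ M} {ε ε' : ℝ} (h : ε ≤ ε') (x : M) : WS f ε x ⊆ WS f ε' x :=
  fun _ hy k => (hy k).trans h

theorem WS_dist {f : M ≃ₜ M} {ε : ℝ} {x y : M} (h : y ∈ WS f ε x) : dist x y ≤ ε := by simpa using h 0

theorem WS_trans {f : M ≃ₜ M} {ε ε' : ℝ} {x y z : M} (h : y ∈ WS f ε x) (h' : z ∈ WS f ε' y) : z ∈ WS f (ε + ε') x :=
  fun k => (dist_triangle _ _ _).trans (add_le_add (h k) (h' k))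

theorem WS_unique {f : M ≃ₜ M} {α ε : ℝ} (hf : Expv f α) (hε : 2 * ε ≤ α) {x y a b : M}
    (ha : a ∈ WS f ε x) (hb : b ∈ WS f ε x) (ha' : a ∈ WS f.symm ε y) (hb' : b ∈ WS f.symm ε y) : a = b := by
  apply hf
  · intro k
    have := WS_trans (mem_WS_comm.1 ha) hb k
    linarith
  · intro k
    have := WS_trans (mem_WS_comm.1 ha') hb' k
    linarith

theorem isClosed_WS (f : M ≃ₜ M) (ε : ℝ) : IsClosed {z : M × M | z.2 ∈ WS f ε z.1} := by
  have : {z : M × M | z.2 ∈ WS f ε z.1} = ⋂ k : ℕ, {z : M × M | dist (f^[k] z.1) (f^[k] z.2) ≤ ε} := by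
    ext z; simp [WS]
  rw [this]
  refine isClosed_iInter fun k => isClosed_le ?_ continuous_const
  have := f.continuous.iterate k
  fun_prop

theorem WS_lim {f : M ≃ₜ M} {ε : ℝ} {ι : Type*} {l : Filter ι} [l.NeBot] {x y : ι → M} {a b : M} 
    (hx : Tendsto x l (𝓝 a)) (hy : Tendsto y l (𝓝 b)) (h : ∀ᶠ i in l, y i ∈ WS f ε (x i)) : b ∈ WS f ε a :=
  (isClosed_WS f ε).mem_of_tendsto (hx.prodMk_nhds hy) h

theorem isClosed_WS_left (f : M ≃ₜ M) (ε : ℝ) (x : M) : IsClosed (WS f ε x) :=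
  (isClosed_WS f ε).preimage (f := fun y => (x, y)) (by fun_prop)

theorem unif_iter [CompactSpace M] (f : M ≃ₜ M) {η : ℝ} (hη : 0 < η) (N : ℕ) :
    ∃ δ > 0, ∀ x y : M, dist x y < δ → ∀ k < N, dist (f^[k] x) (f^[k] y) < η := by
  induction N with
  | zero => exact ⟨1, one_pos, fun x y _ k hk => absurd hk (Nat.not_lt_zero k)⟩
  | succ N ih =>
    obtain ⟨δ, hδ, h⟩ := ih
    have hu := CompactSpace.uniformContinuous_of_continuous (f.continuous.iterate N)
    obtain ⟨δ', hδ', h'⟩ := Metric.uniformContinuous_iff.1 hu η hη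
    refine ⟨min δ δ', lt_min hδ hδ', fun x y hxy k hk => ?_⟩
    rcases Nat.lt_succ_iff_lt_or_eq.1 hk with hk | rfl
    · exact h x y (hxy.trans_le (min_le_left _ _)) k hk
    · exact h' (hxy.trans_le (min_le_right _ _))

theorem unif_contract [CompactSpace M] {f : M ≃ₜ M} {α ε : ℝ} (hf : Expv f α) (hε : ε ≤ α) {η : ℝ} (hη : 0 < η) :
    ∃ N : ℕ, ∀ x, ∀ y ∈ WS f ε x, ∀ k ≥ N, dist (f^[k] x) (f^[k] y) < η := by
  let C : ℕ → Set (M × M) := fun N => {z | η ≤ dist z.1 z.2} ∩ ({z | z.2 ∈ WS f ε z.1} ∩ 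
    ⋂ j : Fin (N + 1), {z : M × M | dist (f.symm^[(j:ℕ)] z.1) (f.symm^[(j:ℕ)] z.2) ≤ ε})
  have hcl : ∀ N, IsClosed (C N) := by
    intro N
    refine (isClosed_le continuous_const (by fun_prop)).inter ((isClosed_WS f ε).inter (isClosed_iInter fun j => isClosed_le ?_ continuous_const))
    have := f.symm.continuous.iterate j
    fun_prop
  have hmono : ∀ N, C (N+1) ⊆ C N := by
    intro N z hz
    refine ⟨hz.1, hz.2.1, ?_⟩
    have h1 := hz.2.2
    simp only [mem_iInter, mem_setOf_eq] at h1 ⊢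
    intro j
    exact h1 ⟨j, by omega⟩
  have hex : ∃ N, C N = ∅ := by
    by_contra hcon
    push Not at hcon
    obtain ⟨z, hz⟩ := IsCompact.nonempty_iInter_of_sequence_nonempty_isCompact_isClosed C hmono
      (fun N => hcon N) (hcl 0).isCompact hcl
    simp only [mem_iInter] at hz
    have heq : z.1 = z.2 := by
      apply hf
      · intro k; exact ((hz 0).2.1 k).trans hε
      · intro k
        have h1 := (hz k).2.2
        simp only [mem_iInter, mem_setOf_eq] at h1
        exact (h1 ⟨k, by omega⟩).trans hε
    have h2 : η ≤ dist z.1 z.2 := (hz 0).1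
    rw [heq, dist_self] at h2
    linarith
  obtain ⟨N, hN⟩ := hex
  refine ⟨N, fun x y hy k hk => ?_⟩
  by_contra hcon
  have : (f^[k] x, f^[k] y) ∈ C N := by
    refine ⟨not_lt.1 hcon, ?_, ?_⟩
    · intro j
      simp only [← Function.iterate_add_apply]
      exact hy _
    · simp only [mem_iInter, mem_setOf_eq]
      intro j
      have hj : k = j + (k - j) := by omega
      rw [hj, Function.iterate_add_apply, Function.iterate_add_apply, iter_symm_iter, iter_symm_iter]
      exact hy _
  rw [hN] at this
  exact this

theorem WS_shrink [CompactSpace M] {f : M ≃ₜ M} {α ε : ℝ} (hf : Expv f α) (hε : ε ≤ α) {η : ℝ} (hη : 0 < η) :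
    ∃ δ > 0, ∀ x, ∀ y ∈ WS f ε x, dist x y < δ → y ∈ WS f η x := by
  obtain ⟨N, hN⟩ := unif_contract hf hε hη
  obtain ⟨δ, hδ, h⟩ := unif_iter f hη N
  refine ⟨δ, hδ, fun x y hy hd k => ?_⟩
  rcases lt_or_ge k N with hk | hk
  · exact (h x y hd k hk).le
  · exact (hN x y hy k hk).le

variable {S U : Type*} [NormedAddCommGroup S] [NormedSpace ℝ S] [NormedAddCommGroup U] [NormedSpace ℝ U]

/-- Linear model. -/
noncomputable def LL (z : S × U) : S × U := ((1/2 : ℝ) • z.1, (2:ℝ) • z.2)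

/-- `e` is a linearizing chart at `p`. -/
def HypE (f : M ≃ₜ M) (e : OpenPartialHomeomorph M (S × U)) (p : M) (l : ℕ) : Prop :=
  1 ≤ l ∧ p ∈ e.source ∧ e p = 0 ∧ ∀ᶠ z in 𝓝 (0 : S × U), f^[l] (e.symm z) = e.symm (LL z)

/-- swapped chart -/
noncomputable def swapE (e : OpenPartialHomeomorph M (S × U)) : OpenPartialHomeomorph M (U × S) :=
  e.trans (Homeomorph.prodComm S U).toOpenPartialHomeomorph

theorem swapE_symm (e : OpenPartialHomeomorph M (S × U)) (z : U × S) : (swapE e).symm z = e.symm (z.2, z.1) := by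
  simp [swapE]; rfl

theorem HypE.symm {f : M ≃ₜ M} {e : OpenPartialHomeomorph M (S × U)} {p : M} {l : ℕ} (h : HypE f e p l) :
    HypE f.symm (swapE e) p l := by
  obtain ⟨hl, hp, hp0, hev⟩ := h
  refine ⟨hl, by simpa [swapE] using hp, ?_, ?_⟩
  · simp [swapE, hp0]
  · have ht : Tendsto (fun z : U × S => ((2:ℝ) • z.2, (1/2:ℝ) • z.1)) (𝓝 0) (𝓝 (0 : S × U)) := by
      have : Continuous (fun z : U × S => ((2:ℝ) • z.2, (1/2:ℝ) • z.1)) := by fun_prop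
      have h := this.tendsto 0
      simpa [← Prod.zero_eq_mk] using h
    filter_upwards [ht.eventually hev] with z hz
    have h1 : LL ((2:ℝ) • z.2, (1/2:ℝ) • z.1) = (z.2, z.1) := by
      simp [LL, smul_smul]
    rw [h1] at hz
    rw [swapE_symm, swapE_symm, ← hz, iter_symm_iter]
    simp [LL]

theorem HypE.fix {f : M ≃ₜ M} {e : OpenPartialHomeomorph M (S × U)} {p : M} {l : ℕ} (h : HypE f e p l) :
    f^[l] p = p := by
  obtain ⟨hl, hp, hp0, hev⟩ := h
  have h1 := hev.self_of_nhds
  have h2 : e.symm 0 = p := by rw [← hp0, e.left_inv hp]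
  have h3 : LL (0 : S × U) = 0 := by simp [LL]
  rwa [h3, h2] at h1

theorem HypE.symm_zero {f : M ≃ₜ M} {e : OpenPartialHomeomorph M (S × U)} {p : M} {l : ℕ} (h : HypE f e p l) :
    e.symm 0 = p := by rw [← h.2.2.1, e.left_inv h.2.1]

theorem HypE.zero_mem {f : M ≃ₜ M} {e : OpenPartialHomeomorph M (S × U)} {p : M} {l : ℕ} (h : HypE f e p l) :
    (0 : S × U) ∈ e.target := by rw [← h.2.2.1]; exact e.map_source h.2.1

/-- Properties of the global parametrization of the stable manifold of a hyperbolic periodic point. -/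
structure IsPar (f : M ≃ₜ M) (e : OpenPartialHomeomorph M (S × U)) (p : M) (Φ : S → M) : Prop where
  cont : Continuous Φ
  inj : Function.Injective Φ
  zero : Φ 0 = p
  loc : ∀ᶠ a in 𝓝 (0 : S), Φ a = e.symm (a, 0)
  equi : ∀ a, ∀ η > 0, ∀ᶠ a' in 𝓝 a, ∀ k : ℕ, dist (f^[k] (Φ a)) (f^[k] (Φ a')) ≤ η
  inv : ∀ O : Set M, IsOpen O → p ∈ O → (∀ x, f x ∈ O → x ∈ O) → ∀ a, Φ a ∈ O
  half : ∃ l : ℕ, 1 ≤ l ∧ ∀ a, f^[l] (Φ a) = Φ ((1/2:ℝ) • a)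
  bdd : ∀ α ε : ℝ, Expv f α → ε ≤ α → ∃ R : ℝ, WS f ε p ⊆ Φ '' closedBall 0 R

theorem exists_par [CompactSpace M] [FiniteDimensional ℝ S] {f : M ≃ₜ M} {e : OpenPartialHomeomorph M (S × U)} {p : M} {l : ℕ} (h : HypE f e p l) :
    ∃ Φ : S → M, IsPar f e p Φ := by
  have hfix := h.fix
  have hz0 := h.symm_zero
  have hzt := h.zero_mem
  obtain ⟨hl, hp, hp0, hev⟩ := h
  obtain ⟨R, hR, hball⟩ : ∃ R > 0, ∀ z : S × U, ‖z‖ < R → z ∈ e.target ∧ f^[l] (e.symm z) = e.symm (LL z) := by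
    obtain ⟨r, hr, h⟩ := Metric.eventually_nhds_iff.1 (Filter.Eventually.and (e.open_target.mem_nhds hzt) hev)
    exact ⟨r, hr, fun z hz => h (by simpa [dist_zero_right] using hz)⟩
  have hna : ∀ a : S, ‖((a, 0) : S × U)‖ = ‖a‖ := fun a => by simp [Prod.norm_mk]
  let F : M → M := f^[l]
  let G : M → M := f.symm^[l]
  have hFc : Continuous F := f.continuous.iterate l
  have hGc : Continuous G := f.symm.continuous.iterate l
  have hGF : ∀ x, G (F x) = x := iter_symm_iter f l
  have hFG : ∀ x, F (G x) = x := iter_iter_symm f l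
  have hGFk : ∀ k x, G^[k] (F^[k] x) = x := fun k x => Function.LeftInverse.iterate hGF k x
  have hFGk : ∀ k x, F^[k] (G^[k] x) = x := fun k x => Function.LeftInverse.iterate hFG k x
  let φ : S → M := fun a => e.symm (a, 0)
  have hφ : ∀ a, ‖a‖ < R → F (φ a) = φ ((1/2:ℝ) • a) := by
    intro a ha
    have := (hball (a, 0) (by rwa [hna])).2
    simpa [LL, φ] using this
  have hhalf : ∀ (k : ℕ) (a : S), ‖((1/2:ℝ)^k) • a‖ = ‖a‖ / 2^k := by
    intro k a
    rw [norm_smul, norm_pow, Real.norm_eq_abs, abs_of_pos (by norm_num : (0:ℝ) < 1/2)]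
    field_simp
    rw [mul_right_comm, ← mul_pow]; norm_num
  let ψ : ℕ → S → M := fun k a => G^[k] (φ ((1/2:ℝ)^k • a))
  have hψ1 : ∀ k a, ‖a‖ < 2^k * R → ψ (k+1) a = ψ k a := by
    intro k a ha
    have h1 : ‖((1/2:ℝ)^k) • a‖ < R := by
      rw [hhalf, div_lt_iff₀ (by positivity)]; linarith
    simp only [ψ]
    rw [pow_succ', mul_smul, ← hφ _ h1, Function.iterate_succ_apply, hGF]
  have hψ2 : ∀ k m a, ‖a‖ < 2^k * R → ψ (k+m) a = ψ k a := by
    intro k m a ha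
    induction m with
    | zero => rfl
    | succ m ih =>
      rw [← add_assoc, hψ1 _ a ?_, ih]
      refine ha.trans_le (mul_le_mul_of_nonneg_right (pow_le_pow_right₀ (by norm_num) (by omega)) hR.le)
  have hψ3 : ∀ k m a, ‖a‖ < 2^k * R → ‖a‖ < 2^m * R → ψ k a = ψ m a := by
    intro k m a hk hm
    rw [← hψ2 k m a hk, ← hψ2 m k a hm, add_comm]
  have hexk : ∀ ρ : ℝ, ∃ k : ℕ, ρ < 2^k * R := by
    intro ρ
    obtain ⟨k, hk⟩ := pow_unbounded_of_one_lt (ρ / R) (by norm_num : (1:ℝ) < 2)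
    exact ⟨k, by rwa [div_lt_iff₀ hR] at hk⟩
  choose kk hkk using hexk
  let Φ : S → M := fun a => ψ (kk ‖a‖) a
  have hΦ : ∀ k a, ‖a‖ < 2^k * R → Φ a = ψ k a := fun k a hk => hψ3 _ _ a (hkk _) hk
  have hΦ0 : ∀ a, ‖a‖ < R → Φ a = φ a := by
    intro a ha
    rw [hΦ 0 a (by simpa using ha)]
    simp [ψ]
  have hΦF : ∀ a, F (Φ a) = Φ ((1/2:ℝ) • a) := by
    intro a
    have hk := hkk ‖a‖
    set k := kk ‖a‖
    have h2 : ‖(1/2:ℝ) • a‖ ≤ ‖a‖ := by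
      rw [norm_smul]; norm_num; linarith [norm_nonneg a]
    have hk1 : ‖a‖ < 2^(k+1) * R := hk.trans_le (mul_le_mul_of_nonneg_right (pow_le_pow_right₀ (by norm_num) (by omega)) hR.le)
    rw [hΦ (k+1) a hk1, hΦ k _ (h2.trans_lt hk)]
    simp only [ψ]
    rw [Function.iterate_succ_apply', hFG, pow_succ, mul_smul]
  have hΦFk : ∀ k a, F^[k] (Φ a) = Φ ((1/2:ℝ)^k • a) := by
    intro k
    induction k with
    | zero => intro a; simp
    | succ k ih => intro a; rw [Function.iterate_succ_apply', ih, hΦF, smul_smul, pow_succ']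
  have hcont : Continuous Φ := by
    rw [continuous_iff_continuousAt]
    intro a
    obtain ⟨k, hk⟩ : ∃ k : ℕ, ‖a‖ < 2^k * R := ⟨_, hkk _⟩
    have h1 : ‖((1/2:ℝ)^k) • a‖ < R := by
      rw [hhalf, div_lt_iff₀ (by positivity)]; linarith
    have h2 : ContinuousAt (ψ k) a := by
      refine ContinuousAt.comp (g := G^[k]) (hGc.iterate k).continuousAt ?_
      refine ContinuousAt.comp (g := e.symm) (f := fun a : S => (((1/2:ℝ)^k • a, 0) : S × U)) ?_ (by fun_prop)
      exact e.continuousAt_symm (hball _ (by rwa [hna])).1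
    refine h2.congr ?_
    filter_upwards [(isOpen_lt continuous_norm continuous_const).mem_nhds hk] with b hb
    exact (hΦ k b hb).symm
  have hΦz : Φ 0 = p := by
    rw [hΦ0 0 (by simpa using hR)]
    exact hz0
  refine ⟨Φ, hcont, ?_, hΦz, ?_, ?_, ?_, ⟨l, hl, hΦF⟩, ?_⟩
  · intro a b hab
    obtain ⟨k, hk⟩ : ∃ k : ℕ, max ‖a‖ ‖b‖ < 2^k * R := ⟨_, hkk _⟩
    have hka := (le_max_left _ _).trans_lt hk
    have hkb := (le_max_right _ _).trans_lt hk
    rw [hΦ k a hka, hΦ k b hkb] at hab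
    have h1 : φ ((1/2:ℝ)^k • a) = φ ((1/2:ℝ)^k • b) := by
      have := congrArg F^[k] hab
      simpa only [ψ, hFGk] using this
    have ha : ‖((1/2:ℝ)^k) • a‖ < R := by
      rw [hhalf, div_lt_iff₀ (by positivity)]; linarith
    have hb : ‖((1/2:ℝ)^k) • b‖ < R := by
      rw [hhalf, div_lt_iff₀ (by positivity)]; linarith
    have h2 := e.symm.injOn (hball _ (by rwa [hna])).1 (hball _ (by rwa [hna])).1 h1
    have h3 := congrArg Prod.fst h2
    exact smul_right_injective S (by positivity) h3
  · filter_upwards [ball_mem_nhds (0:S) hR] with a ha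
    exact hΦ0 a (mem_ball_zero_iff.1 ha)
  · intro a η hη
    obtain ⟨δ, hδ, hun⟩ := unif_iter f hη l
    have huc : UniformContinuousOn Φ (closedBall 0 (‖a‖+1)) := 
      (isCompact_closedBall _ _).uniformContinuousOn_of_continuous hcont.continuousOn
    obtain ⟨δ', hδ', h'⟩ := Metric.uniformContinuousOn_iff.1 huc δ hδ
    filter_upwards [ball_mem_nhds a (lt_min hδ' one_pos)] with a' ha' k
    rw [mem_ball, dist_eq_norm] at ha'
    have ha1 := ha'.trans_le (min_le_left _ _)
    have ha2 := ha'.trans_le (min_le_right _ _)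
    have hk : k = k % l + l * (k / l) := (Nat.mod_add_div k l).symm
    rw [hk, Function.iterate_add_apply, Function.iterate_add_apply, Function.iterate_mul]
    change dist (f^[k % l] (F^[k / l] (Φ a))) (f^[k % l] (F^[k / l] (Φ a'))) ≤ η
    rw [hΦFk, hΦFk]
    refine (hun _ _ ?_ _ (Nat.mod_lt _ hl)).le
    have hle : ∀ b : S, ‖(1/2:ℝ)^(k/l) • b‖ ≤ ‖b‖ := by
      intro b
      rw [hhalf]
      exact div_le_self (norm_nonneg _) (one_le_pow₀ (by norm_num))
    have hn' : ‖a'‖ ≤ ‖a‖ + 1 := by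
      have := norm_sub_norm_le a' a
      linarith
    apply h'
    · rw [mem_closedBall_zero_iff]; exact (hle a).trans (by linarith)
    · rw [mem_closedBall_zero_iff]; exact (hle a').trans hn'
    · rw [dist_eq_norm, ← smul_sub]
      refine (hle _).trans_lt ?_
      rwa [norm_sub_rev]
  · intro O hO hpO hinv a
    have ht : Tendsto (fun j : ℕ => Φ ((1/2:ℝ)^j • a)) atTop (𝓝 p) := by
      have h1 : Tendsto (fun j : ℕ => (1/2:ℝ)^j • a) atTop (𝓝 ((0:ℝ) • a)) :=
        (tendsto_pow_atTop_nhds_zero_of_lt_one (by norm_num) (by norm_num)).smul_const a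
      rw [zero_smul] at h1
      have := (hcont.tendsto 0).comp h1
      rwa [hΦz] at this
    obtain ⟨j, hj⟩ := (ht.eventually (hO.mem_nhds hpO)).exists
    rw [← hΦFk] at hj
    have hiter : ∀ k x, f^[k] x ∈ O → x ∈ O := by
      intro k
      induction k with
      | zero => intro x hx; exact hx
      | succ k ih => intro x hx; rw [Function.iterate_succ_apply] at hx; exact hinv _ (ih _ hx)
    have h2 : F^[j] (Φ a) = f^[l * j] (Φ a) := by rw [Function.iterate_mul]
    rw [h2] at hj
    exact hiter _ _ hj
  · intro α ε hf hε
    -- neighbourhood of p in chart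
    have hN : ∀ᶠ y in 𝓝 p, y ∈ e.source ∧ ‖e y‖ < R / 2 := by
      refine Filter.Eventually.and (e.open_source.mem_nhds hp) ?_
      have h1 : Tendsto e (𝓝 p) (𝓝 0) := by
        have := e.continuousAt hp
        rw [ContinuousAt, hp0] at this
        exact this
      filter_upwards [h1 (ball_mem_nhds (0 : S × U) (show 0 < R/2 by positivity))] with y hy
      exact mem_ball_zero_iff.1 hy
    obtain ⟨η, hη, hηe⟩ := Metric.eventually_nhds_iff.1 hN
    obtain ⟨N, hNc⟩ := unif_contract hf hε hη
    refine ⟨2^N * R, fun y hy => ?_⟩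
    have hFp : ∀ j, F^[j] p = p := fun j => Function.iterate_fixed hfix j
    have hclose : ∀ j, N ≤ j → dist (F^[j] y) p < η := by
      intro j hj
      have h1 := hNc p y hy (l * j) (by nlinarith)
      rw [Function.iterate_mul] at h1
      change dist (F^[j] p) (F^[j] y) < η at h1
      rwa [hFp, dist_comm] at h1
    set w := F^[N] y with hw
    have hwj : ∀ j, F^[j] w ∈ e.source ∧ ‖e (F^[j] w)‖ < R / 2 := by
      intro j
      rw [hw, ← Function.iterate_add_apply]
      exact hηe (hclose (j + N) (by omega))
    have hstep : ∀ j, e (F^[j+1] w) = LL (e (F^[j] w)) := by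
      intro j
      obtain ⟨h1, h2⟩ := hwj j
      have h3 := (hball (e (F^[j] w)) (by linarith)).2
      rw [e.left_inv h1] at h3
      rw [Function.iterate_succ_apply']
      change e (f^[l] (F^[j] w)) = _
      rw [h3, e.right_inv]
      refine (hball _ ?_).1
      have hL : ∀ z : S × U, ‖LL z‖ ≤ 2 * ‖z‖ := by
        intro z
        refine max_le ?_ ?_
        · simp only [LL]; rw [norm_smul]; norm_num
          linarith [norm_nonneg z.1, norm_fst_le z]
        · simp only [LL]; rw [norm_smul]; norm_num
          linarith [norm_snd_le z]
      linarith [hL (e (F^[j] w))]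
    have hb : ∀ j, (e (F^[j] w)).2 = (2:ℝ)^j • (e w).2 := by
      intro j
      induction j with
      | zero => simp
      | succ j ih => rw [hstep, LL]; simp only; rw [ih, smul_smul, pow_succ']
    have hb0 : (e w).2 = 0 := by
      by_contra hne
      have hpos : 0 < ‖(e w).2‖ := norm_pos_iff.2 hne
      obtain ⟨j, hj⟩ := pow_unbounded_of_one_lt (R / ‖(e w).2‖) (by norm_num : (1:ℝ) < 2)
      rw [div_lt_iff₀ hpos] at hj
      have h1 := (norm_snd_le (e (F^[j] w))).trans_lt (hwj j).2
      rw [hb j, norm_smul, norm_pow] at h1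
      norm_num at h1
      linarith
    have hwa : w = φ (e w).1 := by
      have h1 := e.left_inv (hwj 0).1
      simp only [Function.iterate_zero, id] at h1
      have h2 : ((e w).1, (0:U)) = e w := by rw [← hb0]
      simp only [φ]
      rw [h2, h1]
    have hwn : ‖(e w).1‖ < R := by
      have := (norm_fst_le (e w)).trans_lt (hwj 0).2
      linarith
    have hwN : ‖(2:ℝ)^N • (e w).1‖ < 2^N * R := by
      rw [norm_smul, norm_pow]; norm_num; exact hwn
    refine ⟨(2:ℝ)^N • (e w).1, mem_closedBall_zero_iff.2 hwN.le, ?_⟩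
    rw [hΦ N _ hwN]
    simp only [ψ]
    rw [smul_smul, ← mul_pow]
    norm_num
    rw [← hwa, hw, hGFk]

end dyn
end HypAux

namespace HypAux
open Set Metric Topology Filter

section dyn2
variable {M : Type*} [MetricSpace M]
variable {S U : Type*} [NormedAddCommGroup S] [NormedSpace ℝ S] [NormedAddCommGroup U] [NormedSpace ℝ U]

/-- Topologically hyperbolic periodic point. -/
def Hyp (f : M ≃ₜ M) (S U : Type*) [NormedAddCommGroup S] [NormedSpace ℝ S] [NormedAddCommGroup U] [NormedSpace ℝ U]
    (p : M) : Prop := ∃ (e : OpenPartialHomeomorph M (S × U)) (l : ℕ), HypE f e p l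

theorem Hyp.symm {f : M ≃ₜ M} {p : M} (h : Hyp f S U p) : Hyp f.symm U S p := by
  obtain ⟨e, l, h⟩ := h
  exact ⟨_, l, h.symm⟩

theorem Hyp.comm_map {f g : M ≃ₜ M} {p : M} (hg : ∀ x, f (g x) = g (f x)) (h : Hyp f S U p) : Hyp f S U (g p) := by
  obtain ⟨e, l, hl, hp, hp0, hev⟩ := h
  refine ⟨g.symm.toOpenPartialHomeomorph.trans e, l, hl, by simpa using hp, by simpa using hp0, ?_⟩
  filter_upwards [hev] with z hz
  have hc : Function.Commute f g := hg
  have h1 : ∀ x, f^[l] (g x) = g (f^[l] x) := (hc.iterate_left l)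
  simp only [OpenPartialHomeomorph.coe_trans_symm, Function.comp_apply, Homeomorph.toOpenPartialHomeomorph_symm_apply, Homeomorph.symm_symm]
  rw [h1, hz]

theorem Hyp.map {f : M ≃ₜ M} {p : M} (h : Hyp f S U p) : Hyp f S U (f p) := h.comm_map fun _ => rfl

theorem Hyp.map_symm {f : M ≃ₜ M} {p : M} (h : Hyp f S U p) : Hyp f S U (f.symm p) := h.comm_map fun _ => by simp

theorem Hyp.transport {S' U' : Type*} [NormedAddCommGroup S'] [NormedSpace ℝ S'] [NormedAddCommGroup U'] [NormedSpace ℝ U'] 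
    {f : M ≃ₜ M} {p : M} (h : Hyp f S U p) (LS : S ≃L[ℝ] S') (LU : U ≃L[ℝ] U') : Hyp f S' U' p := by
  obtain ⟨e, l, hl, hp, hp0, hev⟩ := h
  refine ⟨e.trans (LS.prodCongr LU).toHomeomorph.toOpenPartialHomeomorph, l, hl, by simpa using hp, by simp [hp0], ?_⟩
  have ht : Tendsto (LS.prodCongr LU).symm (𝓝 0) (𝓝 (0 : S × U)) := by
    have := (LS.prodCongr LU).symm.continuous.tendsto 0
    rwa [map_zero] at this
  filter_upwards [ht.eventually hev] with z hz
  change f^[l] (e.symm ((LS.prodCongr LU).symm z)) = e.symm ((LS.prodCongr LU).symm (LL z))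
  rw [hz]
  congr 1
  ext <;> simp [LL]

/-- Connected plaques of the stable manifold inside small open sets. -/
theorem plaque [CompactSpace M] [FiniteDimensional ℝ S] {f : M ≃ₜ M} {α ε δ : ℝ} (hf : Expv f α) (hε0 : 0 < ε) (hε : ε ≤ α) 
    (hδ : ∀ x, ∀ y ∈ WS f ε x, dist x y < δ → y ∈ WS f (ε/2) x)
    {e : OpenPartialHomeomorph M (S × U)} {p : M} {Φ : S → M} (h : IsPar f e p Φ) {B : Set M} (hB : IsOpen B) (hpB : p ∈ B)
    (hBδ : ∀ y ∈ B, dist p y < δ) :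
    ∃ C : Set S, IsOpen C ∧ Bornology.IsBounded C ∧ 0 ∈ C ∧ IsPreconnected C ∧ (∀ a ∈ closure C, Φ a ∈ WS f ε p) ∧
      (∀ a ∈ C, Φ a ∈ B) ∧ (∀ a ∈ closure C, Φ a ∈ B → a ∈ C) := by
  let Ω : Set S := {a | Φ a ∈ WS f ε p ∧ Φ a ∈ B}
  have hΩo : IsOpen Ω := by
    rw [isOpen_iff_mem_nhds]
    intro a ha
    have h1 := hδ p (Φ a) ha.1 (hBδ _ ha.2)
    filter_upwards [h.equi a (ε/2) (by positivity), h.cont.continuousAt.preimage_mem_nhds (hB.mem_nhds ha.2)] with a' h2 h3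
    refine ⟨?_, h3⟩
    have := WS_trans h1 (show Φ a' ∈ WS f (ε/2) (Φ a) from h2)
    rwa [add_halves] at this
  have h0 : (0:S) ∈ Ω := by
    refine ⟨?_, ?_⟩
    · rw [h.zero]; exact mem_WS_self f hε0.le p
    · rwa [h.zero]
  obtain ⟨R, hR⟩ := h.bdd α ε hf hε
  have hsub : connectedComponentIn Ω 0 ⊆ Ω := connectedComponentIn_subset _ _
  have hcl : ∀ a ∈ closure (connectedComponentIn Ω 0), Φ a ∈ WS f ε p := by
    intro a ha
    have : IsClosed {a | Φ a ∈ WS f ε p} := (isClosed_WS_left f ε p).preimage h.cont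
    exact closure_minimal (fun b hb => (hsub hb).1) this ha
  refine ⟨connectedComponentIn Ω 0, hΩo.connectedComponentIn, ?_, mem_connectedComponentIn h0, isPreconnected_connectedComponentIn, hcl, fun a ha => (hsub ha).2, ?_⟩
  · refine (isBounded_closedBall (x := (0:S)) (r := R)).subset ?_
    intro a ha
    obtain ⟨b, hb, hab⟩ := hR (hsub ha).1
    rwa [← h.inj hab]
  · intro a ha haB
    have haΩ : a ∈ Ω := ⟨hcl a ha, haB⟩
    have h1 : IsPreconnected (insert a (connectedComponentIn Ω 0)) :=
      isPreconnected_connectedComponentIn.subset_closure (subset_insert _ _) (insert_subset ha subset_closure)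
    exact h1.subset_connectedComponentIn (mem_insert_of_mem _ (mem_connectedComponentIn h0)) (insert_subset haΩ hsub) (mem_insert _ _)

/-- Rays in the stable manifold exit. -/
theorem ray_exit [CompactSpace M] [FiniteDimensional ℝ S] {f : M ≃ₜ M} {α ε δ δ1 : ℝ} (hf : Expv f α) (hε0 : 0 < ε) (hε : ε ≤ α) 
    (hδ : ∀ x, ∀ y ∈ WS f ε x, dist x y < δ → y ∈ WS f (ε/2) x) (hδ1 : 0 < δ1) (hδ1' : δ1 ≤ δ)
    {e : OpenPartialHomeomorph M (S × U)} {p : M} {Φ : S → M} (h : IsPar f e p Φ) {v : S} (hv : v ≠ 0) :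
    ∃ T > (0:ℝ), (∀ t ∈ Icc 0 T, Φ (t • v) ∈ WS f ε p) ∧ (∀ t ∈ Ico 0 T, dist p (Φ (t • v)) < δ1) ∧ 
      dist p (Φ (T • v)) = δ1 := by
  obtain ⟨C, hCo, hCb, hC0, hCc, hC1, hC2, hC3⟩ := plaque hf hε0 hε hδ h (B := ball p δ1) isOpen_ball (mem_ball_self hδ1)
    (fun y hy => by rw [mem_ball, dist_comm] at hy; linarith)
  have hcv : Continuous (fun t : ℝ => t • v) := by fun_prop
  let A : Set ℝ := {t | 0 ≤ t ∧ t • v ∉ C}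
  have hAc : IsClosed A := isClosed_Ici.inter (hCo.isClosed_compl.preimage hcv)
  have hAn : A.Nonempty := by
    obtain ⟨R, hR⟩ := hCb.subset_closedBall 0
    refine ⟨(|R| + 1) / ‖v‖, by positivity, fun hmem => ?_⟩
    have h1 := mem_closedBall_zero_iff.1 (hR hmem)
    rw [norm_smul, Real.norm_eq_abs, abs_of_nonneg (by positivity), div_mul_cancel₀ _ (norm_ne_zero_iff.2 hv)] at h1
    linarith [le_abs_self R]
  have hAb : BddBelow A := ⟨0, fun t ht => ht.1⟩
  have hT := hAc.csInf_mem hAn hAb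
  set T := sInf A
  have hTlt : ∀ t, 0 ≤ t → t < T → t • v ∈ C := by
    intro t ht htT
    by_contra hcon
    exact absurd (csInf_le hAb (⟨ht, hcon⟩ : t ∈ A)) (not_le.2 htT)
  have hTpos : 0 < T := by
    refine lt_of_le_of_ne hT.1 (fun h0 => hT.2 ?_)
    rw [← h0, zero_smul]; exact hC0
  have hTcl : T • v ∈ closure C := by
    have h1 : T ∈ closure (Ico 0 T) := by rw [closure_Ico hTpos.ne]; exact right_mem_Icc.2 hTpos.le
    exact map_mem_closure (f := fun t : ℝ => t • v) hcv h1 (fun t ht => hTlt t ht.1 ht.2)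
  have hd : ∀ t ∈ Ico 0 T, dist p (Φ (t • v)) < δ1 := by
    intro t ht
    have := hC2 _ (hTlt t ht.1 ht.2)
    rwa [mem_ball, dist_comm] at this
  refine ⟨T, hTpos, ?_, hd, ?_⟩
  · intro t ht
    rcases ht.2.lt_or_eq with h1 | h1
    · exact hC1 _ (subset_closure (hTlt t ht.1 h1))
    · rw [h1]; exact hC1 _ hTcl
  · apply le_antisymm
    · have h1 : T ∈ closure (Ico 0 T) := by rw [closure_Ico hTpos.ne]; exact right_mem_Icc.2 hTpos.le
      have h2 : IsClosed {t : ℝ | dist p (Φ (t • v)) ≤ δ1} := 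
        isClosed_le (continuous_const.dist (h.cont.comp hcv)) continuous_const
      exact closure_minimal (fun t ht => (hd t ht).le) h2 h1
    · by_contra hcon
      rw [not_le] at hcon
      exact hT.2 (hC3 _ hTcl (by rwa [mem_ball, dist_comm]))

/-- The stable set of a periodic point is saturated by local stable sets. -/
theorem IsPar.sat [CompactSpace M] {f : M ≃ₜ M} {α ε : ℝ} (hf : Expv f α) (hα : 0 < α) (hε : ε ≤ α) 
    {e : OpenPartialHomeomorph M (S × U)} {p : M} {Φ : S → M} (h : IsPar f e p Φ) {a : S} {z : M} (hz : z ∈ WS f ε (Φ a)) :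
    z ∈ range Φ := by
  obtain ⟨l, hl, hhalf⟩ := h.half
  have hk : ∀ k b, f^[l * k] (Φ b) = Φ ((1/2:ℝ)^k • b) := by
    intro k
    induction k with
    | zero => intro b; simp
    | succ k ih => intro b; rw [mul_add, add_comm, Function.iterate_add_apply, ih, mul_one, hhalf, smul_smul, pow_succ']
  obtain ⟨N, hN⟩ := unif_contract hf hε (half_pos hα)
  have h0 := h.equi 0 (α/2) (half_pos hα)
  have ht : Tendsto (fun k : ℕ => (1/2:ℝ)^k • a) atTop (𝓝 0) := by
    have := (tendsto_pow_atTop_nhds_zero_of_lt_one (r := (1/2:ℝ)) (by norm_num) (by norm_num)).smul_const a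
    rwa [zero_smul] at this
  obtain ⟨k, hk1, hk2⟩ := ((ht.eventually h0).and (eventually_ge_atTop N)).exists
  have h1 : f^[l * k] z ∈ WS f α p := by
    intro j
    rw [← h.zero]
    have h2 := hk1 j
    have h3 := hN (Φ a) z hz (j + l * k) (by nlinarith)
    rw [Function.iterate_add_apply, Function.iterate_add_apply, hk] at h3
    have := dist_triangle (f^[j] (Φ 0)) (f^[j] (Φ ((1/2:ℝ)^k • a))) (f^[j] (f^[l*k] z))
    linarith
  obtain ⟨R, hR⟩ := h.bdd α α hf le_rfl
  obtain ⟨b, -, hb⟩ := hR h1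
  refine ⟨(2:ℝ)^k • b, ?_⟩
  apply (f.injective.iterate (l * k))
  rw [hk, smul_smul, ← mul_pow]
  norm_num
  exact hb

theorem no_sink [CompactSpace M] [ConnectedSpace M] [LocallyConnectedSpace M] [FiniteDimensional ℝ S] [Nontrivial S] [Subsingleton U] 
    {f : M ≃ₜ M} {α : ℝ} (hf : Expv f α) (hα : 0 < α) {p : M} : ¬ Hyp f S U p := by
  rintro ⟨e, l, he⟩
  obtain ⟨Φ, h⟩ := exists_par he
  have hopen : ∀ b, map Φ (𝓝 b) = 𝓝 (Φ b) := by
    obtain ⟨l, hl, hhalf⟩ := h.half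
    have hk : ∀ k b, f^[l * k] (Φ b) = Φ ((1/2:ℝ)^k • b) := by
      intro k
      induction k with
      | zero => intro b; simp
      | succ k ih => intro b; rw [mul_add, add_comm, Function.iterate_add_apply, ih, mul_one, hhalf, smul_smul, pow_succ']
    intro b
    have ht : Tendsto (fun k : ℕ => (1/2:ℝ)^k • b) atTop (𝓝 0) := by
      have := (tendsto_pow_atTop_nhds_zero_of_lt_one (r := (1/2:ℝ)) (by norm_num) (by norm_num)).smul_const b
      rwa [zero_smul] at this
    let J : S ≃ₜ S × U := 
      { toFun := fun a => (a, 0), invFun := Prod.fst, left_inv := fun a => rfl, 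
        right_inv := fun z => Prod.ext rfl (Subsingleton.elim _ _), continuous_toFun := by fun_prop, continuous_invFun := by fun_prop }
    have hJt : ∀ᶠ a in 𝓝 (0:S), J a ∈ e.target := by
      have : Tendsto J (𝓝 0) (𝓝 (J 0)) := J.continuous.tendsto 0
      exact this.eventually (e.open_target.mem_nhds he.zero_mem)
    obtain ⟨k, hk1, hk2⟩ := (ht.eventually (h.loc.eventually_nhds.and hJt)).exists
    set c := (1/2:ℝ)^k • b with hc
    have hc1 : map Φ (𝓝 c) = 𝓝 (Φ c) := by
      have h1 : Φ =ᶠ[𝓝 c] fun a => e.symm (J a) := hk1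
      rw [Filter.map_congr h1, h1.self_of_nhds]
      change map (e.symm ∘ J) (𝓝 c) = _
      rw [← Filter.map_map, J.map_nhds_eq]
      exact e.symm.map_nhds_eq hk2
    have hkf : ∀ a, Φ a = (f.symm^[l*k]) (Φ ((1/2:ℝ)^k • a)) := by
      intro a; rw [← hk, iter_symm_iter]
    have hΦe : Φ = (f.symm^[l*k]) ∘ Φ ∘ (Homeomorph.smulOfNeZero ((1/2:ℝ)^k) (by positivity)) := by
      funext a; exact hkf a
    have hit : ∀ j x, map (f.symm^[j]) (𝓝 x) = 𝓝 (f.symm^[j] x) := by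
      intro j
      induction j with
      | zero => intro x; simp
      | succ j ih => intro x; rw [Function.iterate_succ', ← Filter.map_map, ih, f.symm.map_nhds_eq]; rfl
    conv_lhs => rw [hΦe]
    rw [← Filter.map_map, ← Filter.map_map, Homeomorph.map_nhds_eq]
    change map _ (map Φ (𝓝 c)) = _
    rw [hc1, hit, ← hkf]
  have hoM : IsOpenMap Φ := IsOpenMap.of_nhds_le fun b => (hopen b).ge
  obtain ⟨δ, hδ0, hδ⟩ := WS_shrink hf le_rfl (half_pos hα)
  have hclosed : IsClosed (range Φ) := by
    rw [← closure_subset_iff_isClosed]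
    intro x hx
    obtain ⟨N, hNn, hNo, hNc, hxN⟩ : ∃ N ⊆ ball x (δ/2), IsOpen N ∧ IsPreconnected N ∧ x ∈ N := by
      obtain ⟨V, hV, hV1, hV2, hV3⟩ := locallyConnectedSpace_iff_subsets_isOpen_isConnected.1 ‹_› x (ball x (δ/2)) (ball_mem_nhds x (by positivity))
      exact ⟨V, hV, hV1, hV3.isPreconnected, hV2⟩
    obtain ⟨y, hyN, a, rfl⟩ := mem_closure_iff.1 hx N hNo hxN
    have hdN : ∀ z ∈ N, dist (Φ a) z < δ := by
      intro z hz
      have h1 := hNn hz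
      have h2 := hNn hyN
      rw [mem_ball] at h1 h2
      have := dist_triangle_right (Φ a) z x
      linarith
    have hsub : N ⊆ WS f α (Φ a) := by
      have hop : IsOpen (N ∩ WS f α (Φ a)) := by
        rw [isOpen_iff_mem_nhds]
        rintro z ⟨hzN, hz⟩
        obtain ⟨b, rfl⟩ := h.sat hf hα le_rfl hz
        have h1 := hδ _ _ hz (hdN _ hzN)
        rw [← hopen]
        refine Filter.inter_mem ?_ ?_
        · rw [hopen]; exact hNo.mem_nhds hzN
        · rw [Filter.mem_map]
          filter_upwards [h.equi b (α/2) (half_pos hα)] with b' hb'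
          have := WS_trans h1 (show Φ b' ∈ WS f (α/2) (Φ b) from hb')
          rwa [add_halves] at this
      by_contra hcon
      obtain ⟨z, hzN, hz⟩ := not_subset.1 hcon
      obtain ⟨w, hw1, hw2, hw3⟩ := hNc _ _ hop (isClosed_WS_left f α (Φ a)).isOpen_compl 
        (fun w hw => by by_cases hw' : w ∈ WS f α (Φ a) <;> [exact Or.inl ⟨hw, hw'⟩; exact Or.inr hw'])
        ⟨Φ a, hyN, hyN, mem_WS_self f hα.le _⟩ ⟨z, hzN, hz⟩
      exact hw3 hw2.2
    exact h.sat hf hα le_rfl (hsub hxN)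
  have huniv : range Φ = univ := IsClopen.eq_univ ⟨hclosed, hoM.isOpen_range⟩ ⟨_, mem_range_self 0⟩
  let H := (Equiv.ofBijective Φ ⟨h.inj, range_eq_univ.1 huniv⟩).toHomeomorphOfContinuousOpen h.cont hoM
  have hcs : CompactSpace S := H.symm.compactSpace
  exact (NormedSpace.noncompactSpace ℝ S).noncompact_univ hcs.isCompact_univ

end dyn2
end HypAux

namespace HypAux
open Set Metric Topology Filter

section dyn3
variable {M : Type*} [MetricSpace M]

theorem deg_hyp {S U Y : Type*} [NormedAddCommGroup S] [NormedSpace ℝ S] [FiniteDimensional ℝ S]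
    [NormedAddCommGroup U] [NormedSpace ℝ U] [FiniteDimensional ℝ U]
    [NormedAddCommGroup Y] [NormedSpace ℝ Y] (hd : 0 < Module.finrank ℝ (S × U))
    {f : M ≃ₜ M} {α ε : ℝ} (hf : Expv f α) (hε0 : 0 < ε) (hε : 2 * ε ≤ α)
    {e : OpenPartialHomeomorph M (S × U)} {q : M} {l : ℕ} (he : HypE f e q l) {Φs : S → M} {Φu : U → M}
    (hs : IsPar f e q Φs) (hu : IsPar f.symm (swapE e) q Φu) (χ : OpenPartialHomeomorph M Y)
    {C : Set S} {D : Set U} (hCo : IsOpen C) (hDo : IsOpen D) (hCb : Bornology.IsBounded C) (hDb : Bornology.IsBounded D)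
    (hC0 : 0 ∈ C) (hD0 : 0 ∈ D) (hCχ : ∀ a ∈ closure C, Φs a ∈ χ.source) (hDχ : ∀ a ∈ closure D, Φu a ∈ χ.source)
    (hCW : ∀ a ∈ closure C, Φs a ∈ WS f ε q) (hDW : ∀ a ∈ closure D, Φu a ∈ WS f.symm ε q)
    (G : S × U → Y) (hG : ContinuousOn G (closure C ×ˢ closure D)) (hG0 : ∀ x ∈ closure C, ∀ y ∈ closure D, G (x,y) ≠ 0)
    (hH : ∀ x ∈ closure C, ∀ y ∈ closure D, (x ∉ C ∨ y ∉ D) → ∀ t ∈ Icc (0:ℝ) 1, 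
      (1 - t) • (χ (Φu y) - χ (Φs x)) + t • G (x, y) ≠ 0) : False := by
  have hqχ : q ∈ χ.source := by rw [← hs.zero]; exact hCχ 0 (subset_closure hC0)
  have hcl : closure (C ×ˢ D) = closure C ×ˢ closure D := closure_prod_eq
  have hopen : IsOpen (C ×ˢ D) := hCo.prod hDo
  have hF : ContinuousOn (fun z : S × U => χ (Φu z.2) - χ (Φs z.1)) (closure C ×ˢ closure D) := by
    refine ContinuousOn.sub ?_ ?_
    · exact χ.continuousOn.comp (hu.cont.comp continuous_snd).continuousOn (fun z hz => hDχ _ hz.2)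
    · exact χ.continuousOn.comp (hs.cont.comp continuous_fst).continuousOn (fun z hz => hCχ _ hz.1)
  have hfr : ∀ z ∈ frontier (C ×ˢ D), z.1 ∈ closure C ∧ z.2 ∈ closure D ∧ (z.1 ∉ C ∨ z.2 ∉ D) := by
    intro z hz
    rw [hopen.frontier_eq, hcl] at hz
    refine ⟨hz.1.1, hz.1.2, ?_⟩
    by_contra hcon
    push Not at hcon
    exact hz.2 hcon
  refine deg_split hd (F := fun z : S × U => χ (Φu z.2) - χ (Φs z.1)) (G := G) 
    (H := fun w => (1 - w.2) • (χ (Φu w.1.2) - χ (Φs w.1.1)) + w.2 • G w.1) hopen (hCb.prod hDb) ⟨hC0, hD0⟩ (by rwa [hcl]) (by rwa [hcl]) ?_ ?_ ?_ ?_ ?_ ?_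
    (e.symm.trans χ) ?_ ?_
  · have hsub : ∀ w ∈ frontier (C ×ˢ D) ×ˢ Icc (0:ℝ) 1, w.1 ∈ closure C ×ˢ closure D := 
      fun w hw => ⟨(hfr _ hw.1).1, (hfr _ hw.1).2.1⟩
    have h1 := hF.comp (f := fun w : (S × U) × ℝ => w.1) continuous_fst.continuousOn hsub
    have h2 := hG.comp (f := fun w : (S × U) × ℝ => w.1) continuous_fst.continuousOn hsub
    refine ContinuousOn.add (ContinuousOn.smul (by fun_prop) h1) (ContinuousOn.smul (by fun_prop) h2)
  · intro x _; simp
  · intro x _; simp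
  · intro z hz t ht
    obtain ⟨h1, h2, h3⟩ := hfr z hz
    exact hH z.1 h1 z.2 h2 h3 t ht
  · intro z hz
    rw [hcl] at hz
    exact hG0 z.1 hz.1 z.2 hz.2
  · intro z hz hz0 hF0
    rw [hcl] at hz
    apply hz0
    have h1 : Φu z.2 = Φs z.1 := χ.injOn (hDχ _ hz.2) (hCχ _ hz.1) (sub_eq_zero.1 hF0)
    have h2 : Φs z.1 = q := WS_unique hf hε (x := q) (y := q) (hCW _ hz.1) (mem_WS_self f hε0.le q) (h1 ▸ hDW _ hz.2) (mem_WS_self _ hε0.le q)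
    have h3 : z.1 = 0 := hs.inj (by rw [h2, hs.zero])
    have h4 : z.2 = 0 := hu.inj (by rw [h1, h2, hu.zero])
    exact Prod.ext h3 h4
  · simp only [OpenPartialHomeomorph.trans_source, OpenPartialHomeomorph.symm_source, mem_inter_iff, mem_preimage]
    exact ⟨he.zero_mem, by rw [he.symm_zero]; exact hqχ⟩
  · have h1 : ∀ᶠ z : S × U in 𝓝 0, Φs z.1 = e.symm (z.1, 0) := (continuous_fst.tendsto (0 : S × U)).eventually hs.loc
    have h2 : ∀ᶠ z : S × U in 𝓝 0, Φu z.2 = (swapE e).symm (z.2, 0) := (continuous_snd.tendsto (0 : S × U)).eventually hu.loc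
    filter_upwards [h1, h2] with z h1 h2
    rw [h1, h2, swapE_symm]
    rfl

theorem ws_axis [CompactSpace M] {S U : Type*} [NormedAddCommGroup S] [NormedSpace ℝ S] [FiniteDimensional ℝ S]
    [NormedAddCommGroup U] [NormedSpace ℝ U] {f : M ≃ₜ M} {α ε : ℝ} (hf : Expv f α) (hε : ε ≤ α)
    {e : OpenPartialHomeomorph M (S × U)} {p : M} {l : ℕ} (he : HypE f e p l) :
    ∀ᶠ y in 𝓝 p, y ∈ WS f ε p → (e y).2 = 0 := by
  obtain ⟨Φ, h⟩ := exists_par he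
  obtain ⟨R, hR⟩ := h.bdd α ε hf hε
  have ht : Tendsto (fun a : S => ((a, 0) : S × U)) (𝓝 0) (𝓝 0) := by
    have : Continuous (fun a : S => ((a, 0) : S × U)) := by fun_prop
    exact this.tendsto 0
  obtain ⟨O, hO, hOo, h0O⟩ := _root_.eventually_nhds_iff.1 (h.loc.and (ht.eventually (e.open_target.mem_nhds he.zero_mem)))
  have hK : IsCompact (Φ '' (closedBall 0 R \ O)) := ((isCompact_closedBall _ _).diff hOo).image h.cont
  have hp : p ∉ Φ '' (closedBall 0 R \ O) := by
    rintro ⟨a, ha, hap⟩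
    have : a = 0 := h.inj (by rw [hap, h.zero])
    exact ha.2 (this ▸ h0O)
  filter_upwards [hK.isClosed.isOpen_compl.mem_nhds hp] with y hy hyW
  obtain ⟨a, ha, rfl⟩ := hR hyW
  have haO : a ∈ O := by
    by_contra hcon
    exact hy ⟨a, ⟨ha, hcon⟩, rfl⟩
  obtain ⟨h1, h2⟩ := hO a haO
  rw [h1, e.right_inv h2]

/-- If `K` is compact and misses the local stable set of `p`, it misses that of nearby points. -/
theorem ws_miss [CompactSpace M] (f : M ≃ₜ M) (ε : ℝ) {p : M} {K : Set M} (hK : IsCompact K) (h : ∀ y ∈ K, y ∉ WS f ε p) :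
    ∀ᶠ q in 𝓝 p, ∀ y ∈ K, y ∉ WS f ε q := by
  have hc : IsClosed ({z : M × M | z.2 ∈ WS f ε z.1} ∩ Prod.snd ⁻¹' K) := (isClosed_WS f ε).inter (hK.isClosed.preimage continuous_snd)
  have h1 : IsClosed (Prod.fst '' ({z : M × M | z.2 ∈ WS f ε z.1} ∩ Prod.snd ⁻¹' K)) := (hc.isCompact.image continuous_fst).isClosed
  have h2 : p ∉ (Prod.fst '' ({z : M × M | z.2 ∈ WS f ε z.1} ∩ Prod.snd ⁻¹' K)) := by
    rintro ⟨⟨a, b⟩, ⟨hz1, hz2⟩, rfl⟩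
    exact h b hz2 hz1
  filter_upwards [h1.isOpen_compl.mem_nhds h2] with q hq y hy hyq
  exact hq ⟨(q, y), ⟨hyq, hy⟩, rfl⟩

theorem approx_miss {X Y : Type*} [NormedAddCommGroup X] [NormedSpace ℝ X] [FiniteDimensional ℝ X] [NormedAddCommGroup Y] [NormedSpace ℝ Y] [FiniteDimensional ℝ Y]
    (hd : Module.finrank ℝ X < Module.finrank ℝ Y) {g : X → Y} {K : Set X} (hK : IsClosed K) (hg : ContinuousOn g K) {η : ℝ} (hη : 0 < η) :
    ∃ g' : X → Y, Continuous g' ∧ (∀ x, g' x ≠ 0) ∧ ∀ x ∈ K, ‖g x - g' x‖ ≤ η := by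
  obtain ⟨g1, hg1, hg1e⟩ := tietze hK hg
  obtain ⟨g2, hg2, hg2a, -⟩ := hg1.exists_contDiff_approx 1 (ε := fun _ => η/2) continuous_const (fun _ => by positivity)
  obtain ⟨c, hc1, hc2⟩ := (ContDiff.dense_compl_range_of_finrank_lt_finrank (by exact_mod_cast hg2) hd).exists_mem_open isOpen_ball ⟨0, mem_ball_self (half_pos hη)⟩
  refine ⟨fun x => g2 x - c, hg2.continuous.sub continuous_const, fun x hx => hc1 ⟨x, sub_eq_zero.1 hx⟩, fun x hx => ?_⟩
  have h1 := hg2a x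
  rw [hg1e hx, dist_eq_norm, norm_sub_rev] at h1
  rw [mem_ball_zero_iff] at hc2
  calc ‖g x - (g2 x - c)‖ = ‖(g x - g2 x) + c‖ := by congr 1; abel
    _ ≤ ‖g x - g2 x‖ + ‖c‖ := norm_add_le _ _
    _ ≤ η := by linarith

theorem norm_smul_le_self {V : Type*} [NormedAddCommGroup V] [NormedSpace ℝ V] (v : V) (s : ℝ) (hs : s ∈ Icc (0:ℝ) 1) : ‖s • v‖ ≤ ‖v‖ := by
  rw [norm_smul, Real.norm_eq_abs, abs_of_nonneg hs.1]
  exact mul_le_of_le_one_left (norm_nonneg _) hs.2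

theorem index_semi [CompactSpace M] {S U S' U' : Type*} [NormedAddCommGroup S] [NormedSpace ℝ S] [FiniteDimensional ℝ S]
    [NormedAddCommGroup U] [NormedSpace ℝ U] [FiniteDimensional ℝ U] [NormedAddCommGroup S'] [NormedSpace ℝ S'] [FiniteDimensional ℝ S']
    [NormedAddCommGroup U'] [NormedSpace ℝ U'] [FiniteDimensional ℝ U'] (hd : 0 < Module.finrank ℝ (S' × U'))
    (hd' : Module.finrank ℝ S' < Module.finrank ℝ S)
    {f : M ≃ₜ M} {α : ℝ} (hf : Expv f α) (hα : 0 < α) {p : M} (hp : Hyp f S U p) : ∀ᶠ q in 𝓝 p, ¬ Hyp f S' U' q := by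
  obtain ⟨e, l, he⟩ := hp
  set ε := α / 2 with hεdef
  have hε0 : 0 < ε := by positivity
  have hεα : ε ≤ α := by linarith
  obtain ⟨δs, hδs0, hδs⟩ := WS_shrink hf hεα (half_pos hε0)
  obtain ⟨δu, hδu0, hδu⟩ := WS_shrink hf.symm hεα (half_pos hε0)
  have hax1 := ws_axis hf hεα he
  have hax2 := ws_axis hf.symm hεα he.symm
  set δ := min δs δu
  have hδ : 0 < δ := lt_min hδs0 hδu0
  have hcs : Tendsto e.symm (𝓝 0) (𝓝 p) := by
    have := e.continuousAt_symm he.zero_mem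
    rwa [ContinuousAt, he.symm_zero] at this
  have hnear := hcs.eventually ((hax1.and hax2).and (ball_mem_nhds p (half_pos hδ)))
  obtain ⟨R, hR0, hR⟩ : ∃ R > 0, ∀ z : S × U, ‖z‖ ≤ R → z ∈ e.target ∧ (e.symm z ∈ WS f ε p → z.2 = 0) ∧ (e.symm z ∈ WS f.symm ε p → z.1 = 0) ∧ dist (e.symm z) p < δ/2 := by
    obtain ⟨r, hr, h⟩ := Metric.eventually_nhds_iff.1 (Filter.Eventually.and (e.open_target.mem_nhds he.zero_mem) hnear)
    refine ⟨r/2, by positivity, fun z hz => ?_⟩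
    obtain ⟨h1, ⟨h2, h3⟩, h4⟩ := h (y := z) (by rw [dist_zero_right]; linarith)
    rw [e.right_inv h1] at h2
    refine ⟨h1, h2, fun h => ?_, h4⟩
    have := h3 h
    simpa [swapE, e.right_inv h1] using this
  have hcomp : ∀ K : Set (S × U), IsClosed K → K ⊆ closedBall 0 R → IsCompact (e.symm '' K) := by
    intro K hK hKR
    refine ((isCompact_closedBall (0 : S × U) R).of_isClosed_subset hK hKR).image_of_continuousOn (e.continuousOn_symm.mono ?_)
    intro z hz
    exact (hR z (mem_closedBall_zero_iff.1 (hKR hz))).1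
  let K1 : Set (S × U) := closedBall 0 R ∩ {z | R/2 ≤ ‖z.2‖}
  let K2 : Set (S × U) := closedBall 0 R ∩ {z | R/2 ≤ ‖z.1‖}
  have hK1 : IsCompact (e.symm '' K1) := hcomp _ (isClosed_closedBall.inter (isClosed_le continuous_const (by fun_prop))) inter_subset_left
  have hK2 : IsCompact (e.symm '' K2) := hcomp _ (isClosed_closedBall.inter (isClosed_le continuous_const (by fun_prop))) inter_subset_left
  have hm1 := ws_miss f ε (p := p) hK1 (by
    rintro _ ⟨z, ⟨hz1, hz2⟩, rfl⟩ hw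
    have := (hR z (mem_closedBall_zero_iff.1 hz1)).2.1 hw
    rw [mem_setOf_eq, this, norm_zero] at hz2
    linarith)
  have hm2 := ws_miss f.symm ε (p := p) hK2 (by
    rintro _ ⟨z, ⟨hz1, hz2⟩, rfl⟩ hw
    have := (hR z (mem_closedBall_zero_iff.1 hz1)).2.2.1 hw
    rw [mem_setOf_eq, this, norm_zero] at hz2
    linarith)
  let B : Set M := e.source ∩ e ⁻¹' ball 0 R
  have hBo : IsOpen B := e.isOpen_inter_preimage isOpen_ball
  have hpB : p ∈ B := ⟨he.2.1, by rw [mem_preimage, he.2.2.1]; exact mem_ball_self hR0⟩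
  have hBcl : closure B ⊆ e.symm '' closedBall 0 R := by
    refine closure_minimal ?_ (hcomp _ isClosed_closedBall subset_rfl).isClosed
    rintro y ⟨hy1, hy2⟩
    exact ⟨e y, ball_subset_closedBall hy2, e.left_inv hy1⟩
  filter_upwards [hm1, hm2, hBo.mem_nhds hpB, ball_mem_nhds p (half_pos hδ)] with q hq1 hq2 hqB hqp
  rintro ⟨e', l', he'⟩
  obtain ⟨Φs, hs⟩ := exists_par he'
  obtain ⟨Φu, hu⟩ := exists_par he'.symm
  have hdB : ∀ y ∈ B, dist q y < δ := by
    intro y hy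
    obtain ⟨z, hz, rfl⟩ := hBcl (subset_closure hy)
    have h1 := (hR z (mem_closedBall_zero_iff.1 hz)).2.2.2
    rw [mem_ball] at hqp
    have := dist_triangle_right q (e.symm z) p
    linarith
  obtain ⟨C, hCo, hCb, hC0, -, hC1, hC2, hC3⟩ := plaque hf hε0 hεα hδs hs hBo hqB (fun y hy => (hdB y hy).trans_le (min_le_left _ _))
  obtain ⟨D, hDo, hDb, hD0, -, hD1, hD2, hD3⟩ := plaque hf.symm hε0 hεα hδu hu hBo hqB (fun y hy => (hdB y hy).trans_le (min_le_right _ _))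
  have hCB : ∀ a ∈ closure C, Φs a ∈ e.symm '' closedBall 0 R := fun a ha => hBcl (map_mem_closure hs.cont ha hC2)
  have hDB : ∀ a ∈ closure D, Φu a ∈ e.symm '' closedBall 0 R := fun a ha => hBcl (map_mem_closure hu.cont ha hD2)
  have key : ∀ y ∈ e.symm '' closedBall 0 R, y ∈ e.source ∧ ‖(e y).1‖ ≤ R ∧ ‖(e y).2‖ ≤ R ∧ (y ∈ WS f ε q → ‖(e y).2‖ < R/2 ∧ (y ∉ B → ‖(e y).1‖ = R)) ∧ 
      (y ∈ WS f.symm ε q → ‖(e y).1‖ < R/2 ∧ (y ∉ B → ‖(e y).2‖ = R)) := by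
    rintro _ ⟨z, hz, rfl⟩
    have hzt := (hR z (mem_closedBall_zero_iff.1 hz)).1
    have hzs := e.map_target hzt
    rw [e.right_inv hzt]
    have hzn := mem_closedBall_zero_iff.1 hz
    have hn1 := (norm_fst_le z).trans hzn
    have hn2 := (norm_snd_le z).trans hzn
    have hnB : e.symm z ∉ B → R ≤ ‖z‖ := by
      intro h
      by_contra hcon
      refine h ⟨hzs, ?_⟩
      rw [mem_preimage, e.right_inv hzt, mem_ball_zero_iff]
      exact not_le.1 hcon
    refine ⟨hzs, hn1, hn2, fun h => ?_, fun h => ?_⟩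
    · have h2 : ‖z.2‖ < R/2 := by
        by_contra hcon
        exact hq1 _ ⟨z, ⟨hz, not_lt.1 hcon⟩, rfl⟩ h
      refine ⟨h2, fun hb => le_antisymm hn1 ?_⟩
      rcases le_max_iff.1 (hnB hb) with h3 | h3
      · exact h3
      · linarith
    · have h2 : ‖z.1‖ < R/2 := by
        by_contra hcon
        exact hq2 _ ⟨z, ⟨hz, not_lt.1 hcon⟩, rfl⟩ h
      refine ⟨h2, fun hb => le_antisymm hn2 ?_⟩
      rcases le_max_iff.1 (hnB hb) with h3 | h3
      · linarith
      · exact h3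
  have hcontC : ContinuousOn (fun a => (e (Φs a)).1) (closure C) := 
    continuous_fst.comp_continuousOn (e.continuousOn.comp hs.cont.continuousOn (fun a ha => (key _ (hCB a ha)).1))
  have hcontD : ContinuousOn (fun a => (e (Φu a)).2) (closure D) := 
    continuous_snd.comp_continuousOn (e.continuousOn.comp hu.cont.continuousOn (fun a ha => (key _ (hDB a ha)).1))
  obtain ⟨g, hgc, hg0, hga⟩ := approx_miss hd' isClosed_closure hcontC (show 0 < R/4 by positivity)
  refine deg_hyp hd hf hε0 (by linarith) he' hs hu e hCo hDo hCb hDb hC0 hD0 (fun a ha => (key _ (hCB a ha)).1) (fun a ha => (key _ (hDB a ha)).1)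
    hC1 hD1 (fun z => (- g z.1, (e (Φu z.2)).2)) ?_ ?_ ?_
  · refine ContinuousOn.prodMk (hgc.comp continuous_fst).neg.continuousOn (hcontD.comp continuous_snd.continuousOn (fun z hz => hz.2))
  · intro x _ y _ h
    exact hg0 x (neg_eq_zero.1 (congrArg Prod.fst h))
  · intro x hx y hy hxy t ht h
    have h1 := congrArg Prod.fst h
    have h2 := congrArg Prod.snd h
    simp only [Prod.fst_add, Prod.smul_fst, Prod.fst_sub, Prod.snd_add, Prod.smul_snd, Prod.snd_sub, Prod.fst_zero, Prod.snd_zero] at h1 h2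
    obtain ⟨-, hx1, hx2, hx3, -⟩ := key _ (hCB x hx)
    obtain ⟨-, hy1, hy2, -, hy3⟩ := key _ (hDB y hy)
    obtain ⟨hx4, hx5⟩ := hx3 (hC1 x hx)
    obtain ⟨hy4, hy5⟩ := hy3 (hD1 y hy)
    have ht' : 1 - t ∈ Icc (0:ℝ) 1 := ⟨by linarith [ht.2], by linarith [ht.1]⟩
    rcases hxy with hxC | hyD
    · have h3 := hx5 (fun hb => hxC (hC3 x hx hb))
      have h4 : (e (Φs x)).1 = (1-t) • (e (Φu y)).1 + t • ((e (Φs x)).1 - g x) := by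
        rw [← sub_eq_zero, ← neg_eq_zero, ← h1]
        module
      have h5 := norm_add_le ((1-t) • (e (Φu y)).1) (t • ((e (Φs x)).1 - g x))
      rw [← h4] at h5
      have h6 := norm_smul_le_self (e (Φu y)).1 _ ht'
      have h7 := norm_smul_le_self ((e (Φs x)).1 - g x) _ ht
      have h8 := hga x hx
      linarith
    · have h3 := hy5 (fun hb => hyD (hD3 y hy hb))
      have h4 : (e (Φu y)).2 = (1-t) • (e (Φs x)).2 := by
        rw [← sub_eq_zero, ← h2]
        module
      have h6 := norm_smul_le_self (e (Φs x)).2 _ ht'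
      rw [← h4] at h6
      linarith

end dyn3
end HypAux

namespace HypAux
open Set Metric Topology Filter

section ctx
variable {M : Type*} [MetricSpace M]

theorem freq_pigeon {ι κ : Type*} [Finite ι] {F : Filter κ} {P : κ → ι → Prop} (h : ∃ᶠ k in F, ∃ i, P k i) :
    ∃ i, ∃ᶠ k in F, P k i := by
  by_contra hcon
  push Not at hcon
  refine h ?_
  have h2 : ∀ i, ∀ᶠ k in F, ¬ P k i := hcon
  filter_upwards [eventually_all.2 h2] with k hk
  push Not
  exact hk

theorem proj_miss {X Y : Type*} [TopologicalSpace X] [TopologicalSpace Y] [CompactSpace Y] {Z : Set (X × Y)} (hZ : IsClosed Z) {x : X} 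
    (h : ∀ y, (x, y) ∉ Z) : ∀ᶠ u in 𝓝 x, ∀ y, (u, y) ∉ Z := by
  have h1 := isClosedMap_fst_of_compactSpace (X := X) (Y := Y) Z hZ
  have h2 : x ∉ Prod.fst '' Z := by
    rintro ⟨⟨a, b⟩, hab, rfl⟩
    exact h b hab
  filter_upwards [h1.isOpen_compl.mem_nhds h2] with u hu y hy
  exact hu ⟨(u, y), hy, rfl⟩

theorem sep_nbhd [LocallyConnectedSpace M] (f : M ≃ₜ M) {ε : ℝ} {x y : M} (hy : y ∉ WS f ε x) {B : Set M} (hB : IsOpen B) (hyB : y ∈ B) :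
    ∃ β : Set M, IsOpen β ∧ IsPreconnected β ∧ y ∈ β ∧ β ⊆ B ∧ ∀ᶠ p in 𝓝 x, ∀ v ∈ β, v ∉ WS f ε p := by
  have h1 : {z : M × M | z.2 ∈ WS f ε z.1}ᶜ ∈ 𝓝 (x, y) := (isClosed_WS f ε).isOpen_compl.mem_nhds hy
  rw [nhds_prod_eq, mem_prod_iff] at h1
  obtain ⟨A, hA, V, hV, hAV⟩ := h1
  obtain ⟨β, hβ, hβo, hyβ, hβc⟩ := locallyConnectedSpace_iff_subsets_isOpen_isConnected.1 ‹_› y (V ∩ B) (inter_mem hV (hB.mem_nhds hyB))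
  refine ⟨β, hβo, hβc.isPreconnected, hyβ, hβ.trans inter_subset_right, ?_⟩
  filter_upwards [hA] with p hp v hv
  exact hAV (mk_mem_prod hp (hβ hv).1)

/-- Local situation near a point of the frontier between the two kinds of periodic points. -/
structure Ctx (f : M ≃ₜ M) (α ε δ1 : ℝ) (Ps Qs B N0 : Set M) (Db K : M → Set M) (ep em : M → M) : Prop where
  exp : Expv f α
  ε0 : 0 < ε
  εα : 4 * ε ≤ α
  δ0 : 0 < δ1
  cov : closure Ps ∪ closure Qs = univ
  Pstab : ∀ p ∈ Ps, ∀ y ∈ WS f ε p, y ∉ closure Qs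
  Punst : ∀ p ∈ Ps, ∀ y ∈ WS f.symm (2 * ε) p, y ∉ closure Qs
  Qunst : ∀ q ∈ Qs, ∀ y ∈ WS f.symm ε q, y ∉ closure Ps
  Bo : IsOpen B
  Bc : IsPreconnected B
  N0o : IsOpen N0
  N0B : ∀ x ∈ N0, closedBall x δ1 ⊆ B
  Dcpt : ∀ p ∈ Ps, p ∈ N0 → IsCompact (Db p)
  Dws : ∀ p ∈ Ps, p ∈ N0 → Db p ⊆ WS f ε p
  pD : ∀ p ∈ Ps, p ∈ N0 → p ∈ Db p
  Dconn : ∀ p ∈ Ps, p ∈ N0 → IsPreconnected (Db p ∩ B)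
  Kconn : ∀ p ∈ Ps ∪ Qs, p ∈ N0 → IsPreconnected (K p)
  Kmem : ∀ p ∈ Ps ∪ Qs, p ∈ N0 → p ∈ K p
  Kws : ∀ p ∈ Ps ∪ Qs, p ∈ N0 → K p ⊆ WS f.symm ε p ∩ closedBall p δ1
  Kep : ∀ p ∈ Ps ∪ Qs, p ∈ N0 → ep p ∈ K p ∧ dist p (ep p) = δ1
  Kem : ∀ p ∈ Ps, p ∈ N0 → em p ∈ K p ∧ dist p (em p) = δ1
  sep : ∀ p ∈ Ps, p ∈ N0 → em p ∉ connectedComponentIn (B \ Db p) (ep p)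

variable {f : M ≃ₜ M} {α ε δ1 : ℝ} {Ps Qs B N0 : Set M} {Db K : M → Set M} {ep em : M → M}

theorem conn_join {X : Type*} [TopologicalSpace X] {F β : Set X} (hβ : IsPreconnected β) (hβF : β ⊆ F) {u v : X} (hu : u ∈ β) (hv : v ∈ β) : 
    v ∈ connectedComponentIn F u := hβ.subset_connectedComponentIn hu hβF hv

theorem conn_join' {X : Type*} [TopologicalSpace X] {F β : Set X} (hβ : IsPreconnected β) (hβF : β ⊆ F) {c u v : X} (hu : u ∈ β) (hv : v ∈ β) 
    (huc : u ∈ connectedComponentIn F c) : v ∈ connectedComponentIn F c := by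
  rw [connectedComponentIn_eq huc]
  exact conn_join hβ hβF hu hv

theorem Ctx.inB (h : Ctx f α ε δ1 Ps Qs B N0 Db K ep em) {x : M} (hx : x ∈ N0) : x ∈ B :=
  h.N0B x hx (mem_closedBall_self h.δ0.le)

/-- points seen from the side of `c`. -/
def Xset (Ps Qs B N0 : Set M) (Db : M → Set M) (c : M) (ρ : ℝ) : Set M :=
  {x | ∀ η > 0, ∃ p ∈ Ps, p ∈ N0 ∧ dist p x < η ∧ c ∈ B \ Db p ∧ ∀ q ∈ Qs, q ∈ N0 → dist q x < ρ → 
    q ∉ connectedComponentIn (B \ Db p) c}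

theorem closure_Xset (Ps Qs B N0 : Set M) (Db : M → Set M) (c : M) {ρ : ℝ} (hρ : 0 < ρ) :
    closure (Xset Ps Qs B N0 Db c ρ) ⊆ Xset Ps Qs B N0 Db c (ρ/2) := by
  intro x hx η hη
  obtain ⟨y, hy, hyx⟩ := Metric.mem_closure_iff.1 hx (min (η/2) (ρ/2)) (by positivity)
  obtain ⟨p, hp, hpN, hpy, hc, hq⟩ := hy (η/2) (by positivity)
  refine ⟨p, hp, hpN, ?_, hc, fun q hq1 hqN hqx => hq q hq1 hqN ?_⟩
  · have := dist_triangle p y x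
    have h2 := hyx.trans_le (min_le_left _ _)
    rw [dist_comm] at h2
    linarith
  · have := dist_triangle q x y
    have h2 := hyx.trans_le (min_le_right _ _)
    linarith

theorem Ctx.core [CompactSpace M] [LocallyConnectedSpace M] (h : Ctx f α ε δ1 Ps Qs B N0 Db K ep em) 
    {P' 𝒟 : Set M} (hP' : P' ⊆ Ps) (hP'd : Ps ⊆ closure P') (h𝒟 : Dense 𝒟) {x : M} (hxN : x ∈ N0) (hxP : x ∈ closure Ps) (hxQ : x ∈ closure Qs) :
    ∃ c ∈ 𝒟, ∃ ρ > 0, ∃ p0 ∈ P', p0 ∈ N0 ∧ x ∈ Xset Ps Qs B N0 Db c ρ ∧ x ∈ closure {p ∈ Ps ∩ N0 | (K p ∩ Db p0).Nonempty} := by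
  have hFne : (𝓝[P' ∩ N0] x).NeBot := by
    rw [← mem_closure_iff_nhdsWithin_neBot, inter_comm]
    have h1 : x ∈ closure P' := by
      have := closure_mono hP'd
      rw [closure_closure] at this
      exact this hxP
    exact h.N0o.inter_closure ⟨hxN, h1⟩
  set F := 𝓝[P' ∩ N0] x with hF
  have hFm : ∀ᶠ p in F, p ∈ P' ∩ N0 := self_mem_nhdsWithin
  have hFx : F ≤ 𝓝 x := nhdsWithin_le_nhds
  let Γ : Set M := {y | y ∈ WS f.symm ε x ∧ dist x y = δ1}
  have hΓc : IsCompact Γ := ((isClosed_WS_left f.symm ε x).inter (isClosed_eq (by fun_prop) continuous_const)).isCompact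
  have hΓs : ∀ g ∈ Γ, g ∉ WS f ε x := by
    intro g hg hgs
    have := WS_unique h.exp (by linarith [h.εα, h.ε0]) hgs (mem_WS_self f h.ε0.le x) hg.1 (mem_WS_self f.symm h.ε0.le x)
    have h2 := hg.2
    rw [this, dist_self] at h2
    linarith [h.δ0]
  have hβ : ∀ g ∈ Γ, ∃ β : Set M, IsOpen β ∧ IsPreconnected β ∧ g ∈ β ∧ β ⊆ B ∧ ∀ᶠ p in 𝓝 x, ∀ v ∈ β, v ∉ WS f ε p := by
    intro g hg
    exact sep_nbhd f (hΓs g hg) h.Bo (h.N0B x hxN (by rw [mem_closedBall, dist_comm]; exact hg.2.le))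
  choose β hβo hβc hgβ hβB hβe using hβ
  obtain ⟨t, ht⟩ := hΓc.elim_nhds_subcover' β (fun g hg => (hβo g hg).mem_nhds (hgβ g hg))
  have hc : ∀ g : t, ∃ c ∈ 𝒟, c ∈ β g.1 g.1.2 := by
    intro g
    obtain ⟨c, h1, h2⟩ := h𝒟.exists_mem_open (hβo g.1 g.1.2) ⟨_, hgβ g.1 g.1.2⟩
    exact ⟨c, h1, h2⟩
  choose c hc𝒟 hcβ using hc
  let b : t → Set M := fun g => β g.1 g.1.2
  have hE1 : ∀ᶠ p in 𝓝 x, ∀ g : t, ∀ v ∈ b g, v ∉ WS f ε p := eventually_all.2 fun g => hβe g.1 g.1.2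
  have hE2 : ∀ᶠ p in 𝓝 x, ∀ y ∈ WS f.symm ε p, dist p y = δ1 → ∃ g : t, y ∈ b g := by
    have hZ : IsClosed ({z : M × M | z.2 ∈ WS f.symm ε z.1} ∩ ({z : M × M | dist z.1 z.2 = δ1} ∩ Prod.snd ⁻¹' (⋃ g : t, b g)ᶜ)) := 
      (isClosed_WS f.symm ε).inter ((isClosed_eq (by fun_prop) continuous_const).inter 
        ((isOpen_iUnion fun g : t => hβo g.1 g.1.2).isClosed_compl.preimage continuous_snd))
    have := proj_miss hZ (x := x) (by
      rintro y ⟨h1, h2, h3⟩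
      apply h3
      have := ht (show y ∈ Γ from ⟨h1, h2⟩)
      simp only [mem_iUnion] at this ⊢
      obtain ⟨g, hg, hy⟩ := this
      exact ⟨⟨g, hg⟩, hy⟩)
    filter_upwards [this] with p hp y hy hd
    by_contra hcon
    refine hp y ⟨hy, hd, ?_⟩
    simpa using hcon
  have hE := hE1.and hE2
  -- basic facts on good p
  have hbs : ∀ p ∈ P' ∩ N0, (∀ g : t, ∀ v ∈ b g, v ∉ WS f ε p) → ∀ g : t, b g ⊆ B \ Db p := 
    fun p hp h1 g v hv => ⟨hβB g.1 g.1.2 hv, fun hvD => h1 g v hv (h.Dws p (hP' hp.1) hp.2 hvD)⟩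
  have hxD : ∀ p ∈ P' ∩ N0, x ∈ B \ Db p := 
    fun p hp => ⟨h.inB hxN, fun hxD => h.Pstab p (hP' hp.1) x (h.Dws p (hP' hp.1) hp.2 hxD) hxQ⟩
  have hends : ∀ p ∈ P' ∩ N0, (∀ y ∈ WS f.symm ε p, dist p y = δ1 → ∃ g : t, y ∈ b g) → ∃ i j : t, ep p ∈ b i ∧ em p ∈ b j := by
    intro p hp h1
    have hpP := hP' hp.1
    obtain ⟨k1, k2⟩ := h.Kep p (Or.inl hpP) hp.2
    obtain ⟨k3, k4⟩ := h.Kem p hpP hp.2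
    obtain ⟨i, hi⟩ := h1 _ (h.Kws p (Or.inl hpP) hp.2 k1).1 k2
    obtain ⟨j, hj⟩ := h1 _ (h.Kws p (Or.inl hpP) hp.2 k3).1 k4
    exact ⟨i, j, hi, hj⟩
  -- first pigeonhole
  have hpig1 : ∃ᶠ p in F, ∃ ij : t × t, (p ∈ P' ∩ N0 ∧ (∀ g : t, ∀ v ∈ b g, v ∉ WS f ε p)) ∧ ep p ∈ b ij.1 ∧ em p ∈ b ij.2 := by
    apply Eventually.frequently
    filter_upwards [hFm, hFx hE] with p hp hpE
    obtain ⟨i, j, hi, hj⟩ := hends p hp hpE.2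
    exact ⟨(i, j), ⟨hp, hpE.1⟩, hi, hj⟩
  obtain ⟨⟨i, j⟩, hij⟩ := freq_pigeon hpig1
  obtain ⟨p0, ⟨hp0, hp0E⟩, hp0i, hp0j⟩ := hij.exists
  -- second pigeonhole
  have hpig2 : ∃ᶠ p in F, ∃ gI : t × Set t, (p ∈ P' ∩ N0 ∧ (∀ g : t, ∀ v ∈ b g, v ∉ WS f ε p)) ∧ 
      x ∉ connectedComponentIn (B \ Db p) (c gI.1) ∧ gI.2 = {k | c k ∈ connectedComponentIn (B \ Db p) (c gI.1)} := by
    apply Eventually.frequently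
    filter_upwards [hFm, hFx hE] with p hp hpE
    obtain ⟨i, j, hi, hj⟩ := hends p hp hpE.2
    have hsub := hbs p hp hpE.1
    have hex : ∃ g, x ∉ connectedComponentIn (B \ Db p) (c g) := by
      by_contra hcon
      push Not at hcon
      refine h.sep p (hP' hp.1) hp.2 ?_
      have h1 : connectedComponentIn (B \ Db p) (c i) = connectedComponentIn (B \ Db p) (c j) := by
        rw [connectedComponentIn_eq (hcon i), connectedComponentIn_eq (hcon j)]
      have h2 : ep p ∈ connectedComponentIn (B \ Db p) (c i) := conn_join (hβc i.1 i.1.2) (hsub i) (hcβ i) hi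
      have h3 : em p ∈ connectedComponentIn (B \ Db p) (c j) := conn_join (hβc j.1 j.1.2) (hsub j) (hcβ j) hj
      rw [← connectedComponentIn_eq h2, h1]
      exact h3
    obtain ⟨g, hg⟩ := hex
    exact ⟨(g, {k | c k ∈ connectedComponentIn (B \ Db p) (c g)}), ⟨hp, hpE.1⟩, hg, rfl⟩
  obtain ⟨⟨g, I⟩, hgI⟩ := freq_pigeon hpig2
  obtain ⟨k0, ⟨hk0, hk0E⟩, hk0x, hk0I⟩ := hgI.exists
  have hk0D : IsOpen (B \ Db k0) := h.Bo.sdiff (h.Dcpt k0 (hP' hk0.1) hk0.2).isClosed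
  have hnb : ∀ᶠ q in 𝓝 x, q ∈ connectedComponentIn (B \ Db k0) x := 
    hk0D.connectedComponentIn.mem_nhds (mem_connectedComponentIn (hxD k0 hk0))
  obtain ⟨ρ, hρ, hρE⟩ := Metric.eventually_nhds_iff.1 (hnb.and hE2)
  refine ⟨c g, hc𝒟 g, ρ, hρ, p0, hp0.1, hp0.2, ?_, ?_⟩
  · intro η hη
    obtain ⟨p, ⟨⟨hp, hpE⟩, hpx, hpI⟩, hpη⟩ := (hgI.and_eventually (hFx (ball_mem_nhds x hη))).exists
    have hsub := hbs p hp hpE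
    refine ⟨p, hP' hp.1, hp.2, hpη, hsub g (hcβ g), fun q hq hqN hqx hqc => ?_⟩
    obtain ⟨hq1, hq2⟩ := hρE hqx
    have hKB : ∀ p ∈ P' ∩ N0, K q ⊆ B \ Db p := by
      intro p hp z hz
      have hz1 := h.Kws q (Or.inr hq) hqN hz
      refine ⟨h.N0B q hqN hz1.2, fun hzD => ?_⟩
      have h1 := h.Pstab p (hP' hp.1) z (h.Dws p (hP' hp.1) hp.2 hzD)
      have h2 := h.Qunst q hq z hz1.1
      have h3 : z ∈ closure Ps ∪ closure Qs := by rw [h.cov]; trivial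
      exact h3.elim h2 h1
    have hKc := h.Kconn q (Or.inr hq) hqN
    have hKq := h.Kmem q (Or.inr hq) hqN
    obtain ⟨he1, he2⟩ := h.Kep q (Or.inr hq) hqN
    have h1 : ep q ∈ connectedComponentIn (B \ Db p) (c g) := conn_join' hKc (hKB p hp) hKq he1 hqc
    obtain ⟨j, hj⟩ := hq2 _ (h.Kws q (Or.inr hq) hqN he1).1 he2
    have h2 : c j ∈ connectedComponentIn (B \ Db p) (c g) := conn_join' (hβc j.1 j.1.2) (hsub j) hj (hcβ j) h1
    have h3 : j ∈ I := by
      rw [show I = _ from hpI]; exact h2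
    rw [show I = _ from hk0I] at h3
    have hsub0 := hbs k0 hk0 hk0E
    have h4 : ep q ∈ connectedComponentIn (B \ Db k0) (c g) := conn_join' (hβc j.1 j.1.2) (hsub0 j) (hcβ j) hj h3
    have h5 : q ∈ connectedComponentIn (B \ Db k0) (c g) := conn_join' hKc (hKB k0 hk0) he1 hKq h4
    apply hk0x
    have h6 := connectedComponentIn_eq h5
    have h7 := connectedComponentIn_eq hq1
    change x ∈ connectedComponentIn (B \ Db k0) (c g)
    rw [h6, ← h7]
    exact mem_connectedComponentIn (hxD k0 hk0)
  · rw [Metric.mem_closure_iff]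
    intro η hη
    obtain ⟨p, ⟨⟨hp, hpE⟩, hpi, hpj⟩, hpη⟩ := (hij.and_eventually (hFx (ball_mem_nhds x hη))).exists
    refine ⟨p, ⟨⟨hP' hp.1, hp.2⟩, ?_⟩, by rw [dist_comm]; exact hpη⟩
    by_contra hcon
    have hpP := hP' hp.1
    have hKB : K p ⊆ B \ Db p0 := fun z hz => ⟨h.N0B p hp.2 (h.Kws p (Or.inl hpP) hp.2 hz).2, fun hzD => hcon ⟨z, hz, hzD⟩⟩
    have hsub := hbs p0 hp0 hp0E
    refine h.sep p0 (hP' hp0.1) hp0.2 ?_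
    have h1 : ep p ∈ connectedComponentIn (B \ Db p0) (ep p0) := conn_join (hβc i.1 i.1.2) (hsub i) hp0i hpi
    have h2 : em p ∈ connectedComponentIn (B \ Db p0) (ep p0) := 
      conn_join' (h.Kconn p (Or.inl hpP) hp.2) hKB (h.Kep p (Or.inl hpP) hp.2).1 (h.Kem p hpP hp.2).1 h1
    exact conn_join' (hβc j.1 j.1.2) (hsub j) hpj hp0j h2

end ctx
end HypAux

namespace HypAux
open Set Metric Topology Filter

section inj

theorem half_conn {X : Type*} [TopologicalSpace X] [LocallyConnectedSpace X] {B D D' : Set X} (hB : IsOpen B) (hBc : IsPreconnected B)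
    (hD : IsClosed D) (hDc : IsPreconnected (D ∩ B)) (hDc' : IsPreconnected (D' ∩ B)) (hdis : ∀ z ∈ B, z ∈ D → z ∉ D')
    {c p p' : X} (hc : c ∈ B \ D) (hp : p ∈ D ∩ B) (hp' : p' ∈ D' ∩ B) (hpN : p' ∉ connectedComponentIn (B \ D) c) :
    p ∈ connectedComponentIn (B \ D') c := by
  have hBD : IsOpen (B \ D) := hB.sdiff hD
  set N := connectedComponentIn (B \ D) c with hN
  have hNo : IsOpen N := hBD.connectedComponentIn
  have hcN : c ∈ N := mem_connectedComponentIn hc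
  have hNB : N ⊆ B \ D := connectedComponentIn_subset _ _
  have hNc : IsPreconnected N := isPreconnected_connectedComponentIn
  have hd : ∃ d ∈ D ∩ B, d ∈ closure N := by
    by_contra hcon
    push Not at hcon
    have h1 : B ⊆ N ∪ (closure N)ᶜ := by
      intro z hz
      by_cases hzc : z ∈ closure N
      · left
        have hzD : z ∉ D := fun h => hcon z ⟨h, hz⟩ hzc
        have hzo : IsOpen (connectedComponentIn (B \ D) z) := hBD.connectedComponentIn
        obtain ⟨w, hw1, hw2⟩ := mem_closure_iff.1 hzc _ hzo (mem_connectedComponentIn ⟨hz, hzD⟩)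
        have e1 := connectedComponentIn_eq hw1
        have e2 := connectedComponentIn_eq hw2
        rw [hN, e2, ← e1]
        exact mem_connectedComponentIn ⟨hz, hzD⟩
      · exact Or.inr hzc
    obtain ⟨z, hz, hz1, hz2⟩ := hBc N (closure N)ᶜ hNo isClosed_closure.isOpen_compl h1 ⟨c, hc.1, hcN⟩ ⟨p, hp.2, hcon p hp⟩
    exact hz2 (subset_closure hz1)
  obtain ⟨d, hdD, hdN⟩ := hd
  have hT1 : IsPreconnected (insert d N) :=
    hNc.subset_closure (subset_insert _ _) (insert_subset hdN subset_closure)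
  have hT : IsPreconnected (insert d N ∪ (D ∩ B)) := hT1.union d (mem_insert _ _) hdD hDc
  have hTs : insert d N ∪ (D ∩ B) ⊆ B \ D' := by
    have h3 : D ∩ B ⊆ B \ D' := fun z hz => ⟨hz.2, hdis z hz.2 hz.1⟩
    refine union_subset (insert_subset (h3 hdD) ?_) h3
    intro z hz
    refine ⟨(hNB hz).1, fun hzD' => hpN ?_⟩
    exact conn_join' (F := B \ D) hDc' (fun w hw => ⟨hw.2, fun hwD => hdis w hw.2 hwD hw.1⟩) ⟨hzD', (hNB hz).1⟩ hp' hz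
  exact conn_join hT hTs (Or.inl (Or.inr hcN)) (Or.inr hp)

variable {M : Type*} [MetricSpace M] 
variable {f : M ≃ₜ M} {α ε δ1 : ℝ} {Ps Qs B N0 : Set M} {Db K : M → Set M} {ep em : M → M}

theorem Ctx.inj [CompactSpace M] [LocallyConnectedSpace M] (h : Ctx f α ε δ1 Ps Qs B N0 Db K ep em) {c : M} {ρ : ℝ} 
    {x y : M} (hx : x ∈ Xset Ps Qs B N0 Db c ρ) (hy : y ∈ Xset Ps Qs B N0 Db c ρ) (hxN : x ∈ N0) (hyN : y ∈ N0)
    (hxQ : x ∈ closure Qs) (hyQ : y ∈ closure Qs) (hxy : dist x y < ρ) (hw : y ∈ WS f.symm (2 * ε) x) : x = y := by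
  by_contra hne
  have hε := h.ε0
  have hεα := h.εα
  have hρ : 0 < ρ := dist_nonneg.trans_lt hxy
  have h1 : y ∉ WS f (2 * ε) x := fun h1 => hne 
    (WS_unique h.exp (by linarith) (mem_WS_self f (by linarith) x) h1 (mem_WS_self f.symm (by linarith) x) hw)
  have h1' : x ∉ WS f (2 * ε) y := fun h2 => h1 (mem_WS_comm.1 h2)
  obtain ⟨V, hVo, hVc, hyV, hVs, hVe⟩ := sep_nbhd f h1 (h.N0o.inter (isOpen_ball (x := x) (ε := ρ))) ⟨hyN, by rwa [mem_ball, dist_comm]⟩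
  obtain ⟨V', hVo', hVc', hxV, hVs', hVe'⟩ := sep_nbhd f h1' (h.N0o.inter (isOpen_ball (x := y) (ε := ρ))) ⟨hxN, by rwa [mem_ball]⟩
  obtain ⟨η, hη, hη1⟩ := Metric.eventually_nhds_iff.1 (hVe.and (hVo'.eventually_mem hxV))
  obtain ⟨η', hη', hη1'⟩ := Metric.eventually_nhds_iff.1 (hVe'.and (hVo.eventually_mem hyV))
  obtain ⟨p, hp, hpN, hpx, hc, hq⟩ := hx η hη
  obtain ⟨p', hp', hpN', hpx', hc', hq'⟩ := hy η' hη'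
  obtain ⟨hpV, hpV'⟩ := hη1 hpx
  obtain ⟨hpV2, hpV2'⟩ := hη1' hpx'
  have sub1 : ∀ r : M, ∀ z ∈ WS f ε r, z ∈ WS f (2 * ε) r := fun r z hz => WS_mono (by linarith) r hz
  have hNN : N0 ⊆ B := fun z hz => h.inB hz
  have hpn' : p' ∉ connectedComponentIn (B \ Db p) c := by
    intro hcon
    obtain ⟨q, hqV, hqQ⟩ := mem_closure_iff.1 hyQ V hVo hyV
    refine hq q hqQ (hVs hqV).1 (hVs hqV).2 (conn_join' (F := B \ Db p) hVc (fun z hz => ⟨hNN (hVs hz).1, fun hzD => ?_⟩) hpV2' hqV hcon)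
    exact hpV z hz (sub1 _ _ (h.Dws p hp hpN hzD))
  have hpn : p ∉ connectedComponentIn (B \ Db p') c := by
    intro hcon
    obtain ⟨q, hqV, hqQ⟩ := mem_closure_iff.1 hxQ V' hVo' hxV
    refine hq' q hqQ (hVs' hqV).1 (hVs' hqV).2 (conn_join' (F := B \ Db p') hVc' (fun z hz => ⟨hNN (hVs' hz).1, fun hzD => ?_⟩) hpV' hqV hcon)
    exact hpV2 z hz (sub1 _ _ (h.Dws p' hp' hpN' hzD))
  refine hpn (half_conn h.Bo h.Bc (h.Dcpt p hp hpN).isClosed (h.Dconn p hp hpN) (h.Dconn p' hp' hpN') ?_ hc ⟨h.pD p hp hpN, hNN hpN⟩ 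
    ⟨h.pD p' hp' hpN', hNN hpN'⟩ hpn')
  intro z _ hz hz'
  have := WS_trans (h.Dws p hp hpN hz) (mem_WS_comm.1 (h.Dws p' hp' hpN' hz'))
  rw [← two_mul] at this
  exact hpV p' hpV2' this

end inj
end HypAux

namespace HypAux
open Set Metric Topology Filter

section ctxfalse
variable {M : Type*} [MetricSpace M] 
variable {f : M ≃ₜ M} {α ε δ1 : ℝ} {Ps Qs B N0 : Set M} {Db K : M → Set M} {ep em : M → M}

theorem Ctx.baire [CompactSpace M] [LocallyConnectedSpace M] (h : Ctx f α ε δ1 Ps Qs B N0 Db K ep em) {O : Set M} (hO : IsOpen O) 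
    (hON : O ⊆ N0) {x0 : M} (hx0 : x0 ∈ O) (hxP : x0 ∈ closure Ps) (hxQ : x0 ∈ closure Qs) :
    ∃ x1 ∈ closure Ps ∩ closure Qs, ∃ W : Set M, IsOpen W ∧ x1 ∈ W ∧ W ⊆ O ∧ ∃ c : M, ∃ ρ > 0, ∃ p0 ∈ Ps, p0 ∈ N0 ∧ 
      ∀ z ∈ closure Ps ∩ closure Qs, z ∈ W → z ∈ Xset Ps Qs B N0 Db c ρ ∧ 
        z ∈ closure {p ∈ Ps ∩ N0 | (K p ∩ Db p0).Nonempty} := by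
  obtain ⟨P', hP's, hP'c, hP'd⟩ := (TopologicalSpace.IsSeparable.of_separableSpace Ps).exists_countable_dense_subset
  obtain ⟨𝒟, h𝒟c, h𝒟⟩ := TopologicalSpace.exists_countable_dense M
  set Y1 : Set M := (closure Ps ∩ closure Qs) ∩ O with hY1
  have hlc : IsLocallyClosed Y1 := (isClosed_closure.inter isClosed_closure).isLocallyClosed.inter hO.isLocallyClosed
  haveI : LocallyCompactSpace Y1 := hlc.locallyCompactSpace
  haveI : Nonempty Y1 := ⟨⟨x0, ⟨hxP, hxQ⟩, hx0⟩⟩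
  haveI : Countable 𝒟 := h𝒟c.to_subtype
  haveI : Countable (P' ∩ N0 : Set M) := (hP'c.mono inter_subset_left).to_subtype
  let T : 𝒟 × ℕ × (P' ∩ N0 : Set M) → Set Y1 := fun i => Subtype.val ⁻¹' 
    (closure (Xset Ps Qs B N0 Db i.1 (1 / ((i.2.1 : ℝ) + 1))) ∩ closure {p ∈ Ps ∩ N0 | (K p ∩ Db i.2.2).Nonempty})
  have hT : ∀ i, IsClosed (T i) := fun i => (isClosed_closure.inter isClosed_closure).preimage continuous_subtype_val
  have hTu : ⋃ i, T i = univ := by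
    rw [eq_univ_iff_forall]
    rintro ⟨x, ⟨hx1, hx2⟩, hx3⟩
    obtain ⟨c, hc, ρ, hρ, p0, hp0, hp0N, hX, hcl⟩ := h.core hP's hP'd h𝒟 (hON hx3) hx1 hx2
    obtain ⟨m, hm⟩ := exists_nat_one_div_lt hρ
    rw [mem_iUnion]
    refine ⟨(⟨c, hc⟩, m, ⟨p0, hp0, hp0N⟩), subset_closure ?_, hcl⟩
    intro η hη
    obtain ⟨p, a1, a2, a3, a4, a5⟩ := hX η hη
    exact ⟨p, a1, a2, a3, a4, fun q b1 b2 b3 => a5 q b1 b2 (b3.trans hm)⟩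
  obtain ⟨⟨c, m, p0⟩, x1, hx1⟩ := nonempty_interior_of_iUnion_of_closed hT hTu
  obtain ⟨t, ht, hto, hxt⟩ := mem_interior.1 hx1
  obtain ⟨W, hW, rfl⟩ := isOpen_induced_iff.1 hto
  refine ⟨x1, x1.2.1, W ∩ O, hW.inter hO, ⟨hxt, x1.2.2⟩, inter_subset_right, c, 1 / ((m : ℝ) + 1) / 2, by positivity, p0, hP's p0.2.1, p0.2.2, ?_⟩
  intro z hz hzW
  have h1 := ht (show (⟨z, hz, hzW.2⟩ : Y1) ∈ _ from hzW.1)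
  exact ⟨closure_Xset Ps Qs B N0 Db c (by positivity) h1.1, h1.2⟩

theorem Ctx.false [CompactSpace M] [LocallyConnectedSpace M] (h : Ctx f α ε δ1 Ps Qs B N0 Db K ep em) 
    {Y S : Type*} [NormedAddCommGroup Y] [NormedSpace ℝ Y] [FiniteDimensional ℝ Y]
    [NormedAddCommGroup S] [NormedSpace ℝ S] [FiniteDimensional ℝ S] 
    (hdim : Module.finrank ℝ Y = Module.finrank ℝ S + 1) (χ : OpenPartialHomeomorph M Y)
    (hσ : ∀ p ∈ Ps, p ∈ N0 → ∃ σ : M → S, ContinuousOn σ (Db p) ∧ InjOn σ (Db p))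
    {x0 : M} (hxN : x0 ∈ N0) (hxχ : x0 ∈ χ.source) (hxP : x0 ∈ closure Ps) (hxQ : x0 ∈ closure Qs) : False := by
  obtain ⟨x1, hx1, W, hWo, hx1W, hWO, c, ρ, hρ, p0, hp0, hp0N, hW⟩ := 
    h.baire (h.N0o.inter χ.open_source) inter_subset_left ⟨hxN, hxχ⟩ hxP hxQ
  obtain ⟨σ, hσc, hσi⟩ := hσ p0 hp0 hp0N
  have hε := h.ε0
  have hεα := h.εα
  set Δ := closure Ps ∩ closure Qs with hΔ
  have hΔc : IsClosed Δ := isClosed_closure.inter isClosed_closure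
  have hx1s : x1 ∈ χ.source := (hWO hx1W).2
  have hDc := h.Dcpt p0 hp0 hp0N
  have hDws := h.Dws p0 hp0 hp0N
  -- small chart ball
  obtain ⟨r1, hr1, hr⟩ : ∃ r1 > 0, closedBall (χ x1) r1 ⊆ χ.target ∩ χ.symm ⁻¹' (W ∩ ball x1 (ρ/2)) := by
    apply Metric.nhds_basis_closedBall.mem_iff.1
    refine (χ.symm.isOpen_inter_preimage (hWo.inter isOpen_ball)).mem_nhds ?_
    refine ⟨χ.map_source hx1s, ?_⟩
    show χ.symm (χ x1) ∈ W ∩ ball x1 (ρ/2)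
    rw [χ.left_inv hx1s]
    exact ⟨hx1W, mem_ball_self (by positivity)⟩
  set y1 := χ x1 with hy1
  have hcb : ContinuousOn χ.symm (closedBall y1 r1) := χ.continuousOn_symm.mono fun z hz => (hr hz).1
  set X' := closedBall y1 r1 ∩ χ.symm ⁻¹' Δ with hX'
  have hX'c : IsCompact X' := (isCompact_closedBall y1 r1).of_isClosed_subset 
    (hcb.preimage_isClosed_of_isClosed isClosed_closedBall hΔc) inter_subset_left
  -- the section
  have hun : ∀ x u v, u ∈ Db p0 → v ∈ Db p0 → u ∈ WS f.symm ε x → v ∈ WS f.symm ε x → u = v := 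
    fun x u v hu hv hux hvx => WS_unique h.exp (by linarith) (hDws hu) (hDws hv) hux hvx
  have hsec : ∀ x ∈ Δ, x ∈ W → ∃ u ∈ Db p0, u ∈ WS f.symm ε x ∧ ∀ O ∈ 𝓝[Db p0] u, ∃ p ∈ Ps, p ∈ N0 ∧ ∃ v ∈ K p ∩ Db p0, v ∈ O := by
    intro x hx hxW
    obtain ⟨p, hp, hpx⟩ := mem_closure_iff_seq_limit.1 (hW x hx hxW).2
    choose hp1 hp2 using hp
    choose u hu using hp2
    obtain ⟨a, ha, φ, hφ, hlim⟩ := hDc.tendsto_subseq (fun k => (hu k).2)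
    refine ⟨a, ha, WS_lim (hpx.comp hφ.tendsto_atTop) hlim (Eventually.of_forall fun k => ?_), ?_⟩
    · exact (h.Kws _ (Or.inl (hp1 (φ k)).1) (hp1 (φ k)).2 (hu (φ k)).1).1
    · intro O hO
      have h2 : Tendsto (u ∘ φ) atTop (𝓝[Db p0] a) := tendsto_nhdsWithin_iff.2 ⟨hlim, Eventually.of_forall fun k => (hu (φ k)).2⟩
      obtain ⟨k, hk⟩ := (h2.eventually hO).exists
      exact ⟨p (φ k), (hp1 _).1, (hp1 _).2, u (φ k), hu _, hk⟩
  have hsec' : ∀ z : Y, ∃ u : M, z ∈ X' → u ∈ Db p0 ∧ u ∈ WS f.symm ε (χ.symm z) ∧ 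
      ∀ O ∈ 𝓝[Db p0] u, ∃ p ∈ Ps, p ∈ N0 ∧ ∃ v ∈ K p ∩ Db p0, v ∈ O := by
    intro z
    by_cases hz : z ∈ X'
    · obtain ⟨u, h1, h2, h3⟩ := hsec (χ.symm z) hz.2 (hr hz.1).2.1
      exact ⟨u, fun _ => ⟨h1, h2, h3⟩⟩
    · exact ⟨x0, fun h => absurd h hz⟩
  choose w hw using hsec'
  have hwc : ContinuousOn w X' := by
    set Z : Set (Y × M) := (X' ×ˢ Db p0) ∩ (fun z : Y × M => (χ.symm z.1, z.2)) ⁻¹' {z : M × M | z.2 ∈ WS f.symm ε z.1} with hZ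
    have hZc : IsCompact Z := by
      refine (hX'c.prod hDc).of_isClosed_subset ?_ inter_subset_left
      refine ContinuousOn.preimage_isClosed_of_isClosed ?_ (hX'c.prod hDc).isClosed (isClosed_WS f.symm ε)
      refine ContinuousOn.prodMk ?_ continuousOn_snd
      exact (hcb.mono inter_subset_left).comp continuousOn_fst fun z hz => hz.1
    have h1 : ContinuousOn (fun z => (z, w z)) (Prod.fst '' Z) := by
      refine inv_contOn hZc continuousOn_fst ?_
      rintro ⟨z, u⟩ ⟨⟨hz, hu⟩, hu2⟩
      obtain ⟨a1, a2, -⟩ := hw z hz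
      exact Prod.ext rfl (hun _ _ _ a1 hu a2 hu2)
    have h2 : X' ⊆ Prod.fst '' Z := fun z hz => ⟨(z, w z), ⟨⟨hz, (hw z hz).1⟩, (hw z hz).2.1⟩, rfl⟩
    exact (continuous_snd.comp_continuousOn h1).mono h2
  have hπc : ContinuousOn (σ ∘ w) X' := hσc.comp hwc fun z hz => (hw z hz).1
  have hπi : InjOn (σ ∘ w) X' := by
    intro z hz z' hz' he
    obtain ⟨a1, a2, -⟩ := hw z hz
    obtain ⟨b1, b2, -⟩ := hw z' hz'
    have e1 : w z = w z' := hσi a1 b1 he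
    rw [← e1] at b2
    have h3 := WS_trans a2 (mem_WS_comm.1 b2)
    rw [← two_mul] at h3
    obtain ⟨c1, c2, c3⟩ := hr hz.1
    obtain ⟨d1, d2, d3⟩ := hr hz'.1
    have h4 : dist (χ.symm z) (χ.symm z') < ρ := by
      have := dist_triangle_right (χ.symm z) (χ.symm z') x1
      rw [mem_ball] at c3 d3
      linarith
    have h5 := h.inj (hW _ hz.2 c2).1 (hW _ hz'.2 d2).1 (hWO c2).1 (hWO d2).1 hz.2.2 hz'.2.2 h4 h3
    rw [← χ.right_inv c1, ← χ.right_inv d1, h5]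
  have hInterior : interior ((σ ∘ w) '' X') = ∅ := by
    by_contra hne
    obtain ⟨s, hs⟩ := nonempty_iff_ne_empty.2 hne
    obtain ⟨z, hz, rfl⟩ := interior_subset hs
    obtain ⟨a1, a2, a3⟩ := hw z hz
    obtain ⟨p, hp, hpN, v, ⟨hvK, hvD⟩, hv⟩ := a3 _ ((hσc _ a1).preimage_mem_nhdsWithin (isOpen_interior.mem_nhds hs))
    obtain ⟨z', hz', he⟩ := interior_subset hv
    obtain ⟨b1, b2, -⟩ := hw z' hz'
    have e1 : w z' = v := hσi b1 hvD he
    rw [e1] at b2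
    have h3 := WS_trans (h.Kws p (Or.inl hp) hpN hvK).1 (mem_WS_comm.1 b2)
    rw [← two_mul] at h3
    exact h.Punst p hp _ h3 hz'.2.2
  have hconn := non_sep hdim (y0 := y1) (r := r1) hX'c hπc hπi hInterior
  have hbs : ContinuousOn χ.symm (ball y1 r1) := hcb.mono ball_subset_closedBall
  have hu := hbs.isOpen_inter_preimage isOpen_ball (isClosed_closure (s := Qs)).isOpen_compl
  have hv := hbs.isOpen_inter_preimage isOpen_ball (isClosed_closure (s := Ps)).isOpen_compl
  have hsrc : IsOpen (χ.source ∩ χ ⁻¹' ball y1 r1) := χ.isOpen_inter_preimage isOpen_ball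
  have hx1m : x1 ∈ χ.source ∩ χ ⁻¹' ball y1 r1 := ⟨hx1s, mem_ball_self hr1⟩
  obtain ⟨p, hp, hpP⟩ := mem_closure_iff.1 hx1.1 _ hsrc hx1m
  obtain ⟨q, hq, hqQ⟩ := mem_closure_iff.1 hx1.2 _ hsrc hx1m
  have hpQ : p ∉ closure Qs := h.Pstab p hpP p (mem_WS_self f hε.le p)
  have hqP : q ∉ closure Ps := h.Qunst q hqQ q (mem_WS_self f.symm hε.le q)
  obtain ⟨z, hz, hz1, hz2⟩ := hconn _ _ hu hv (by
      intro z hz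
      by_cases hzQ : χ.symm z ∈ closure Qs
      · right
        exact ⟨hz.1, fun hzP => hz.2 ⟨ball_subset_closedBall hz.1, hzP, hzQ⟩⟩
      · left
        exact ⟨hz.1, hzQ⟩)
    ⟨χ p, ⟨hp.2, fun hX => hpQ (by have := hX.2.2; rwa [χ.left_inv hp.1] at this)⟩, hp.2, by
      show χ.symm (χ p) ∉ closure Qs
      rwa [χ.left_inv hp.1]⟩ 
    ⟨χ q, ⟨hq.2, fun hX => hqP (by have := hX.2.1; rwa [χ.left_inv hq.1] at this)⟩, hq.2, by
      show χ.symm (χ q) ∉ closure Ps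
      rwa [χ.left_inv hq.1]⟩
  have := h.cov.symm ▸ mem_univ (χ.symm z)
  exact this.elim hz2.2 hz1.2

end ctxfalse
end HypAux

namespace HypAux
open Set Metric Topology Filter

section cells
variable {M : Type*} [MetricSpace M] [CompactSpace M]
variable {S U Y : Type*} [NormedAddCommGroup S] [NormedSpace ℝ S] [FiniteDimensional ℝ S]
    [NormedAddCommGroup U] [NormedSpace ℝ U] [FiniteDimensional ℝ U]
    [NormedAddCommGroup Y] [NormedSpace ℝ Y]
variable {f : M ≃ₜ M} {α ε δ δ1 : ℝ} 

theorem inv_avoid (hf : Expv f α) (hε : ε ≤ α) {p : M} (hp : Hyp f S U p) {A : Set M} (hA : IsClosed A) (hpA : p ∉ A)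
    (hinv : ∀ x ∈ A, f x ∈ A) : ∀ y ∈ WS f ε p, y ∉ A := by
  obtain ⟨e, l, he⟩ := hp
  obtain ⟨Φ, hΦ⟩ := exists_par he
  obtain ⟨R, hR⟩ := hΦ.bdd α ε hf hε
  intro y hy
  obtain ⟨a, -, rfl⟩ := hR hy
  exact hΦ.inv Aᶜ hA.isOpen_compl hpA (fun x hx hxA => hx (hinv x hxA)) a

theorem cell_Q [Nontrivial U] (hf : Expv f α) (hε0 : 0 < ε) (hε : ε ≤ α) 
    (hδu : ∀ x, ∀ y ∈ WS f.symm ε x, dist x y < δ → y ∈ WS f.symm (ε/2) x) (hδ1 : 0 < δ1) (hδ1' : δ1 ≤ δ)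
    {q : M} (hq : Hyp f S U q) : 
    ∃ (K : Set M) (ep : M), IsPreconnected K ∧ q ∈ K ∧ K ⊆ WS f.symm ε q ∩ closedBall q δ1 ∧ ep ∈ K ∧ dist q ep = δ1 := by
  obtain ⟨e, l, he⟩ := hq.symm
  obtain ⟨Φ, hΦ⟩ := exists_par he
  obtain ⟨v, hv⟩ := exists_ne (0 : U)
  obtain ⟨T, hT, h1, h2, h3⟩ := ray_exit hf.symm hε0 hε hδu hδ1 hδ1' hΦ hv
  refine ⟨(fun t : ℝ => Φ (t • v)) '' Icc 0 T, Φ (T • v), ?_, ?_, ?_, ⟨T, ⟨hT.le, le_rfl⟩, rfl⟩, h3⟩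
  · exact isPreconnected_Icc.image _ (hΦ.cont.comp (by fun_prop)).continuousOn
  · exact ⟨0, ⟨le_rfl, hT.le⟩, by simp [hΦ.zero]⟩
  · rintro _ ⟨t, ht, rfl⟩
    refine ⟨h1 t ht, ?_⟩
    rw [mem_closedBall, dist_comm]
    rcases ht.2.lt_or_eq with h | h
    · exact (h2 t ⟨ht.1, h⟩).le
    · simp only [h]; exact h3.le

theorem cell_P [LocallyPathConnectedSpace M] (hf : Expv f α) (hε0 : 0 < ε) (hε : 4 * ε ≤ α) 
    (hδs : ∀ x, ∀ y ∈ WS f ε x, dist x y < δ → y ∈ WS f (ε/2) x) 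
    (hδu : ∀ x, ∀ y ∈ WS f.symm ε x, dist x y < δ → y ∈ WS f.symm (ε/2) x) (hδ1 : 0 < δ1) (hδ1' : δ1 ≤ δ)
    {p : M} (hp : Hyp f S ℝ p) (χ : OpenPartialHomeomorph M Y) {B : Set M} (hBo : IsOpen B) (hBχ : closure B ⊆ χ.source)
    {y0 : Y} {r : ℝ} (hBb : ∀ z ∈ χ.source, z ∈ B ↔ χ z ∈ ball y0 r) (hBδ : ∀ x ∈ B, ∀ y ∈ B, dist x y < δ) 
    (hpB : closedBall p δ1 ⊆ B) : 
    ∃ (Db K : Set M) (ep em : M), (IsCompact Db ∧ Db ⊆ WS f ε p ∧ p ∈ Db ∧ IsPreconnected (Db ∩ B)) ∧ 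
      (IsPreconnected K ∧ p ∈ K ∧ K ⊆ WS f.symm ε p ∩ closedBall p δ1 ∧ ep ∈ K ∧ dist p ep = δ1) ∧ (em ∈ K ∧ dist p em = δ1) ∧
      em ∉ connectedComponentIn (B \ Db) ep ∧ ∃ σ : M → S, ContinuousOn σ Db ∧ InjOn σ Db := by
  obtain ⟨e, l, he⟩ := hp
  obtain ⟨Φs, hs⟩ := exists_par he
  obtain ⟨Φu, hu⟩ := exists_par he.symm
  have hpB' : p ∈ B := hpB (mem_closedBall_self hδ1.le)
  obtain ⟨C, hCo, hCb, hC0, hCc, hCW, hCB, hCB'⟩ := plaque hf hε0 (by linarith) hδs hs hBo hpB' (hBδ p hpB')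
  obtain ⟨Tp, hTp, p1, p2, p3⟩ := ray_exit hf.symm hε0 (by linarith) hδu hδ1 hδ1' hu (v := (1:ℝ)) one_ne_zero
  obtain ⟨Tm, hTm, m1, m2, m3⟩ := ray_exit hf.symm hε0 (by linarith) hδu hδ1 hδ1' hu (v := (-1:ℝ)) (by norm_num)
  simp only [smul_eq_mul, mul_one] at p1 p2 p3
  simp only [smul_eq_mul, mul_neg, mul_one] at m1 m2 m3
  have hK : ∀ t ∈ Icc (-Tm) Tp, Φu t ∈ WS f.symm ε p ∩ closedBall p δ1 := by
    intro t ht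
    rw [mem_inter_iff, mem_closedBall, dist_comm]
    rcases le_total 0 t with h0 | h0
    · refine ⟨p1 t ⟨h0, ht.2⟩, ?_⟩
      rcases ht.2.lt_or_eq with h | h
      · exact (p2 t ⟨h0, h⟩).le
      · rw [h]; exact p3.le
    · have a1 := m1 (-t) ⟨by linarith, by linarith [ht.1]⟩
      rw [neg_neg] at a1
      refine ⟨a1, ?_⟩
      rcases ht.1.lt_or_eq with h | h
      · have a2 := m2 (-t) ⟨by linarith, by linarith⟩
        rw [neg_neg] at a2
        exact a2.le
      · rw [← h]; exact m3.le
  have hcC : IsCompact (closure C) := hCb.isCompact_closure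
  have hDc : IsCompact (Φs '' closure C) := hcC.image hs.cont
  have hDB : Φs '' closure C ∩ B = Φs '' C := by
    ext z
    constructor
    · rintro ⟨⟨a, ha, rfl⟩, hz⟩
      exact ⟨a, hCB' a ha hz, rfl⟩
    · rintro ⟨a, ha, rfl⟩
      exact ⟨⟨a, subset_closure ha, rfl⟩, hCB a ha⟩
  have hKD : ∀ t ∈ Icc (-Tm) Tp, t ≠ 0 → Φu t ∉ Φs '' closure C := by
    rintro t ht ht0 ⟨a, ha, hat⟩
    have h1 : Φu t ∈ WS f ε p := hat ▸ hCW a ha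
    have := WS_unique hf (by linarith) h1 (mem_WS_self f hε0.le p) (hK t ht).1 (mem_WS_self f.symm hε0.le p)
    exact ht0 (hu.inj (this.trans hu.zero.symm))
  have hKB : ∀ t ∈ Icc (-Tm) Tp, Φu t ∈ B := fun t ht => hpB (hK t ht).2
  have hTpI : Tp ∈ Icc (-Tm) Tp := ⟨by linarith, le_rfl⟩
  have hTmI : -Tm ∈ Icc (-Tm) Tp := ⟨le_rfl, by linarith⟩
  refine ⟨Φs '' closure C, Φu '' Icc (-Tm) Tp, Φu Tp, Φu (-Tm), ⟨hDc, ?_, ?_, ?_⟩, ⟨?_, ?_, ?_, ⟨Tp, hTpI, rfl⟩, p3⟩, 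
    ⟨⟨-Tm, hTmI, rfl⟩, m3⟩, ?_, ?_⟩
  · rintro _ ⟨a, ha, rfl⟩
    exact hCW a ha
  · exact ⟨0, subset_closure hC0, hs.zero⟩
  · rw [hDB]
    exact hCc.image _ hs.cont.continuousOn
  · exact isPreconnected_Icc.image _ hu.cont.continuousOn
  · exact ⟨0, ⟨by linarith, hTp.le⟩, hu.zero⟩
  · rintro _ ⟨t, ht, rfl⟩
    exact hK t ht
  · intro hcon
    have hopen : IsOpen (B \ Φs '' closure C) := hBo.sdiff hDc.isClosed
    set N := connectedComponentIn (B \ Φs '' closure C) (Φu Tp) with hN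
    have hepm : Φu Tp ∈ B \ Φs '' closure C := ⟨hKB _ hTpI, hKD _ hTpI hTp.ne'⟩
    have hepN : Φu Tp ∈ N := mem_connectedComponentIn hepm
    have hNo : IsOpen N := hopen.connectedComponentIn
    have hNc : IsConnected N := ⟨⟨_, hepN⟩, isPreconnected_connectedComponentIn⟩
    have hNp : IsPathConnected N := hNo.isConnected_iff_isPathConnected.1 hNc
    obtain ⟨γ, hγ⟩ := hNp.joinedIn _ hcon _ hepN
    set g : ℝ → M := fun τ => γ.extend ((τ + Tm) / (Tm + Tp)) with hg
    have hgc : Continuous g := γ.continuous_extend.comp (by fun_prop)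
    have hgm : ∀ τ, g τ ∈ B \ Φs '' closure C := by
      intro τ
      have h1 : g τ ∈ range γ.extend := ⟨_, rfl⟩
      rw [Path.extend_range] at h1
      obtain ⟨s, hs⟩ := h1
      rw [← hs]
      exact connectedComponentIn_subset _ _ (hγ s)
    have hg0 : g (-Tm) = Φu (-Tm) := by simp [hg]
    have hg1 : g Tp = Φu Tp := by
      have : (Tp + Tm) / (Tm + Tp) = 1 := by rw [add_comm]; exact div_self (by linarith)
      simp [hg, this]
    have hBs : B ⊆ χ.source := subset_closure.trans hBχ
    have hclD : closure (Ioo (-Tm) Tp) = Icc (-Tm) Tp := closure_Ioo (by linarith)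
    have hCs : ∀ a ∈ closure C, Φs a ∈ χ.source := fun a ha => hBχ (map_mem_closure hs.cont ha hCB)
    refine deg_hyp (by simp) hf hε0 (by linarith) he hs hu χ hCo (isOpen_Ioo (a := -Tm) (b := Tp)) hCb (isBounded_Ioo _ _) hC0 ⟨by linarith, hTp⟩
      hCs ?_ hCW ?_ (fun z => χ (g z.2) - χ (Φs z.1)) ?_ ?_ ?_
    · rw [hclD]; exact fun t ht => hBs (hKB t ht)
    · rw [hclD]; exact fun t ht => (hK t ht).1
    · refine ContinuousOn.sub ?_ ?_
      · exact χ.continuousOn.comp (hgc.comp continuous_snd).continuousOn fun z _ => hBs (hgm _).1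
      · exact χ.continuousOn.comp (hs.cont.comp continuous_fst).continuousOn fun z hz => hCs _ hz.1
    · intro a ha τ _ h0
      have := χ.injOn (hBs (hgm τ).1) (hCs a ha) (sub_eq_zero.1 h0)
      exact (hgm τ).2 ⟨a, ha, this.symm⟩
    · rw [hclD]
      intro a ha τ hτ hor t ht h0
      have h1 : (1 - t) • χ (Φu τ) + t • χ (g τ) = χ (Φs a) := by
        rw [← sub_eq_zero, ← h0]
        simp only [smul_sub, sub_smul, one_smul]
        abel
      by_cases haC : a ∈ C
      · have hτD : τ ∉ Ioo (-Tm) Tp := hor.resolve_left (fun h => h haC)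
        have h2 : g τ = Φu τ ∧ τ ≠ 0 := by
          rcases hτ.1.lt_or_eq with h | h
          · have : τ = Tp := le_antisymm hτ.2 (not_lt.1 fun h' => hτD ⟨h, h'⟩)
            rw [this]; exact ⟨hg1, hTp.ne'⟩
          · rw [← h]; exact ⟨hg0, by linarith⟩
        rw [h2.1, ← add_smul, sub_add_cancel, one_smul] at h1
        have := χ.injOn (hBs (hKB τ hτ)) (hCs a ha) h1
        exact hKD τ hτ h2.2 ⟨a, ha, this.symm⟩
      · have h3 : Φs a ∉ B := fun h => haC (hCB' a ha h)
        rw [hBb _ (hCs a ha), ← h1] at h3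
        refine h3 ((convex_ball y0 r) ?_ ?_ (by linarith [ht.2]) ht.1 (by ring))
        · exact (hBb _ (hBs (hKB τ hτ))).1 (hKB τ hτ)
        · exact (hBb _ (hBs (hgm τ).1)).1 (hgm τ).1
  · have hl : ∀ a, Function.invFun Φs (Φs a) = a := Function.leftInverse_invFun hs.inj
    refine ⟨Function.invFun Φs, inv_contOn hcC hs.cont.continuousOn (fun a _ => hl a), ?_⟩
    rintro _ ⟨a, ha, rfl⟩ _ ⟨b, hb, rfl⟩ hab
    rw [hl, hl] at hab
    rw [hab]

end cells
end HypAux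

namespace HypAux
open Set Metric Topology Filter

section mainthm
variable {M : Type*} [MetricSpace M] [CompactSpace M] 

theorem main_thm [ConnectedSpace M] {n : ℕ} (hn : 2 ≤ n) [ChartedSpace (EuclideanSpace ℝ (Fin n)) M] {f : M ≃ₜ M} {α : ℝ} (hf : Expv f α)
    (hα : 0 < α) (hdense : ∀ x, x ∈ closure ({p : M | Hyp f (Fin (n-1) → ℝ) ℝ p} ∪ 
      {q | ∃ r < n - 1, Hyp f (Fin r → ℝ) (Fin (n - r) → ℝ) q})) :
    {p : M | Hyp f (Fin (n-1) → ℝ) ℝ p} = ∅ ∨ {q | ∃ r < n - 1, Hyp f (Fin r → ℝ) (Fin (n - r) → ℝ) q} = ∅ := by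
  haveI : LocallyConnectedSpace M := ChartedSpace.locallyConnectedSpace (EuclideanSpace ℝ (Fin n)) M
  haveI : LocallyPathConnectedSpace M := ChartedSpace.locallyPathConnectedSpace (EuclideanSpace ℝ (Fin n)) M
  set Ps := {p : M | Hyp f (Fin (n-1) → ℝ) ℝ p} with hPs
  set Qs := {q | ∃ r < n - 1, Hyp f (Fin r → ℝ) (Fin (n - r) → ℝ) q} with hQs
  by_contra hcon
  push Not at hcon
  obtain ⟨hPne, hQne⟩ := hcon
  have hcov : closure Ps ∪ closure Qs = univ := by
    rw [← closure_union]; exact eq_univ_of_forall hdense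
  -- disjointness
  have hPQ : ∀ p ∈ Ps, p ∉ closure Qs := by
    intro p hp hpQ
    have h1 : ∀ r ∈ Finset.range (n - 1), ∀ᶠ q in 𝓝 p, ¬ Hyp f (Fin r → ℝ) (Fin (n - r) → ℝ) q := by
      intro r hr
      rw [Finset.mem_range] at hr
      refine index_semi ?_ ?_ hf hα hp
      · simp; omega
      · simpa using hr
    rw [mem_closure_iff_frequently] at hpQ
    refine hpQ ?_
    filter_upwards [(Finset.eventually_all _).2 h1] with q hq hqQ
    obtain ⟨r, hr, h⟩ := hqQ
    exact hq r (Finset.mem_range.2 hr) h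
  have hQP : ∀ q ∈ Qs, q ∉ closure Ps := by
    rintro q ⟨r, hr, hq⟩ hqP
    have h1 : ∀ᶠ p in 𝓝 q, ¬ Hyp f.symm ℝ (Fin (n-1) → ℝ) p := by
      refine index_semi ?_ ?_ hf.symm hα hq.symm
      · simp
      · simp; omega
    rw [mem_closure_iff_frequently] at hqP
    refine hqP ?_
    filter_upwards [h1] with p hp hpP
    exact hp (Hyp.symm hpP)
  -- invariance
  have invP : ∀ x ∈ closure Ps, f x ∈ closure Ps := fun x hx => map_mem_closure f.continuous hx fun p hp => Hyp.map hp
  have invP' : ∀ x ∈ closure Ps, f.symm x ∈ closure Ps := fun x hx => map_mem_closure f.symm.continuous hx fun p hp => Hyp.map_symm hp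
  have invQ : ∀ x ∈ closure Qs, f x ∈ closure Qs := fun x hx => map_mem_closure f.continuous hx fun p hp => by
    obtain ⟨r, hr, hp⟩ := hp
    exact ⟨r, hr, hp.map⟩
  have invQ' : ∀ x ∈ closure Qs, f.symm x ∈ closure Qs := fun x hx => map_mem_closure f.symm.continuous hx fun p hp => by
    obtain ⟨r, hr, hp⟩ := hp
    exact ⟨r, hr, hp.map_symm⟩
  -- a common boundary point
  obtain ⟨x0, -, hxP, hxQ⟩ : (univ ∩ (closure Ps ∩ closure Qs)).Nonempty := 
    isPreconnected_closed_iff.1 isPreconnected_univ _ _ isClosed_closure isClosed_closure hcov.ge (by simpa using hPne) (by simpa using hQne)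
  obtain ⟨ε, hε⟩ : ∃ ε, ε = α / 4 := ⟨_, rfl⟩
  have hε0 : 0 < ε := by rw [hε]; positivity
  obtain ⟨δs, hδs0, hδs⟩ := WS_shrink hf (show ε ≤ α by linarith) (half_pos hε0)
  obtain ⟨δu, hδu0, hδu⟩ := WS_shrink hf.symm (show ε ≤ α by linarith) (half_pos hε0)
  obtain ⟨δ, hδ⟩ : ∃ δ, δ = min δs δu := ⟨_, rfl⟩
  have hδ0 : 0 < δ := by rw [hδ]; exact lt_min hδs0 hδu0
  have hδs' : ∀ x, ∀ y ∈ WS f ε x, dist x y < δ → y ∈ WS f (ε/2) x := fun x y hy hd => hδs x y hy (hd.trans_le (hδ ▸ min_le_left _ _))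
  have hδu' : ∀ x, ∀ y ∈ WS f.symm ε x, dist x y < δ → y ∈ WS f.symm (ε/2) x := 
    fun x y hy hd => hδu x y hy (hd.trans_le (hδ ▸ min_le_right _ _))
  -- the chart
  obtain ⟨χ, hχ⟩ : ∃ χ : OpenPartialHomeomorph M (EuclideanSpace ℝ (Fin n)), x0 ∈ χ.source := ⟨chartAt _ x0, mem_chart_source _ x0⟩
  obtain ⟨ρ, hρ, hr⟩ : ∃ ρ > 0, closedBall (χ x0) ρ ⊆ χ.target ∩ χ.symm ⁻¹' (ball x0 (δ/2)) := by
    apply Metric.nhds_basis_closedBall.mem_iff.1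
    refine (χ.symm.isOpen_inter_preimage isOpen_ball).mem_nhds ?_
    refine ⟨χ.map_source hχ, ?_⟩
    show χ.symm (χ x0) ∈ ball x0 (δ/2)
    rw [χ.left_inv hχ]
    exact mem_ball_self (by positivity)
  set y0 := χ x0 with hy0
  set B := χ.source ∩ χ ⁻¹' ball y0 ρ with hB
  have hBo : IsOpen B := χ.isOpen_inter_preimage isOpen_ball
  have hcs : ContinuousOn χ.symm (closedBall y0 ρ) := χ.continuousOn_symm.mono fun z hz => (hr hz).1
  have hBim : B ⊆ χ.symm '' ball y0 ρ := fun z hz => ⟨χ z, hz.2, χ.left_inv hz.1⟩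
  have hBim' : χ.symm '' ball y0 ρ ⊆ B := by
    rintro _ ⟨y, hy, rfl⟩
    have hyt := (hr (ball_subset_closedBall hy)).1
    refine ⟨χ.map_target hyt, ?_⟩
    show χ (χ.symm y) ∈ ball y0 ρ
    rwa [χ.right_inv hyt]
  have hBc : IsPreconnected B := by
    rw [subset_antisymm hBim hBim']
    exact (convex_ball y0 ρ).isPreconnected.image _ (hcs.mono ball_subset_closedBall)
  have hBχ : closure B ⊆ χ.source := by
    have h1 : IsClosed (χ.symm '' closedBall y0 ρ) := ((isCompact_closedBall y0 ρ).image_of_continuousOn hcs).isClosed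
    refine (closure_minimal (hBim.trans (image_mono ball_subset_closedBall)) h1).trans ?_
    rintro _ ⟨y, hy, rfl⟩
    exact χ.map_target (hr hy).1
  have hBb : ∀ z ∈ χ.source, z ∈ B ↔ χ z ∈ ball y0 ρ := fun z hz => ⟨fun h => h.2, fun h => ⟨hz, h⟩⟩
  have hBδ : ∀ x ∈ B, ∀ y ∈ B, dist x y < δ := by
    have h1 : ∀ x ∈ B, dist x x0 < δ / 2 := by
      intro x hx
      have := (hr (ball_subset_closedBall hx.2)).2
      rwa [mem_preimage, χ.left_inv hx.1] at this
    intro x hx y hy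
    have := dist_triangle_right x y x0
    linarith [h1 x hx, h1 y hy]
  have hx0B : x0 ∈ B := ⟨hχ, mem_ball_self hρ⟩
  obtain ⟨r0, hr0, hr0B⟩ := Metric.isOpen_iff.1 hBo x0 hx0B
  obtain ⟨δ1, hδ1⟩ : ∃ δ1, δ1 = min (r0/2) δ := ⟨_, rfl⟩
  have hδ10 : 0 < δ1 := by rw [hδ1]; exact lt_min (half_pos hr0) hδ0
  have hδ1δ : δ1 ≤ δ := hδ1 ▸ min_le_right _ _
  have hδ1r : δ1 ≤ r0/2 := hδ1 ▸ min_le_left _ _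
  set N0 := ball x0 (r0/4) with hN0
  have hN0B : ∀ x ∈ N0, closedBall x δ1 ⊆ B := by
    intro x hx y hy
    apply hr0B
    rw [mem_ball] at hx ⊢
    rw [mem_closedBall] at hy
    have := dist_triangle y x x0
    linarith
  have hcell : ∀ p : M, ∃ (Db K : Set M) (ep em : M), (p ∈ Ps → p ∈ N0 → (IsCompact Db ∧ Db ⊆ WS f ε p ∧ p ∈ Db ∧ IsPreconnected (Db ∩ B)) ∧ 
      (em ∈ K ∧ dist p em = δ1) ∧ em ∉ connectedComponentIn (B \ Db) ep ∧ ∃ σ : M → (Fin (n-1) → ℝ), ContinuousOn σ Db ∧ InjOn σ Db) ∧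
      (p ∈ Ps ∪ Qs → p ∈ N0 → IsPreconnected K ∧ p ∈ K ∧ K ⊆ WS f.symm ε p ∩ closedBall p δ1 ∧ ep ∈ K ∧ dist p ep = δ1) := by
    intro p
    by_cases hpN : p ∈ N0
    · by_cases hp : p ∈ Ps
      · obtain ⟨Db, K, ep, em, h1, h2, h3, h4, h5⟩ := cell_P hf hε0 (by linarith) hδs' hδu' hδ10 hδ1δ hp χ hBo hBχ hBb hBδ (hN0B p hpN)
        exact ⟨Db, K, ep, em, fun _ _ => ⟨h1, h3, h4, h5⟩, fun _ _ => h2⟩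
      · by_cases hq : p ∈ Qs
        · obtain ⟨r, hr, hq⟩ := hq
          haveI : Nonempty (Fin (n - r)) := ⟨⟨0, by omega⟩⟩
          obtain ⟨K, ep, h⟩ := cell_Q hf hε0 (by linarith) hδu' hδ10 hδ1δ hq
          exact ⟨∅, K, ep, p, fun h => absurd h hp, fun _ _ => h⟩
        · exact ⟨∅, ∅, p, p, fun h => absurd h hp, fun h => (h.elim hp hq).elim⟩
    · exact ⟨∅, ∅, p, p, fun _ h => absurd h hpN, fun _ h => absurd h hpN⟩
  choose Db K ep em hP hPQK using hcell
  have hctx : Ctx f α ε δ1 Ps Qs B N0 Db K ep em := 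
    { exp := hf
      ε0 := hε0
      εα := by linarith
      δ0 := hδ10
      cov := hcov
      Pstab := fun p hp => inv_avoid hf (by linarith) hp isClosed_closure (hPQ p hp) invQ
      Punst := fun p hp => inv_avoid hf.symm (by linarith) (Hyp.symm hp) isClosed_closure (hPQ p hp) invQ'
      Qunst := by
        intro q hq
        obtain ⟨r, hr, hq'⟩ := id hq
        exact inv_avoid hf.symm (by linarith) (Hyp.symm hq') isClosed_closure (hQP q hq) invP'
      Bo := hBo
      Bc := hBc
      N0o := isOpen_ball
      N0B := hN0B
      Dcpt := fun p hp hN => (hP p hp hN).1.1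
      Dws := fun p hp hN => (hP p hp hN).1.2.1
      pD := fun p hp hN => (hP p hp hN).1.2.2.1
      Dconn := fun p hp hN => (hP p hp hN).1.2.2.2
      Kconn := fun p hp hN => (hPQK p hp hN).1
      Kmem := fun p hp hN => (hPQK p hp hN).2.1
      Kws := fun p hp hN => (hPQK p hp hN).2.2.1
      Kep := fun p hp hN => (hPQK p hp hN).2.2.2
      Kem := fun p hp hN => (hP p hp hN).2.1
      sep := fun p hp hN => (hP p hp hN).2.2.1 }
  refine hctx.false (S := Fin (n-1) → ℝ) ?_ χ (fun p hp hN => (hP p hp hN).2.2.2) (mem_ball_self (by positivity)) hχ hxP hxQ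
  simp; omega

end mainthm
end HypAux

namespace HypAux
open Set Metric Topology Filter

section bridge
variable {M : Type*} [MetricSpace M]

theorem pow_apply (f : M ≃ₜ M) (l : ℕ) (x : M) : (f.toEquiv ^ l) x = f^[l] x := by
  have h : (⇑f.toEquiv)^[l] = ⇑(f.toEquiv ^ l) := Equiv.Perm.iterate_eq_pow f.toEquiv l
  exact (congrFun h x).symm

theorem expv_of (f : M ≃ₜ M) {α : ℝ} (h : IsExpansive f α) : Expv f α := by
  intro x y h1 h2
  by_contra hne
  obtain ⟨k, hk⟩ := h x y hne
  obtain ⟨m, rfl | rfl⟩ := k.eq_nat_or_neg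
  · have e : ∀ z, iterZ f (m : ℤ) z = f^[m] z := fun z => by
      rw [iterZ, zpow_natCast, pow_apply]
    rw [e, e] at hk
    exact absurd (h1 m) (not_le.2 hk)
  · have e : ∀ z, iterZ f (-(m : ℤ)) z = f.symm^[m] z := fun z => by
      rw [iterZ, zpow_neg, zpow_natCast, ← inv_pow]
      exact pow_apply f.symm m z
    rw [e, e] at hk
    exact absurd (h2 m) (not_le.2 hk)

theorem hyp_of {f : M ≃ₜ M} {n r : ℕ} {p : M} (h : p ∈ PerHr f n r) : Hyp f (Fin r → ℝ) (Fin (n - r) → ℝ) p := by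
  obtain ⟨l, hl, hfix, U, V, h, hU, hV, h0, hp, hp0, hconj⟩ := h
  haveI : Nonempty (⟨U, hU⟩ : TopologicalSpace.Opens M) := ⟨⟨p, hp⟩⟩
  haveI : Nonempty (⟨V, hV⟩ : TopologicalSpace.Opens (ModelSp n r)) := ⟨⟨0, h0⟩⟩
  let cU := (⟨U, hU⟩ : TopologicalSpace.Opens M).openPartialHomeomorphSubtypeCoe ‹_›
  let cV := (⟨V, hV⟩ : TopologicalSpace.Opens (ModelSp n r)).openPartialHomeomorphSubtypeCoe ‹_›
  let e : OpenPartialHomeomorph M (ModelSp n r) := (cU.symm.trans h.toOpenPartialHomeomorph).trans cV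
  have hcU : ∀ z (hz : z ∈ U), cU.symm z = ⟨z, hz⟩ := fun z hz => cU.left_inv (x := ⟨z, hz⟩) (by simp [cU])
  have hcV : ∀ z (hz : z ∈ V), cV.symm z = ⟨z, hz⟩ := fun z hz => cV.left_inv (x := ⟨z, hz⟩) (by simp [cV])
  have hes : e.source = U := by simp [e, cU, cV]
  have het : e.target = V := by simp [e, cU, cV]
  have he : ∀ z (hz : z ∈ U), e z = h ⟨z, hz⟩ := by
    intro z hz
    show cV (h (cU.symm z)) = _
    rw [hcU z hz]
    rfl
  have hep : e p = 0 := by rw [he p hp, hp0]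
  refine ⟨e, l, hl, by rw [hes]; exact hp, hep, ?_⟩
  have h0t : (0 : ModelSp n r) ∈ e.target := by rw [het]; exact h0
  have hs0 : e.symm 0 = p := by rw [← hep]; exact e.left_inv (by rw [hes]; exact hp)
  have hct : Tendsto (fun z => f^[l] (e.symm z)) (𝓝 0) (𝓝 p) := by
    have h1 : Tendsto e.symm (𝓝 0) (𝓝 p) := by
      have := e.continuousAt_symm h0t
      rwa [ContinuousAt, hs0] at this
    have h2 := (f.continuous.iterate l).tendsto p
    rw [← pow_apply, hfix] at h2
    exact h2.comp h1
  filter_upwards [hct.eventually (hU.mem_nhds hp), e.open_target.mem_nhds h0t] with z hz hzt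
  have hzU : e.symm z ∈ U := by rw [← hes]; exact e.map_target hzt
  have hz' : (f.toEquiv ^ l) (e.symm z) ∈ U := by rw [pow_apply]; exact hz
  have h3 := hconj (e.symm z) hzU hz'
  rw [← he, ← he, e.right_inv hzt, pow_apply] at h3
  have h4 : modelL n r z = LL z := by
    refine Prod.ext ?_ ?_
    · funext i
      simp [modelL, LL]
      ring
    · funext i
      simp [modelL, LL]
  rw [h4] at h3
  rw [← h3]
  exact (e.left_inv (by rw [hes]; exact hz)).symm

end bridge
end HypAux

/-- **Theorem 2.** If `f` is an expansive homeomorphism of a compact connected boundaryless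
`n`-manifold with dense topologically hyperbolic periodic points, then `Per_H^{n-1} = Per_H`
or `Per_H^{n-1} = ∅`, and analogously for `Per_H^1`. -/
theorem stmt1 {M : Type*} [MetricSpace M] [CompactSpace M] [ConnectedSpace M]
    (n : ℕ) [ChartedSpace (EuclideanSpace ℝ (Fin n)) M]
    (f : M ≃ₜ M) (α : ℝ) (hα : 0 < α) (hexp : IsExpansive f α)
    (hdense : closure (PerH f n) = Set.univ) :
    (PerHr f n (n - 1) = PerH f n ∨ PerHr f n (n - 1) = ∅) ∧
      (PerHr f n 1 = PerH f n ∨ PerHr f n 1 = ∅) := by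
  haveI : LocallyConnectedSpace M := ChartedSpace.locallyConnectedSpace (EuclideanSpace ℝ (Fin n)) M
  have hf : HypAux.Expv f α := HypAux.expv_of f hexp
  have hsub : ∀ r ∈ Finset.range (n + 1), PerHr f n r ⊆ PerH f n := fun r hr p hp => Set.mem_iUnion₂.2 ⟨r, hr, hp⟩
  have hmem : ∀ p ∈ PerH f n, ∃ r, r ≤ n ∧ p ∈ PerHr f n r := by
    intro p hp
    obtain ⟨r, hr, hp⟩ := Set.mem_iUnion₂.1 hp
    exact ⟨r, by rw [Finset.mem_range] at hr; omega, hp⟩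
  have hsink : ∀ r, 1 ≤ r → n ≤ r → PerHr f n r = ∅ := by
    intro r hr hnr
    rw [Set.eq_empty_iff_forall_notMem]
    intro p hp
    haveI : Nonempty (Fin r) := ⟨⟨0, by omega⟩⟩
    haveI : IsEmpty (Fin (n - r)) := by
      have : n - r = 0 := by omega
      rw [this]; infer_instance
    exact HypAux.no_sink hf hα (HypAux.hyp_of hp)
  have hsource : 1 ≤ n → PerHr f n 0 = ∅ := by
    intro hn
    rw [Set.eq_empty_iff_forall_notMem]
    intro p hp
    haveI : Nonempty (Fin (n - 0)) := ⟨⟨0, by omega⟩⟩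
    exact HypAux.no_sink hf.symm hα (HypAux.hyp_of hp).symm
  rcases Nat.lt_or_ge n 2 with hn | hn
  · refine ⟨?_, Or.inr (hsink 1 le_rfl (by omega))⟩
    left
    have hn0 : n - 1 = 0 := by omega
    rw [hn0]
    refine Set.Subset.antisymm (hsub 0 (by simp)) ?_
    intro p hp
    obtain ⟨r, hr, hp⟩ := hmem p hp
    rcases Nat.eq_zero_or_pos r with h0 | h0
    · rwa [h0] at hp
    · rw [hsink r h0 (by omega)] at hp
      exact absurd hp (Set.notMem_empty p)
  constructor
  · have hcl : ∀ p ∈ PerH f n, p ∉ PerHr f n (n-1) → ∃ r < n - 1, HypAux.Hyp f (Fin r → ℝ) (Fin (n - r) → ℝ) p := by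
      intro p hp hp1
      obtain ⟨r, hr, hp⟩ := hmem p hp
      have h1 : r ≠ n := by
        rintro rfl
        rw [hsink r (by omega) le_rfl] at hp
        exact hp
      have h2 : r ≠ n - 1 := by
        rintro rfl
        exact hp1 hp
      exact ⟨r, by omega, HypAux.hyp_of hp⟩
    have hP : ∀ p ∈ PerHr f n (n-1), HypAux.Hyp f (Fin (n-1) → ℝ) ℝ p := fun p hp =>
      (HypAux.hyp_of hp).transport (ContinuousLinearEquiv.refl ℝ _) (ContinuousLinearEquiv.ofFinrankEq (by simp; omega))
    have hmain := HypAux.main_thm hn hf hα (fun x => by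
      have hx : x ∈ closure (PerH f n) := by rw [hdense]; trivial
      refine closure_mono ?_ hx
      intro p hp
      by_cases hp1 : p ∈ PerHr f n (n-1)
      · exact Or.inl (hP p hp1)
      · exact Or.inr (hcl p hp hp1))
    rcases hmain with h | h
    · right
      rw [Set.eq_empty_iff_forall_notMem] at h ⊢
      exact fun p hp => h p (hP p hp)
    · left
      rw [Set.eq_empty_iff_forall_notMem] at h
      refine Set.Subset.antisymm (hsub _ (Finset.mem_range.2 (by omega))) fun p hp => ?_
      by_contra hp1
      exact h p (hcl p hp hp1)
  · have hcl : ∀ p ∈ PerH f n, p ∉ PerHr f n 1 → ∃ r < n - 1, HypAux.Hyp f.symm (Fin r → ℝ) (Fin (n - r) → ℝ) p := by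
      intro p hp hp1
      obtain ⟨r, hr, hp⟩ := hmem p hp
      have h1 : r ≠ 0 := by
        rintro rfl
        rw [hsource (by omega)] at hp
        exact hp
      have h2 : r ≠ 1 := by
        rintro rfl
        exact hp1 hp
      exact ⟨n - r, by omega, (HypAux.hyp_of hp).symm.transport (ContinuousLinearEquiv.refl ℝ _) 
        (ContinuousLinearEquiv.ofFinrankEq (by simp; omega))⟩
    have hP : ∀ p ∈ PerHr f n 1, HypAux.Hyp f.symm (Fin (n-1) → ℝ) ℝ p := fun p hp =>
      (HypAux.hyp_of hp).symm.transport (ContinuousLinearEquiv.refl ℝ _) (ContinuousLinearEquiv.ofFinrankEq (by simp))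
    have hmain := HypAux.main_thm hn hf.symm hα (fun x => by
      have hx : x ∈ closure (PerH f n) := by rw [hdense]; trivial
      refine closure_mono ?_ hx
      intro p hp
      by_cases hp1 : p ∈ PerHr f n 1
      · exact Or.inl (hP p hp1)
      · exact Or.inr (hcl p hp hp1))
    rcases hmain with h | h
    · right
      rw [Set.eq_empty_iff_forall_notMem] at h ⊢
      exact fun p hp => h p (hP p hp)
    · left
      rw [Set.eq_empty_iff_forall_notMem] at h
      refine Set.Subset.antisymm (hsub _ (Finset.mem_range.2 (by omega))) fun p hp => ?_
      by_contra hp1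
      exact h p (hcl p hp hp1)
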